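/- arXiv:1804.02227 — 3 statements merged into one kernel-verified Lean document; each statement's English description precedes it below -/
import Mathlib

section
/- Let p > 1 and p−2 < α ≤ p−1, and let μ be a finite positive Borel measure on [0,1). Then the following are equivalent: (a) μ is a Carleson measure; (b) there exists a constant C > 0 such that for every f in the Dirichlet-type space 𝒟^p_α, the integral I_μ f(z) = ∫_{[0,1)} f(t)/(1 − t z) dμ(t) converges absolutely for every z in the unit disc 𝔻, the resulting function I_μ f is analytic in 𝔻, belongs to 𝒟^p_α, and ‖I_μ f‖_{𝒟^p_α} ≤ C ‖f‖_{𝒟^p_α}. -/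
open MeasureTheory Set Metric Filter Asymptotics
open scoped ENNReal

/-- Normalized area measure on `ℂ`: Lebesgue area divided by `π`,
so that the unit disc has total mass `1`. -/
noncomputable def dA : Measure ℂ := (ENNReal.ofReal Real.pi)⁻¹ • volume

/-- The (weighted) Bergman norm `‖f‖_{A^p_α} = ((α+1) ∫_𝔻 (1-|z|²)^α |f(z)|^p dA)^{1/p}`,
as an extended real number. -/
noncomputable def bergmanNorm (p α : ℝ) (f : ℂ → ℂ) : ℝ≥0∞ :=
  (ENNReal.ofReal (α + 1) *
    ∫⁻ z in ball (0 : ℂ) 1, ENNReal.ofReal ((1 - ‖z‖ ^ 2) ^ α * ‖f z‖ ^ p) ∂dA) ^ (1 / p)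

/-- The Dirichlet-type norm `‖f‖_{𝒟^p_α} = |f(0)| + ‖f′‖_{A^p_α}`. -/
noncomputable def dirichletNorm (p α : ℝ) (f : ℂ → ℂ) : ℝ≥0∞ :=
  ENNReal.ofReal ‖f 0‖ + bergmanNorm p α (deriv f)

/-- The Hardy `H^1` norm `sup_{0 ≤ r < 1} (2π)⁻¹ ∫_0^{2π} |f(re^{iθ})| dθ`. -/
noncomputable def hardyNorm (f : ℂ → ℂ) : ℝ≥0∞ :=
  ⨆ r ∈ Ico (0 : ℝ) 1,
    (ENNReal.ofReal (2 * Real.pi))⁻¹ *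
      ∫⁻ θ in Ioc (0 : ℝ) (2 * Real.pi),
        ENNReal.ofReal ‖f ((r : ℂ) * Complex.exp ((θ : ℂ) * Complex.I))‖

/-- The operator `I_μ f(z) = ∫_{[0,1)} f(t)/(1-tz) dμ(t)`. -/
noncomputable def Imu (μ : Measure ℝ) (f : ℂ → ℂ) (z : ℂ) : ℂ :=
  ∫ t : ℝ, f (t : ℂ) / (1 - (t : ℂ) * z) ∂μ

/-- The moment of order `n` of `μ`. -/
noncomputable def moment (μ : Measure ℝ) (n : ℕ) : ℝ := ∫ t : ℝ, t ^ n ∂μ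

/-- `M_∞(r, f) = sup_{|z| = r} |f(z)|`. -/
noncomputable def Minf (f : ℂ → ℂ) (r : ℝ) : ℝ := ⨆ z ∈ sphere (0 : ℂ) r, ‖f z‖


lemma aux_vol_layer (c : ℝ≥0∞) : (∫⁻ s in Ioi (0:ℝ), ({s : ℝ | ENNReal.ofReal s < c}.indicator 1 s)) = c := by
  have hm : MeasurableSet {s : ℝ | ENNReal.ofReal s < c} :=
    measurableSet_lt ENNReal.measurable_ofReal measurable_const
  rw [lintegral_indicator_one hm, Measure.restrict_apply hm]
  rcases eq_or_ne c ⊤ with rfl | hc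
  · have : {s : ℝ | ENNReal.ofReal s < ⊤} ∩ Ioi 0 = Ioi 0 := by
      ext s; simp
    rw [this]; simp
  · have : {s : ℝ | ENNReal.ofReal s < c} ∩ Ioi 0 = Ioo 0 c.toReal := by
      ext s
      simp only [mem_inter_iff, mem_ofPred_eq, mem_Ioi, mem_Ioo]
      constructor
      · rintro ⟨h1, h2⟩
        exact ⟨h2, (ENNReal.ofReal_lt_iff_lt_toReal h2.le hc).1 h1⟩
      · rintro ⟨h1, h2⟩
        exact ⟨(ENNReal.ofReal_lt_iff_lt_toReal h1.le hc).2 h2, h1⟩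
    rw [this]; simp [hc]

lemma aux_layer {X : Type*} [MeasurableSpace X] (m : Measure X) [SFinite m] (f : X → ℝ≥0∞)
    (hf : Measurable f) :
    ∫⁻ x, f x ∂m = ∫⁻ s in Ioi (0:ℝ), m {x | ENNReal.ofReal s < f x} := by
  have hm : MeasurableSet {q : X × ℝ | ENNReal.ofReal q.2 < f q.1} :=
    measurableSet_lt (by fun_prop) (by fun_prop)
  calc ∫⁻ x, f x ∂m = ∫⁻ x, (∫⁻ s in Ioi (0:ℝ), ({q : X × ℝ | ENNReal.ofReal q.2 < f q.1}.indicator 1 (x, s))) ∂m := by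
        congr with x
        rw [← aux_vol_layer (f x)]
        rfl
    _ = ∫⁻ s in Ioi (0:ℝ), (∫⁻ x, ({q : X × ℝ | ENNReal.ofReal q.2 < f q.1}.indicator 1 (x, s)) ∂m) := by
        apply lintegral_lintegral_swap
        exact (measurable_one.indicator hm).aemeasurable
    _ = _ := by
        congr with s
        rw [← lintegral_indicator_one (measurableSet_lt measurable_const hf)]
        rfl

/-- comparison of integrals of decreasing functions of a distance. -/
lemma aux_compare {X : Type*} [MeasurableSpace X] (m : Measure X) [SFinite m] (ρ : Measure ℝ)
    [SFinite ρ] (d : X → ℝ) (hd : Measurable d) (hd0 : ∀ᵐ x ∂m, 0 < d x) (hd2 : ∀ᵐ x ∂m, d x ≤ 2)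
    (hmρ : ∀ b, 0 < b → b ≤ 2 → m {x | d x ≤ b} ≤ ρ (Ioo 0 b)) (ψ : ℝ → ℝ≥0∞) (hψm : Measurable ψ)
    (hψ : AntitoneOn ψ (Ioi 0)) :
    ∫⁻ x, ψ (d x) ∂m ≤ ∫⁻ a in Ioi (0:ℝ), ψ a ∂ρ := by
  rw [aux_layer m (fun x => ψ (d x)) (hψm.comp hd), aux_layer (ρ.restrict (Ioi 0)) ψ hψm]
  apply lintegral_mono
  intro s
  simp only
  rw [Measure.restrict_apply (measurableSet_lt measurable_const hψm)]
  set S : Set ℝ := {a | a ∈ Ioc (0:ℝ) 2 ∧ ENNReal.ofReal s < ψ a} with hS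
  have h1 : m {x | ENNReal.ofReal s < ψ (d x)} ≤ m {x | d x ∈ S} := by
    apply measure_mono_ae
    filter_upwards [hd0, hd2] with x h0 h2 hx
    exact ⟨⟨h0, h2⟩, hx⟩
  refine h1.trans ?_
  rcases S.eq_empty_or_nonempty with he | hne
  · simp [he]
  · have hbdd : BddAbove S := ⟨2, fun a ha => ha.1.2⟩
    obtain ⟨a0, ha0⟩ := hne
    set b := sSup S
    have hb0 : 0 < b := lt_of_lt_of_le ha0.1.1 (le_csSup hbdd ha0)
    have hb2 : b ≤ 2 := csSup_le ⟨a0, ha0⟩ fun a ha => ha.1.2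
    calc m {x | d x ∈ S} ≤ m {x | d x ≤ b} := measure_mono fun x hx => le_csSup hbdd hx
      _ ≤ ρ (Ioo 0 b) := hmρ b hb0 hb2
      _ ≤ _ := by
        apply measure_mono
        intro a ha
        obtain ⟨c, hc, hac⟩ := exists_lt_of_lt_csSup ⟨a0, ha0⟩ ha.2
        exact ⟨lt_of_lt_of_le hc.2 (hψ ha.1 hc.1.1 hac.le), ha.1⟩

lemma lint_rpow_Ioo {r b : ℝ} (hr : -1 < r) (hb : 0 < b) :
    ∫⁻ x in Ioo 0 b, ENNReal.ofReal (x ^ r) = ENNReal.ofReal (b ^ (r+1) / (r+1)) := by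
  rw [← ofReal_integral_eq_lintegral_ofReal]
  · rw [← integral_Ioc_eq_integral_Ioo, ← intervalIntegral.integral_of_le hb.le,
      integral_rpow (Or.inl hr), Real.zero_rpow (by linarith), sub_zero]
  · exact (intervalIntegral.integrableOn_Ioo_rpow_iff hb).2 hr
  · filter_upwards [ae_restrict_mem measurableSet_Ioo] with x hx
    exact Real.rpow_nonneg hx.1.le _

lemma lint_rpow_Ioi {r b : ℝ} (hr : r < -1) (hb : 0 < b) :
    ∫⁻ x in Ioi b, ENNReal.ofReal (x ^ r) = ENNReal.ofReal (b ^ (r+1) / (-(r+1))) := by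
  rw [← ofReal_integral_eq_lintegral_ofReal]
  · rw [integral_Ioi_rpow_of_lt hr hb, div_neg, neg_div]
  · exact integrableOn_Ioi_rpow_of_lt hr hb
  · filter_upwards [ae_restrict_mem measurableSet_Ioi] with x hx
    exact Real.rpow_nonneg (hb.trans hx).le _

/-- `∫₀^∞ x^r (x+v)^(-s) dx ≤ C v^(r+1-s)` -/
lemma lint_kernel {r s v : ℝ} (hr : -1 < r) (hrs : r - s < -1) (hs : 0 < s) (hv : 0 < v) :
    ∫⁻ x in Ioi 0, ENNReal.ofReal (x ^ r * (x + v) ^ (-s)) ≤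
      ENNReal.ofReal ((1 / (r+1) + 1 / (s - r - 1)) * v ^ (r + 1 - s)) := by
  have hsplit : Ioi (0:ℝ) = Ioc 0 v ∪ Ioi v := (Ioc_union_Ioi_eq_Ioi hv.le).symm
  rw [hsplit]
  refine (lintegral_union_le _ _ _).trans ?_
  have e : (1 / (r+1) + 1 / (s - r - 1)) * v ^ (r + 1 - s) = v ^ (-s) * (v ^ (r+1) / (r+1)) + v ^ (r - s + 1) / (-(r-s+1)) := by
    have h1 : v ^ (r + 1 - s) = v ^ (-s) * v ^ (r+1) := by rw [← Real.rpow_add hv]; ring_nf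
    have h2 : v ^ (r - s + 1) = v ^ (-s) * v ^ (r+1) := by rw [← Real.rpow_add hv]; ring_nf
    rw [h1, h2]
    have : -(r-s+1) = s - r - 1 := by ring
    rw [this]; ring
  rw [e, ENNReal.ofReal_add (by have : 0 < r + 1 := by linarith
                                positivity) (by have : 0 < -(r - s + 1) := by linarith
                                                positivity)]
  gcongr
  · rw [ENNReal.ofReal_mul (by positivity), ← lint_rpow_Ioo hr hv, ← lintegral_const_mul' _ _ (by simp),
      restrict_Ioo_eq_restrict_Ioc]
    apply setLIntegral_mono' measurableSet_Ioc
    intro x hx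
    rw [← ENNReal.ofReal_mul (by positivity), mul_comm]
    apply ENNReal.ofReal_le_ofReal
    have := hx.1
    apply mul_le_mul_of_nonneg_right _ (by positivity)
    exact Real.rpow_le_rpow_of_nonpos hv (by linarith) (by linarith)
  · rw [← lint_rpow_Ioi hrs hv]
    apply setLIntegral_mono' measurableSet_Ioi
    intro x hx
    have hx0 : 0 < x := hv.trans hx
    apply ENNReal.ofReal_le_ofReal
    rw [sub_eq_add_neg, Real.rpow_add hx0]
    apply mul_le_mul_of_nonneg_left _ (by positivity)
    exact Real.rpow_le_rpow_of_nonpos hx0 (by linarith) (by linarith)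


lemma polar_dist {r θ : ℝ} (hr : 0 ≤ r) (hθ : |θ| ≤ Real.pi) :
    |θ| ≤ Real.pi * ‖(1:ℂ) - Complex.polarCoord.symm (r, θ)‖ := by
  have hπ := Real.pi_pos
  have hn : ‖(1:ℂ) - Complex.polarCoord.symm (r, θ)‖ ^ 2 = (r - Real.cos θ)^2 + Real.sin θ ^ 2 := by
    rw [Complex.sq_norm, Complex.normSq_apply, Complex.polarCoord_symm_apply]
    simp only [Complex.sub_re, Complex.sub_im, Complex.mul_re, Complex.mul_im, Complex.add_re, Complex.add_im,
      Complex.ofReal_re, Complex.ofReal_im, Complex.I_re, Complex.I_im, Complex.one_re, Complex.one_im]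
    linear_combination (r ^ 2 - 1) * Real.sin_sq_add_cos_sq θ
  by_cases h : |θ| ≤ Real.pi / 2
  · have h1 := Real.mul_abs_le_abs_sin h
    have h2 : |Real.sin θ| ≤ ‖(1:ℂ) - Complex.polarCoord.symm (r, θ)‖ := by
      apply abs_le_of_sq_le_sq _ (norm_nonneg _)
      rw [hn]; nlinarith [sq_nonneg (r - Real.cos θ)]
    have h3 := h1.trans h2
    rw [div_mul_eq_mul_div, div_le_iff₀ hπ] at h3
    nlinarith [abs_nonneg θ]
  · have hc : Real.cos θ ≤ 0 := by
      rw [← Real.cos_abs]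
      exact Real.cos_nonpos_of_pi_div_two_le_of_le (by linarith) (by linarith)
    have h1 : (1:ℝ) ≤ ‖(1:ℂ) - Complex.polarCoord.symm (r, θ)‖ := by
      have : (1:ℝ) ^ 2 ≤ ‖(1:ℂ) - Complex.polarCoord.symm (r, θ)‖ ^ 2 := by
        rw [hn]; nlinarith [Real.sin_sq_add_cos_sq θ, mul_nonneg hr (neg_nonneg.2 hc), sq_nonneg r]
      exact le_of_sq_le_sq this (norm_nonneg _)
    nlinarith

lemma weight_bound (α : ℝ) {r : ℝ} (h0 : 0 ≤ r) (h1 : r < 1) :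
    (1 - r ^ 2) ^ α ≤ 2 ^ |α| * (1 - r) ^ α := by
  have : 1 - r ^ 2 = (1 + r) * (1 - r) := by ring
  rw [this, Real.mul_rpow (by linarith) (by linarith)]
  gcongr
  · calc (1 + r) ^ α ≤ (1 + r) ^ |α| := Real.rpow_le_rpow_of_exponent_le (by linarith) (le_abs_self _)
      _ ≤ 2 ^ |α| := Real.rpow_le_rpow (by linarith) (by linarith) (abs_nonneg _)

lemma disc_meas (α : ℝ) (hα : -1 < α) {b : ℝ} (hb : 0 < b) :
    ∫⁻ z in ball (0:ℂ) 1 ∩ {z | ‖1 - z‖ ≤ b}, ENNReal.ofReal ((1 - ‖z‖ ^ 2) ^ α) ≤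
      ENNReal.ofReal (2 ^ |α| * (b ^ (α + 1) / (α + 1)) * (2 * (Real.pi * b))) := by
  have hπ := Real.pi_pos
  have hα' : 0 < α + 1 := by linarith
  have hms : MeasurableSet (ball (0:ℂ) 1 ∩ {z | ‖1 - z‖ ≤ b}) :=
    measurableSet_ball.inter (measurableSet_le (by fun_prop) measurable_const)
  rw [← lintegral_indicator hms, ← Complex.lintegral_comp_polarCoord_symm]
  set u : ℝ → ℝ≥0∞ := (Ico (1 - b) 1).indicator fun r => ENNReal.ofReal (2 ^ |α| * (1 - r) ^ α) with hu
  set v : ℝ → ℝ≥0∞ := (Icc (-(Real.pi * b)) (Real.pi * b)).indicator 1 with hv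
  have humeas : Measurable u := Measurable.indicator (by fun_prop) measurableSet_Ico
  have hvmeas : Measurable v := Measurable.indicator (by fun_prop) measurableSet_Icc
  calc _ ≤ ∫⁻ q in polarCoord.target, u q.1 * v q.2 := by
        apply setLIntegral_mono' polarCoord.open_target.measurableSet
        rintro ⟨r, θ⟩ hq
        rw [polarCoord_target] at hq
        obtain ⟨hr, hθ⟩ := hq
        simp only [mem_Ioi] at hr
        simp only [mem_Ioo] at hθ
        by_cases hz : Complex.polarCoord.symm (r, θ) ∈ ball (0:ℂ) 1 ∩ {z | ‖1 - z‖ ≤ b}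
        · have hnorm : ‖Complex.polarCoord.symm (r, θ)‖ = r := by
            rw [Complex.norm_polarCoord_symm]; exact abs_of_pos hr
          have hr1 : r < 1 := by
            have := hz.1; rw [mem_ball_zero_iff, hnorm] at this; exact this
          have hzb : ‖1 - Complex.polarCoord.symm (r, θ)‖ ≤ b := hz.2
          have hrb : 1 - b ≤ r := by
            have := norm_sub_norm_le (1:ℂ) (Complex.polarCoord.symm (r, θ))
            rw [hnorm, norm_one] at this; linarith
          have hθb : |θ| ≤ Real.pi * b :=
            (polar_dist hr.le (abs_le.2 ⟨hθ.1.le, hθ.2.le⟩)).trans (by gcongr)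
          rw [indicator_of_mem hz, hnorm, hu, hv]
          simp only
          rw [indicator_of_mem (show r ∈ Ico (1-b) 1 from ⟨hrb, hr1⟩), indicator_of_mem (by exact abs_le.1 hθb)]
          simp only [Pi.one_apply, mul_one, smul_eq_mul]
          calc _ ≤ 1 * ENNReal.ofReal (2 ^ |α| * (1 - r) ^ α) := by
                gcongr
                · exact ENNReal.ofReal_le_one.2 hr1.le
                · exact weight_bound α hr.le hr1
            _ = _ := one_mul _
        · rw [indicator_of_notMem hz]; simp
    _ ≤ ∫⁻ q : ℝ × ℝ, u q.1 * v q.2 := setLIntegral_le_lintegral _ _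
    _ = (∫⁻ r, u r) * ∫⁻ θ, v θ := by
        rw [Measure.volume_eq_prod]
        exact lintegral_prod_mul humeas.aemeasurable hvmeas.aemeasurable
    _ = _ := by
        have e1 : ∫⁻ θ, v θ = ENNReal.ofReal (2 * (Real.pi * b)) := by
          rw [hv, lintegral_indicator_one measurableSet_Icc, Real.volume_Icc]; congr 1; ring
        have e2 : ∫⁻ r, u r = ENNReal.ofReal (2 ^ |α| * (b ^ (α + 1) / (α + 1))) := by
          rw [← lintegral_sub_left_eq_self u 1]
          have : (fun x => u (1 - x)) = (Ioc 0 b).indicator fun x => ENNReal.ofReal (2 ^ |α|) * ENNReal.ofReal (x ^ α) := by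
            ext x
            rw [hu]
            by_cases hx : x ∈ Ioc 0 b
            · rw [indicator_of_mem hx, indicator_of_mem (by constructor <;> linarith [hx.1, hx.2]), ← ENNReal.ofReal_mul (by positivity)]
              simp
            · rw [indicator_of_notMem hx, indicator_of_notMem]
              intro h
              apply hx
              constructor <;> linarith [h.1, h.2]
          rw [this, lintegral_indicator measurableSet_Ioc, lintegral_const_mul' _ _ (by simp), ← restrict_Ioo_eq_restrict_Ioc,
            lint_rpow_Ioo hα hb, ← ENNReal.ofReal_mul (by positivity)]
        rw [e1, e2, ← ENNReal.ofReal_mul (by positivity)]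

lemma disc_compare (α : ℝ) (hα : -1 < α) : ∃ K : ℝ, 0 < K ∧ ∀ ψ : ℝ → ℝ≥0∞, Measurable ψ →
    AntitoneOn ψ (Ioi 0) →
    ∫⁻ z in ball (0:ℂ) 1, ENNReal.ofReal ((1 - ‖z‖ ^ 2) ^ α) * ψ ‖1 - z‖ ∂dA ≤
      ENNReal.ofReal K * ∫⁻ a in Ioi (0:ℝ), ENNReal.ofReal (a ^ (α + 1)) * ψ a := by
  have hπ := Real.pi_pos
  have hα' : 0 < α + 1 := by linarith
  have hαb : 0 < α + 2 := by linarith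
  set K := 2 ^ |α| * (1 / (α + 1)) * (2 * Real.pi) * (α + 2) with hK
  have hK0 : 0 < K := by positivity
  refine ⟨K, hK0, fun ψ hψm hψ => ?_⟩
  have hwm : Measurable fun z : ℂ => ENNReal.ofReal ((1 - ‖z‖ ^ 2) ^ α) := by fun_prop
  have hwm2 : Measurable fun a : ℝ => ENNReal.ofReal (a ^ (α + 1)) := by fun_prop
  set m : Measure ℂ := (volume.restrict (ball (0:ℂ) 1)).withDensity fun z => ENNReal.ofReal ((1 - ‖z‖ ^ 2) ^ α) with hm
  set ρ : Measure ℝ := ENNReal.ofReal K • volume.withDensity fun a => ENNReal.ofReal (a ^ (α + 1)) with hρ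
  have hae : ∀ᵐ z ∂m, z ∈ ball (0:ℂ) 1 :=
    (withDensity_absolutelyContinuous _ _).ae_le (ae_restrict_mem measurableSet_ball)
  have key := aux_compare m ρ (fun z => ‖1 - z‖) (by fun_prop) ?_ ?_ ?_ ψ hψm hψ
  · have e1 : ∫⁻ z, ψ ‖1 - z‖ ∂m = ∫⁻ z in ball (0:ℂ) 1, ENNReal.ofReal ((1 - ‖z‖ ^ 2) ^ α) * ψ ‖1 - z‖ := by
      rw [hm, lintegral_withDensity_eq_lintegral_mul _ hwm (by fun_prop)]
      rfl
    have e2 : ∫⁻ a in Ioi (0:ℝ), ψ a ∂ρ = ENNReal.ofReal K * ∫⁻ a in Ioi (0:ℝ), ENNReal.ofReal (a ^ (α + 1)) * ψ a := by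
      rw [hρ, Measure.restrict_smul, lintegral_smul_measure, restrict_withDensity measurableSet_Ioi,
        lintegral_withDensity_eq_lintegral_mul _ hwm2 hψm]
      rfl
    rw [e1, e2] at key
    refine le_trans ?_ key
    rw [dA, Measure.restrict_smul, lintegral_smul_measure, smul_eq_mul]
    refine mul_le_of_le_one_left zero_le ?_
    rw [ENNReal.inv_le_one, ENNReal.one_le_ofReal]
    linarith [Real.pi_gt_three]
  · filter_upwards [hae] with z hz
    rw [norm_pos_iff, sub_ne_zero]
    rintro rfl
    simp at hz
  · filter_upwards [hae] with z hz
    rw [mem_ball_zero_iff] at hz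
    have := norm_sub_le (1:ℂ) z
    rw [norm_one] at this
    linarith
  · intro b hb _
    have hms : MeasurableSet {z : ℂ | ‖1 - z‖ ≤ b} := measurableSet_le (by fun_prop) measurable_const
    rw [hm, withDensity_apply _ hms, Measure.restrict_restrict hms, inter_comm, hρ, Measure.smul_apply,
      withDensity_apply _ measurableSet_Ioo, lint_rpow_Ioo (by linarith) hb, smul_eq_mul, ← ENNReal.ofReal_mul hK0.le]
    refine (disc_meas α hα hb).trans (ENNReal.ofReal_le_ofReal (le_of_eq ?_))
    rw [hK, show α + 1 + 1 = (α + 1) + 1 from rfl, Real.rpow_add hb (α+1) 1, Real.rpow_one, show α + 1 + 1 = α + 2 by ring]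
    field_simp


lemma circle_submean {F : ℂ → ℂ} {c : ℂ} {R r : ℝ} (hF : DifferentiableOn ℂ F (ball c R))
    (hr : 0 < r) (hrR : r < R) :
    ENNReal.ofReal (2 * Real.pi) * ‖F c‖ₑ ≤
      ∫⁻ θ in Ioo (-Real.pi) Real.pi, ‖F (c + Complex.polarCoord.symm (r, θ))‖ₑ := by
  have hπ := Real.pi_pos
  have hd : DiffContOnCl ℂ F (ball c |r|) := by
    rw [abs_of_pos hr]
    apply DifferentiableOn.diffContOnCl
    rw [closure_ball _ hr.ne']
    exact hF.mono (closedBall_subset_ball hrR)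
  have h1 := hd.circleAverage
  rw [Real.circleAverage_eq_integral_add (-Real.pi),
    intervalIntegral.integral_comp_add_right (fun θ => F (circleMap c r θ)),
    intervalIntegral.integral_of_le (by linarith), integral_Ioc_eq_integral_Ioo,
    show 0 + -Real.pi = -Real.pi by ring, show 2 * Real.pi + - Real.pi = Real.pi by ring] at h1
  rw [← h1, enorm_smul, ← mul_assoc, Real.enorm_eq_ofReal (by positivity),
    ← ENNReal.ofReal_mul (by positivity), mul_inv_cancel₀ (by positivity), ENNReal.ofReal_one, one_mul]
  refine (enorm_integral_le_lintegral_enorm _).trans (le_of_eq ?_)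
  congr with θ
  rw [circleMap, Complex.polarCoord_symm_apply, Complex.exp_mul_I]
  push_cast
  rfl

lemma disc_submean {F : ℂ → ℂ} (hFm : Measurable F) {c : ℂ} {R : ℝ} (hR : 0 < R)
    (hF : DifferentiableOn ℂ F (ball c R)) :
    ENNReal.ofReal (Real.pi * R ^ 2) * ‖F c‖ₑ ≤ ∫⁻ z in ball c R, ‖F z‖ₑ := by
  have hπ := Real.pi_pos
  rw [← lintegral_indicator measurableSet_ball, ← lintegral_add_left_eq_self _ c,
    ← Complex.lintegral_comp_polarCoord_symm, polarCoord_target, Measure.volume_eq_prod, 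
    ← Measure.prod_restrict, lintegral_prod]
  · calc _ = ∫⁻ r in Ioo 0 R, ENNReal.ofReal (r ^ (1:ℝ)) * (ENNReal.ofReal (2 * Real.pi) * ‖F c‖ₑ) := by
          rw [lintegral_mul_const _ (by fun_prop), lint_rpow_Ioo (by norm_num) hR, ← mul_assoc,
            ← ENNReal.ofReal_mul (by positivity)]
          congr 2
          norm_num
          ring
      _ ≤ ∫⁻ r in Ioo 0 R, ENNReal.ofReal r * ∫⁻ θ in Ioo (-Real.pi) Real.pi, ‖F (c + Complex.polarCoord.symm (r, θ))‖ₑ := by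
          apply setLIntegral_mono' measurableSet_Ioo
          intro r hr
          rw [Real.rpow_one]
          gcongr
          exact circle_submean hF hr.1 hr.2
      _ ≤ _ := by
          refine le_trans ?_ (lintegral_mono_set (s := Ioo 0 R) Ioo_subset_Ioi_self)
          apply setLIntegral_mono' measurableSet_Ioo
          intro r hr
          rw [← lintegral_const_mul' _ _ (by simp)]
          apply lintegral_mono
          intro θ
          simp only [smul_eq_mul]
          rw [indicator_of_mem]
          rw [mem_ball, dist_self_add_left, Complex.norm_polarCoord_symm]
          simp [abs_of_pos hr.1, hr.2]
  · have : Measurable (fun q : ℝ × ℝ => Complex.polarCoord.symm q) := by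
      simp_rw [Complex.polarCoord_symm_apply]
      fun_prop
    apply Measurable.aemeasurable
    simp only [smul_eq_mul]
    apply Measurable.mul (by fun_prop)
    exact (Measurable.indicator (by fun_prop) measurableSet_ball).comp (measurable_const.add this)

lemma disc_submean_p {F : ℂ → ℂ} (hFm : Measurable F) {c : ℂ} {R p : ℝ} (hR : 0 < R) (hp : 1 < p)
    (hF : DifferentiableOn ℂ F (ball c R)) :
    ENNReal.ofReal (Real.pi * R ^ 2) * ‖F c‖ₑ ^ p ≤ ∫⁻ z in ball c R, ‖F z‖ₑ ^ p := by
  have hπ := Real.pi_pos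
  have h1 := disc_submean hFm hR hF
  have hpq := Real.HolderConjugate.conjExponent hp
  have h2 := ENNReal.lintegral_mul_le_Lp_mul_Lq (volume.restrict (ball c R)) hpq
    (f := fun z => ‖F z‖ₑ) (g := 1) (by fun_prop) (by fun_prop)
  simp only [Pi.mul_apply, Pi.one_apply, mul_one, ENNReal.one_rpow, lintegral_one, Measure.restrict_apply_univ] at h2
  have hv : volume (ball c R) = ENNReal.ofReal (Real.pi * R ^ 2) := by
    rw [Complex.volume_ball, mul_comm, ENNReal.ofReal_mul hπ.le, ENNReal.ofReal_pow hR.le]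
    congr 1
    rw [← ENNReal.ofReal_coe_nnreal]; rfl
  rw [hv] at h2
  set V := ENNReal.ofReal (Real.pi * R ^ 2)
  have hV0 : V ≠ 0 := by simp [V]; positivity
  have hVt : V ≠ ⊤ := by simp [V]
  have h3 := ENNReal.rpow_le_rpow (h1.trans h2) (by linarith : 0 ≤ p)
  rw [ENNReal.mul_rpow_of_nonneg _ _ (by linarith), ENNReal.mul_rpow_of_nonneg _ _ (by linarith),
    ← ENNReal.rpow_mul, ← ENNReal.rpow_mul, one_div_mul_cancel (by linarith), ENNReal.rpow_one] at h3
  have e : 1 / p.conjExponent * p = p - 1 := by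
    rw [Real.conjExponent]; field_simp
  rw [e] at h3
  have e2 : V ^ p = V * V ^ (p - 1) := by
    nth_rewrite 2 [← ENNReal.rpow_one V]
    rw [← ENNReal.rpow_add _ _ hV0 hVt]; congr 1; ring
  rw [e2, mul_assoc, mul_comm (V ^ (p-1)), ← mul_assoc] at h3
  have h4 : V ^ (p-1) ≠ 0 := by simp [ENNReal.rpow_eq_zero_iff, hV0, hVt]
  have h5 : V ^ (p-1) ≠ ⊤ := ENNReal.rpow_ne_top_of_nonneg (by linarith) hVt
  exact (ENNReal.mul_le_mul_iff_left h4 h5).1 h3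

lemma rpow_lower (α : ℝ) {y : ℝ} (h1 : 1/3 ≤ y) (h2 : y ≤ 3) : 1 ≤ 3 ^ |α| * y ^ α := by
  have hy : 0 < y := by linarith
  rcases le_total 0 α with h | h
  · rw [abs_of_nonneg h, ← Real.mul_rpow (by norm_num) hy.le]
    exact Real.one_le_rpow (by linarith) h
  · rw [abs_of_nonpos h, Real.rpow_neg (by norm_num), ← Real.inv_rpow (by norm_num), ← Real.mul_rpow (by norm_num) hy.le]
    apply Real.one_le_rpow_of_pos_of_le_one_of_nonpos (by positivity) (by linarith) h

lemma ball_geom {v : ℝ} (hv : 0 < v) (hv1 : v ≤ 1) {z : ℂ} (hz : z ∈ ball ((1 - v : ℝ) : ℂ) (v / 2)) :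
    v / 2 ≤ 1 - ‖z‖ ∧ 1 - ‖z‖ ≤ 3 * v / 2 := by
  rw [mem_ball, dist_eq_norm] at hz
  have h1 := norm_sub_norm_le z ((1 - v : ℝ) : ℂ)
  have h2 := norm_sub_norm_le ((1 - v : ℝ) : ℂ) z
  rw [norm_sub_rev] at h2
  rw [Complex.norm_real, Real.norm_of_nonneg (by linarith)] at h1 h2
  constructor <;> linarith

lemma ball_sub_unit {v : ℝ} (hv : 0 < v) (hv1 : v ≤ 1) : ball ((1 - v : ℝ) : ℂ) (v / 2) ⊆ ball 0 1 := by
  intro z hz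
  have := (ball_geom hv hv1 hz).1
  rw [mem_ball_zero_iff]; linarith

lemma point_eval {F : ℂ → ℂ} (hFm : Measurable F) {p α v : ℝ} (hp : 1 < p)
    (hF : DifferentiableOn ℂ F (ball 0 1)) (hv : 0 < v) (hv1 : v ≤ 1) :
    ENNReal.ofReal (v ^ (α + 2)) * ‖F ((1 - v : ℝ) : ℂ)‖ₑ ^ p ≤ ENNReal.ofReal (2 * 3 ^ |α|) *
      ∫⁻ z in ball ((1 - v : ℝ) : ℂ) (v / 2), ENNReal.ofReal ((1 - ‖z‖ ^ 2) ^ α) * ‖F z‖ₑ ^ p := by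
  have h1 := disc_submean_p hFm (half_pos hv) hp (hF.mono (ball_sub_unit hv hv1))
  have hπ := Real.pi_gt_three
  calc _ ≤ ENNReal.ofReal (2 * v ^ α) * (ENNReal.ofReal (Real.pi * (v/2)^2) * ‖F ((1 - v : ℝ) : ℂ)‖ₑ ^ p) := by
        rw [← mul_assoc, ← ENNReal.ofReal_mul (by positivity)]
        gcongr
        rw [Real.rpow_add hv, Real.rpow_two]
        have : 0 < v ^ α * v ^ 2 := by positivity
        nlinarith
    _ ≤ ENNReal.ofReal (2 * v ^ α) * ∫⁻ z in ball ((1 - v : ℝ) : ℂ) (v / 2), ‖F z‖ₑ ^ p := by gcongr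
    _ ≤ _ := by
        rw [← lintegral_const_mul' _ _ ENNReal.ofReal_ne_top, ← lintegral_const_mul' _ _ ENNReal.ofReal_ne_top]
        apply setLIntegral_mono' measurableSet_ball
        intro z hz
        rw [← mul_assoc, ← ENNReal.ofReal_mul (by positivity)]
        refine mul_le_mul_left (ENNReal.ofReal_le_ofReal ?_) _
        obtain ⟨h2, h3⟩ := ball_geom hv hv1 hz
        have h4 := norm_nonneg z
        have h5 := rpow_lower α (y := (1 - ‖z‖^2) / v) (by rw [le_div_iff₀ hv]; nlinarith) (by rw [div_le_iff₀ hv]; nlinarith)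
        rw [Real.div_rpow (by nlinarith) hv.le, ← mul_div_assoc, one_le_div (by positivity)] at h5
        linarith

lemma line_embed {F : ℂ → ℂ} (hFm : Measurable F) {p α : ℝ} (hp : 1 < p)
    (hF : DifferentiableOn ℂ F (ball 0 1)) :
    ∫⁻ v in Ioo (0:ℝ) 1, ENNReal.ofReal (v ^ (α + 1)) * ‖F ((1 - v : ℝ) : ℂ)‖ₑ ^ p ≤
      ENNReal.ofReal (4 * 3 ^ |α|) *
        ∫⁻ z in ball (0:ℂ) 1, ENNReal.ofReal ((1 - ‖z‖ ^ 2) ^ α) * ‖F z‖ₑ ^ p := by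
  set W : ℂ → ℝ≥0∞ := fun z => ENNReal.ofReal ((1 - ‖z‖ ^ 2) ^ α) * ‖F z‖ₑ ^ p with hW
  have hWm : Measurable W := by fun_prop
  set D : Set (ℝ × ℂ) := {q | dist q.2 ((1 - q.1 : ℝ) : ℂ) < q.1 / 2} with hD
  have hDm : MeasurableSet D := measurableSet_lt (by fun_prop) (by fun_prop)
  calc _ ≤ ∫⁻ v in Ioo (0:ℝ) 1, ENNReal.ofReal (2 * 3 ^ |α|) * (ENNReal.ofReal v⁻¹ * ∫⁻ z in ball (0:ℂ) 1, D.indicator 1 (v, z) * W z) := by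
        apply setLIntegral_mono' measurableSet_Ioo
        intro v hv
        have h1 := point_eval (α := α) hFm hp hF hv.1 hv.2.le
        have hv0 := hv.1
        have e : ENNReal.ofReal (v ^ (α + 1)) = ENNReal.ofReal v⁻¹ * ENNReal.ofReal (v ^ (α + 2)) := by
          rw [← ENNReal.ofReal_mul (by positivity), ← Real.rpow_neg_one, ← Real.rpow_add hv.1]
          congr 2; ring
        rw [e, mul_assoc, mul_left_comm (ENNReal.ofReal (2 * 3 ^ |α|))]
        refine mul_le_mul_right (h1.trans ?_) _
        refine mul_le_mul_right ?_ _
        rw [← lintegral_indicator measurableSet_ball, ← lintegral_indicator measurableSet_ball]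
        apply lintegral_mono
        intro z
        by_cases hz : z ∈ ball ((1 - v : ℝ) : ℂ) (v / 2)
        · rw [indicator_of_mem hz, indicator_of_mem (ball_sub_unit hv.1 hv.2.le hz), indicator_of_mem (by exact hz)]
          simp [hW]
        · rw [indicator_of_notMem hz]; exact zero_le
    _ = ENNReal.ofReal (2 * 3 ^ |α|) * ∫⁻ v in Ioo (0:ℝ) 1, ∫⁻ z in ball (0:ℂ) 1, ENNReal.ofReal v⁻¹ * (D.indicator 1 (v, z) * W z) := by
        rw [lintegral_const_mul' _ _ ENNReal.ofReal_ne_top]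
        congr 2 with v
        rw [lintegral_const_mul' _ _ (by simp)]
    _ = ENNReal.ofReal (2 * 3 ^ |α|) * ∫⁻ z in ball (0:ℂ) 1, ∫⁻ v in Ioo (0:ℝ) 1, ENNReal.ofReal v⁻¹ * (D.indicator 1 (v, z) * W z) := by
        rw [lintegral_lintegral_swap]
        apply Measurable.aemeasurable
        apply Measurable.mul (by fun_prop)
        exact (measurable_one.indicator hDm).mul (by fun_prop)
    _ ≤ ENNReal.ofReal (2 * 3 ^ |α|) * ∫⁻ z in ball (0:ℂ) 1, ENNReal.ofReal 2 * W z := by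
        gcongr 1
        apply setLIntegral_mono' measurableSet_ball
        intro z hz
        rw [mem_ball_zero_iff] at hz
        have hδ : 0 < 1 - ‖z‖ := by linarith
        set δ := 1 - ‖z‖ with hδd
        calc _ ≤ ∫⁻ v, ENNReal.ofReal (3 / (2 * δ)) * W z * (Icc (2 * δ / 3) (2 * δ)).indicator 1 v := by
              rw [← lintegral_indicator measurableSet_Ioo]
              apply lintegral_mono
              intro v
              by_cases hv : v ∈ Ioo (0:ℝ) 1
              · rw [indicator_of_mem hv]
                by_cases hq : (v, z) ∈ D
                · obtain ⟨h2, h3⟩ := ball_geom hv.1 hv.2.le (z := z) hq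
                  have hvI : v ∈ Icc (2 * δ / 3) (2 * δ) := by constructor <;> linarith
                  simp only [indicator_of_mem hq, indicator_of_mem hvI, Pi.one_apply, one_mul, mul_one]
                  gcongr
                  rw [inv_eq_one_div, div_le_div_iff₀ hv.1 (by positivity)]
                  linarith
                · rw [indicator_of_notMem hq]; simp
              · rw [indicator_of_notMem hv]; exact zero_le
          _ = ENNReal.ofReal (3 / (2 * δ)) * W z * ENNReal.ofReal (2 * δ - 2 * δ / 3) := by
              rw [lintegral_const_mul _ (measurable_one.indicator measurableSet_Icc), lintegral_indicator_one measurableSet_Icc, Real.volume_Icc]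
          _ = _ := by
              rw [mul_right_comm, ← ENNReal.ofReal_mul (by positivity)]
              congr 2
              field_simp
              norm_num
    _ = _ := by
        rw [lintegral_const_mul' _ _ (by simp), ← mul_assoc, ← ENNReal.ofReal_mul (by positivity)]
        congr 2
        ring


/-- the Schur kernel operator -/
noncomputable def schurT (h : ℝ → ℝ≥0∞) (a : ℝ) : ℝ≥0∞ :=
  ∫⁻ v in Ioi (0:ℝ), ENNReal.ofReal (v / (a * (a + v))) * h v

lemma schur_holder {p q : ℝ} (hp : 1 < p) (h : ℝ → ℝ≥0∞) (hm : Measurable h) {a : ℝ} (ha : 0 < a) :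
    schurT h a ^ p ≤ (∫⁻ v in Ioi (0:ℝ), ENNReal.ofReal (v / (a * (a + v)) * v ^ q) * h v ^ p) *
      (∫⁻ v in Ioi (0:ℝ), ENNReal.ofReal (v / (a * (a + v)) * v ^ (-(q / (p-1))))) ^ (p - 1) := by
  have hpq := Real.HolderConjugate.conjExponent hp
  have hq0 : 0 < p.conjExponent := hpq.symm.pos
  have hp0 : 0 < p := by linarith
  have hp1 : 0 < p - 1 := by linarith
  set f : ℝ → ℝ≥0∞ := fun v => ENNReal.ofReal ((v / (a * (a + v))) ^ (1/p) * v ^ (q/p)) * h v with hf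
  set g : ℝ → ℝ≥0∞ := fun v => ENNReal.ofReal ((v / (a * (a + v))) ^ (1/p.conjExponent) * v ^ (-(q/p))) with hg
  have hfm : Measurable f := by fun_prop
  have hgm : Measurable g := by fun_prop
  have h2 := ENNReal.lintegral_mul_le_Lp_mul_Lq (volume.restrict (Ioi (0:ℝ))) hpq hfm.aemeasurable hgm.aemeasurable
  have e1 : ∫⁻ v in Ioi (0:ℝ), (f * g) v = schurT h a := by
    apply setLIntegral_congr_fun measurableSet_Ioi
    intro v hv
    rw [mem_Ioi] at hv
    simp only [Pi.mul_apply, hf, hg]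
    rw [mul_right_comm, ← ENNReal.ofReal_mul (by positivity)]
    congr 2
    rw [mul_mul_mul_comm, ← Real.rpow_add (by positivity), ← Real.rpow_add hv]
    have : 1 / p + 1 / p.conjExponent = 1 := by
      have := hpq.inv_add_inv_eq_one
      simpa using this
    rw [this]; simp
  have e2 : ∫⁻ v in Ioi (0:ℝ), f v ^ p = ∫⁻ v in Ioi (0:ℝ), ENNReal.ofReal (v / (a * (a + v)) * v ^ q) * h v ^ p := by
    apply setLIntegral_congr_fun measurableSet_Ioi
    intro v hv
    rw [mem_Ioi] at hv
    simp only [hf]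
    rw [ENNReal.mul_rpow_of_nonneg _ _ hp0.le, ENNReal.ofReal_rpow_of_nonneg (by positivity) hp0.le,
      Real.mul_rpow (by positivity) (by positivity), ← Real.rpow_mul (by positivity), ← Real.rpow_mul hv.le,
      one_div_mul_cancel hp0.ne', div_mul_cancel₀ _ hp0.ne', Real.rpow_one]
  have e3 : ∫⁻ v in Ioi (0:ℝ), g v ^ p.conjExponent = ∫⁻ v in Ioi (0:ℝ), ENNReal.ofReal (v / (a * (a + v)) * v ^ (-(q / (p-1)))) := by
    apply setLIntegral_congr_fun measurableSet_Ioi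
    intro v hv
    rw [mem_Ioi] at hv
    simp only [hg]
    rw [ENNReal.ofReal_rpow_of_nonneg (by positivity) hq0.le,
      Real.mul_rpow (by positivity) (by positivity), ← Real.rpow_mul (by positivity), ← Real.rpow_mul hv.le,
      one_div_mul_cancel hq0.ne', Real.rpow_one]
    congr 3
    rw [Real.conjExponent]; field_simp
  rw [e1, e2, e3] at h2
  have h3 := ENNReal.rpow_le_rpow h2 hp0.le
  rw [ENNReal.mul_rpow_of_nonneg _ _ hp0.le,
    ← ENNReal.rpow_mul, ← ENNReal.rpow_mul, one_div_mul_cancel hp0.ne', ENNReal.rpow_one] at h3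
  have e : 1 / p.conjExponent * p = p - 1 := by
    rw [Real.conjExponent]; field_simp
  rwa [e] at h3

lemma schur_bound {p α : ℝ} (hp : 1 < p) (hα1 : p - 2 < α) (hα2 : α ≤ p - 1) :
    ∃ K : ℝ, 0 < K ∧ ∀ h : ℝ → ℝ≥0∞, Measurable h →
      ∫⁻ a in Ioi (0:ℝ), ENNReal.ofReal (a ^ (α + 1)) * schurT h a ^ p ≤
        ENNReal.ofReal K * ∫⁻ v in Ioi (0:ℝ), ENNReal.ofReal (v ^ (α + 1)) * h v ^ p := by
  have hp1 : 0 < p - 1 := by linarith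
  obtain ⟨q, hq1, hq2⟩ : ∃ q, p - 1 < q ∧ q < min (2 * p - 2) (α + 1) :=
    exists_between (lt_min (by linarith) (by linarith))
  obtain ⟨hq2, hq3⟩ := lt_min_iff.1 hq2
  set r := 1 - q / (p-1) with hr
  have hqp1 : 1 < q / (p-1) := by rw [one_lt_div hp1]; exact hq1
  have hqp2 : q / (p-1) < 2 := by rw [div_lt_iff₀ hp1]; linarith
  have hr1 : -1 < r := by linarith
  have hr2 : r < 0 := by linarith
  set C1 := 1 / (r+1) + 1 / (1 - r - 1) with hC1
  have hC1p : 0 < C1 := by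
    have : 0 < r + 1 := by linarith
    have : 0 < 1 - r - 1 := by linarith
    positivity
  set r2 := α - q with hr2d
  set C2 := 1 / (r2+1) + 1 / (1 - r2 - 1) with hC2
  have hC2p : 0 < C2 := by
    have : 0 < r2 + 1 := by linarith
    have : 0 < 1 - r2 - 1 := by linarith
    positivity
  refine ⟨C1 ^ (p-1) * C2, by positivity, fun h hm => ?_⟩
  have hA : ∀ a : ℝ, 0 < a → ∫⁻ v in Ioi (0:ℝ), ENNReal.ofReal (v / (a * (a + v)) * v ^ (-(q / (p-1)))) ≤ ENNReal.ofReal (C1 * a ^ (-(q / (p-1)))) := by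
    intro a ha
    have h1 := lint_kernel (r := r) (s := 1) (v := a) hr1 (by linarith) one_pos ha
    calc _ = ENNReal.ofReal (a⁻¹) * ∫⁻ x in Ioi 0, ENNReal.ofReal (x ^ r * (x + a) ^ (-(1:ℝ))) := by
          rw [← lintegral_const_mul' _ _ ENNReal.ofReal_ne_top]
          apply setLIntegral_congr_fun measurableSet_Ioi
          intro v hv
          rw [mem_Ioi] at hv
          simp only
          rw [← ENNReal.ofReal_mul (by positivity)]
          congr 1
          rw [show r = 1 + -(q / (p-1)) by rw [hr]; ring, Real.rpow_add hv, Real.rpow_one, Real.rpow_neg_one]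
          field_simp
          ring
      _ ≤ ENNReal.ofReal (a⁻¹) * ENNReal.ofReal (C1 * a ^ (r + 1 - 1)) := by gcongr
      _ = _ := by
          rw [← ENNReal.ofReal_mul (by positivity), mul_left_comm, ← Real.rpow_neg_one, ← Real.rpow_add ha]
          congr 3
          rw [hr]; ring
  have hB : ∀ v : ℝ, 0 < v → ∫⁻ a in Ioi (0:ℝ), ENNReal.ofReal (a ^ (α + 1) * a ^ (-q) * (v / (a * (a + v)) * v ^ q)) ≤ ENNReal.ofReal (C2 * v ^ (α + 1)) := by
    intro v hv
    have h1 := lint_kernel (r := r2) (s := 1) (v := v) (by linarith) (by linarith) one_pos hv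
    calc _ = ENNReal.ofReal (v ^ (q + 1)) * ∫⁻ x in Ioi 0, ENNReal.ofReal (x ^ r2 * (x + v) ^ (-(1:ℝ))) := by
          rw [← lintegral_const_mul' _ _ ENNReal.ofReal_ne_top]
          apply setLIntegral_congr_fun measurableSet_Ioi
          intro a ha
          rw [mem_Ioi] at ha
          simp only
          rw [← ENNReal.ofReal_mul (by positivity)]
          congr 1
          rw [hr2d, sub_eq_add_neg, Real.rpow_add ha, Real.rpow_add ha, Real.rpow_one, Real.rpow_neg_one, Real.rpow_add hv, Real.rpow_one]
          field_simp
      _ ≤ ENNReal.ofReal (v ^ (q+1)) * ENNReal.ofReal (C2 * v ^ (r2 + 1 - 1)) := by gcongr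
      _ = _ := by
          rw [← ENNReal.ofReal_mul (by positivity), mul_left_comm, ← Real.rpow_add hv]
          congr 3
          rw [hr2d]; ring
  calc _ ≤ ∫⁻ a in Ioi (0:ℝ), ENNReal.ofReal (C1 ^ (p-1)) * ∫⁻ v in Ioi (0:ℝ), ENNReal.ofReal (a ^ (α + 1) * a ^ (-q) * (v / (a * (a + v)) * v ^ q)) * h v ^ p := by
        apply setLIntegral_mono' measurableSet_Ioi
        intro a ha
        rw [mem_Ioi] at ha
        calc _ ≤ ENNReal.ofReal (a ^ (α + 1)) * ((∫⁻ v in Ioi (0:ℝ), ENNReal.ofReal (v / (a * (a + v)) * v ^ q) * h v ^ p) *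
            (ENNReal.ofReal (C1 * a ^ (-(q / (p-1))))) ^ (p - 1)) := by
              gcongr
              refine (schur_holder (q := q) hp h hm ha).trans ?_
              gcongr
              exact hA a ha
          _ = ENNReal.ofReal (C1 ^ (p-1)) * (ENNReal.ofReal (a ^ (α + 1) * a ^ (-q)) * (∫⁻ v in Ioi (0:ℝ), ENNReal.ofReal (v / (a * (a + v)) * v ^ q) * h v ^ p)) := by
              rw [ENNReal.ofReal_rpow_of_nonneg (by positivity) hp1.le, Real.mul_rpow hC1p.le (by positivity),
                ← Real.rpow_mul ha.le, neg_mul, div_mul_cancel₀ _ hp1.ne', ENNReal.ofReal_mul (by positivity),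
                ENNReal.ofReal_mul (by positivity)]
              ring
          _ = _ := by
              rw [← lintegral_const_mul' _ _ ENNReal.ofReal_ne_top]
              congr 1
              apply lintegral_congr
              intro v
              rw [← mul_assoc, ← ENNReal.ofReal_mul (by positivity)]
    _ = ENNReal.ofReal (C1 ^ (p-1)) * ∫⁻ v in Ioi (0:ℝ), ∫⁻ a in Ioi (0:ℝ), ENNReal.ofReal (a ^ (α + 1) * a ^ (-q) * (v / (a * (a + v)) * v ^ q)) * h v ^ p := by
        rw [lintegral_const_mul' _ _ ENNReal.ofReal_ne_top, lintegral_lintegral_swap]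
        apply Measurable.aemeasurable
        fun_prop
    _ ≤ ENNReal.ofReal (C1 ^ (p-1)) * ∫⁻ v in Ioi (0:ℝ), ENNReal.ofReal C2 * (ENNReal.ofReal (v ^ (α + 1)) * h v ^ p) := by
        refine mul_le_mul_right ?_ _
        apply setLIntegral_mono' measurableSet_Ioi
        intro v hv
        rw [mem_Ioi] at hv
        rw [lintegral_mul_const _ (by fun_prop), ← mul_assoc, ← ENNReal.ofReal_mul hC2p.le]
        refine mul_le_mul_left (hB v hv) _
    _ = _ := by
        rw [lintegral_const_mul' _ _ ENNReal.ofReal_ne_top, ← mul_assoc, ← ENNReal.ofReal_mul (by positivity)]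


lemma one_sub_lower {t : ℝ} (ht : t ∈ Ico (0:ℝ) 1) {z : ℂ} (hz : z ∈ ball (0:ℂ) 1) :
    ((1 - t) + ‖1 - z‖) / 3 ≤ ‖1 - (t:ℂ) * z‖ := by
  rw [mem_ball_zero_iff] at hz
  have h0 := norm_nonneg z
  have htn : ‖(t:ℂ) * z‖ = t * ‖z‖ := by rw [norm_mul, Complex.norm_real, Real.norm_of_nonneg ht.1]
  have h1 : 1 - t ≤ ‖1 - (t:ℂ) * z‖ := by
    have := norm_sub_norm_le (1:ℂ) ((t:ℂ) * z)
    rw [norm_one, htn] at this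
    nlinarith [ht.1]
  have h2 : ‖1 - z‖ ≤ ‖1 - (t:ℂ) * z‖ + (1 - t) := by
    have e : 1 - z = (1 - (t:ℂ) * z) - ((1 - t : ℝ) : ℂ) * z := by push_cast; ring
    rw [e]
    refine (norm_sub_le _ _).trans ?_
    rw [norm_mul, Complex.norm_real, Real.norm_of_nonneg (by linarith [ht.2])]
    nlinarith [ht.2]
  linarith

lemma one_sub_lower' {t R : ℝ} (ht : t ∈ Ico (0:ℝ) 1) {z : ℂ} (hz : ‖z‖ ≤ R) (hR : R < 1) :
    1 - R ≤ ‖1 - (t:ℂ) * z‖ := by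
  have h0 := norm_nonneg z
  have htn : ‖(t:ℂ) * z‖ = t * ‖z‖ := by rw [norm_mul, Complex.norm_real, Real.norm_of_nonneg ht.1]
  have := norm_sub_norm_le (1:ℂ) ((t:ℂ) * z)
  rw [norm_one, htn] at this
  nlinarith [ht.1, ht.2]

lemma ae_Ico {μ : Measure ℝ} (hsupp : μ (Ico (0 : ℝ) 1)ᶜ = 0) : ∀ᵐ t ∂μ, t ∈ Ico (0:ℝ) 1 := by
  rw [ae_iff]; exact hsupp

lemma f_aesm {μ : Measure ℝ} (hsupp : μ (Ico (0 : ℝ) 1)ᶜ = 0) {f : ℂ → ℂ}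
    (hf : DifferentiableOn ℂ f (ball (0 : ℂ) 1)) : AEStronglyMeasurable (fun t : ℝ => f t) μ := by
  have : μ = μ.restrict (Ico (0:ℝ) 1) := (Measure.restrict_eq_self_of_ae_mem (ae_Ico hsupp)).symm
  rw [this]
  apply ContinuousOn.aestronglyMeasurable _ measurableSet_Ico
  apply hf.continuousOn.comp (by fun_prop)
  intro t ht
  rw [mem_ball_zero_iff, Complex.norm_real, Real.norm_of_nonneg ht.1]
  exact ht.2

lemma Imu_integrable {μ : Measure ℝ} (hsupp : μ (Ico (0 : ℝ) 1)ᶜ = 0) {f : ℂ → ℂ}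
    (hfi : Integrable (fun t : ℝ => f t) μ) {z : ℂ} (hz : z ∈ ball (0:ℂ) 1) :
    Integrable (fun t : ℝ => f (t : ℂ) / (1 - (t : ℂ) * z)) μ := by
  rw [mem_ball_zero_iff] at hz
  refine Integrable.mono' (hfi.norm.const_mul (1 - ‖z‖)⁻¹) ?_ ?_
  · exact hfi.1.mul (Measurable.aestronglyMeasurable (by fun_prop))
  · filter_upwards [ae_Ico hsupp] with t ht
    have := one_sub_lower' ht le_rfl hz
    rw [norm_div, div_eq_inv_mul]
    have : 0 < 1 - ‖z‖ := by linarith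
    gcongr

lemma Imu_hasDerivAt {μ : Measure ℝ} (hsupp : μ (Ico (0 : ℝ) 1)ᶜ = 0) {f : ℂ → ℂ}
    (hfi : Integrable (fun t : ℝ => f t) μ) {z : ℂ} (hz : z ∈ ball (0:ℂ) 1) :
    Integrable (fun t : ℝ => f (t : ℂ) * t / (1 - (t : ℂ) * z) ^ 2) μ ∧
    HasDerivAt (Imu μ f) (∫ t : ℝ, f (t : ℂ) * t / (1 - (t : ℂ) * z) ^ 2 ∂μ) z := by
  have hz' := hz
  rw [mem_ball_zero_iff] at hz'
  set R := (1 + ‖z‖) / 2 with hR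
  have hR1 : R < 1 := by linarith
  have hRp : 0 < 1 - R := by linarith
  refine hasDerivAt_integral_of_dominated_loc_of_deriv_le (s := ball 0 R)
    (F := fun z (t : ℝ) => f (t : ℂ) / (1 - (t : ℂ) * z))
    (F' := fun z (t : ℝ) => f (t : ℂ) * t / (1 - (t : ℂ) * z) ^ 2)
    (bound := fun t : ℝ => ((1 - R) ^ 2)⁻¹ * ‖f t‖) ?_ ?_ ?_ ?_ ?_ ?_ ?_
  · apply isOpen_ball.mem_nhds
    rw [mem_ball_zero_iff]; linarith
  · exact Eventually.of_forall fun x => hfi.1.mul (Measurable.aestronglyMeasurable (by fun_prop))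
  · exact Imu_integrable hsupp hfi hz
  · exact (hfi.1.mul (Measurable.aestronglyMeasurable (by fun_prop))).mul (Measurable.aestronglyMeasurable (by fun_prop))
  · filter_upwards [ae_Ico hsupp] with t ht x hx
    rw [mem_ball_zero_iff] at hx
    have h1 := one_sub_lower' ht hx.le hR1
    rw [norm_div, norm_mul, norm_pow, Complex.norm_real, Real.norm_of_nonneg ht.1, div_eq_inv_mul]
    have h2 : ‖f t‖ * t ≤ ‖f t‖ := mul_le_of_le_one_right (norm_nonneg _) ht.2.le
    have := ht.1
    gcongr
  · exact hfi.norm.const_mul _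
  · filter_upwards [ae_Ico hsupp] with t ht x hx
    rw [mem_ball_zero_iff] at hx
    have h1 := one_sub_lower' ht hx.le hR1
    have hne : 1 - (t:ℂ) * x ≠ 0 := by
      rw [← norm_pos_iff]; linarith
    have h2 : HasDerivAt (fun x : ℂ => 1 - (t:ℂ) * x) (-(t:ℂ)) x := by
      simpa using ((hasDerivAt_id x).const_mul (t:ℂ)).const_sub 1
    have h3 := (hasDerivAt_const x (f t)).div h2 hne
    exact h3.congr_deriv (by ring)

lemma carleson_compare {μ : Measure ℝ} [IsFiniteMeasure μ] (hsupp : μ (Ico (0 : ℝ) 1)ᶜ = 0) {C : ℝ}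
    (hC : 0 < C) (hcar : ∀ t ∈ Ico (0 : ℝ) 1, (μ (Ico t 1)).toReal ≤ C * (1 - t)) (ψ : ℝ → ℝ≥0∞)
    (hψm : Measurable ψ) (hψ : AntitoneOn ψ (Ioi 0)) :
    ∫⁻ t, ψ (1 - t) ∂μ ≤ ENNReal.ofReal C * ∫⁻ u in Ioi (0:ℝ), ψ u := by
  have key := aux_compare μ (ENNReal.ofReal C • volume) (fun t => 1 - t) (by fun_prop) ?_ ?_ ?_ ψ hψm hψ
  · rwa [Measure.restrict_smul, lintegral_smul_measure] at key
  · filter_upwards [ae_Ico hsupp] with t ht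
    linarith [ht.2]
  · filter_upwards [ae_Ico hsupp] with t ht
    linarith [ht.1]
  · intro b hb _
    set t0 := max (1 - b) 0 with ht0
    have h1 : μ {t | 1 - t ≤ b} ≤ μ (Ico t0 1) := by
      apply measure_mono_ae
      filter_upwards [ae_Ico hsupp] with t ht htb
      have htb' : 1 - t ≤ b := htb
      exact ⟨max_le (by linarith) ht.1, ht.2⟩
    have h2 := hcar t0 ⟨le_max_right _ _, max_lt (by linarith) one_pos⟩
    refine h1.trans ?_
    rw [Measure.smul_apply, Real.volume_Ioo, smul_eq_mul, ← ENNReal.ofReal_mul hC.le, sub_zero]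
    rw [← ENNReal.ofReal_toReal (measure_ne_top μ (Ico t0 1))]
    apply ENNReal.ofReal_le_ofReal
    refine h2.trans ?_
    have := le_max_left (1 - b) 0
    gcongr
    linarith

lemma inv_sq_integral {a v : ℝ} (ha : 0 < a) (hv : 0 < v) :
    ∫⁻ u in Ioo 0 v, ENNReal.ofReal (((u + a) ^ 2)⁻¹) = ENNReal.ofReal (v / (a * (a + v))) := by
  have hc : ContinuousOn (fun u : ℝ => ((u + a) ^ 2)⁻¹) (uIcc 0 v) := by
    rw [uIcc_of_le hv.le]
    apply ContinuousOn.inv₀ (by fun_prop)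
    intro x hx
    have := hx.1
    positivity
  rw [← ofReal_integral_eq_lintegral_ofReal]
  · rw [← integral_Ioc_eq_integral_Ioo, ← intervalIntegral.integral_of_le hv.le,
      intervalIntegral.integral_eq_sub_of_hasDerivAt (f := fun u => -(u + a)⁻¹) _ hc.intervalIntegrable]
    · congr 1
      field_simp
      ring
    · intro x hx
      rw [uIcc_of_le hv.le] at hx
      have := hx.1
      have h := (((hasDerivAt_id x).add_const a).inv (by simp; positivity)).neg
      exact h.congr_deriv (by simp [neg_div])
  · exact (hc.intervalIntegrable.1).mono_set Ioo_subset_Ioc_self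
  · exact Eventually.of_forall fun x => by simp only [Pi.zero_apply]; positivity

lemma schurT_eq (h : ℝ → ℝ≥0∞) (hm : Measurable h) {a : ℝ} (ha : 0 < a) :
    ∫⁻ u in Ioi (0:ℝ), (∫⁻ v in Ioi u, h v) * ENNReal.ofReal (((u + a) ^ 2)⁻¹) = schurT h a := by
  set D : Set (ℝ × ℝ) := {q | q.1 < q.2} with hD
  have hDm : MeasurableSet D := measurableSet_lt (by fun_prop) (by fun_prop)
  calc _ = ∫⁻ u in Ioi (0:ℝ), ∫⁻ v in Ioi (0:ℝ), D.indicator 1 (u, v) * h v * ENNReal.ofReal (((u + a) ^ 2)⁻¹) := by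
        apply setLIntegral_congr_fun measurableSet_Ioi
        intro u hu
        simp only
        rw [lintegral_mul_const' _ _ ENNReal.ofReal_ne_top]
        congr 1
        rw [← lintegral_indicator measurableSet_Ioi, ← lintegral_indicator measurableSet_Ioi]
        apply lintegral_congr
        intro v
        by_cases hv : u < v
        · have hv0 : v ∈ Ioi (0:ℝ) := lt_trans hu hv
          have hD' : (u, v) ∈ D := hv
          have hv' : v ∈ Ioi u := hv
          simp [indicator_of_mem hv0, indicator_of_mem hv', indicator_of_mem hD']
        · have hD' : (u, v) ∉ D := hv
          have hv' : v ∉ Ioi u := hv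
          rw [indicator_of_notMem hv']
          by_cases hv0 : v ∈ Ioi (0:ℝ)
          · simp [indicator_of_mem hv0, indicator_of_notMem hD']
          · simp [indicator_of_notMem hv0]
    _ = ∫⁻ v in Ioi (0:ℝ), ∫⁻ u in Ioi (0:ℝ), D.indicator 1 (u, v) * h v * ENNReal.ofReal (((u + a) ^ 2)⁻¹) := by
        rw [lintegral_lintegral_swap]
        apply Measurable.aemeasurable
        exact ((measurable_one.indicator hDm).mul (by fun_prop)).mul (by fun_prop)
    _ = _ := by
        rw [schurT]
        apply setLIntegral_congr_fun measurableSet_Ioi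
        intro v hv
        simp only
        rw [← inv_sq_integral ha hv, ← lintegral_mul_const _ (by fun_prop),
          ← lintegral_indicator measurableSet_Ioi, ← lintegral_indicator measurableSet_Ioo]
        apply lintegral_congr
        intro u
        by_cases hu : u ∈ Ioi (0:ℝ)
        · rw [indicator_of_mem hu]
          by_cases huv : u < v
          · have hD' : (u, v) ∈ D := huv
            have hv' : u ∈ Ioo 0 v := ⟨hu, huv⟩
            rw [indicator_of_mem hD', indicator_of_mem hv']
            simp [mul_comm]
          · have hD' : (u, v) ∉ D := huv
            have hv' : u ∉ Ioo 0 v := fun h => huv h.2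
            rw [indicator_of_notMem hD', indicator_of_notMem hv']
            simp
        · have hv' : u ∉ Ioo 0 v := fun h => hu h.1
          rw [indicator_of_notMem hu, indicator_of_notMem hv']

lemma schurT_antitone (h : ℝ → ℝ≥0∞) : AntitoneOn (schurT h) (Ioi 0) := by
  intro a ha b hb hab
  rw [mem_Ioi] at ha hb
  apply setLIntegral_mono' measurableSet_Ioi
  intro v hv
  rw [mem_Ioi] at hv
  gcongr

lemma schurT_measurable (h : ℝ → ℝ≥0∞) (hm : Measurable h) : Measurable (schurT h) := by
  unfold schurT
  apply Measurable.lintegral_prod_right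
  fun_prop


lemma bergman_pow {p α : ℝ} (hp : 1 < p) (hα : -1 < α) (F : ℂ → ℂ) :
    bergmanNorm p α F ^ p = ENNReal.ofReal ((α + 1) / Real.pi) *
      ∫⁻ z in ball (0:ℂ) 1, ENNReal.ofReal ((1 - ‖z‖ ^ 2) ^ α) * ‖F z‖ₑ ^ p := by
  have hp0 : p ≠ 0 := by linarith
  rw [bergmanNorm, ← ENNReal.rpow_mul, one_div_mul_cancel hp0, ENNReal.rpow_one, dA,
    Measure.restrict_smul, lintegral_smul_measure, smul_eq_mul, ← mul_assoc, div_eq_mul_inv,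
    ENNReal.ofReal_mul (by linarith), ENNReal.ofReal_inv_of_pos Real.pi_pos]
  congr 1
  apply setLIntegral_congr_fun measurableSet_ball
  intro z hz
  rw [mem_ball_zero_iff] at hz
  have h0 := norm_nonneg z
  have : 0 ≤ 1 - ‖z‖ ^ 2 := by nlinarith
  simp only
  rw [ENNReal.ofReal_mul (by positivity), ← ENNReal.ofReal_rpow_of_nonneg (norm_nonneg _) (by linarith),
    ofReal_norm]

lemma bergman_pow' {p α : ℝ} (hp : 1 < p) (hα : -1 < α) (F : ℂ → ℂ) :
    ∫⁻ z in ball (0:ℂ) 1, ENNReal.ofReal ((1 - ‖z‖ ^ 2) ^ α) * ‖F z‖ₑ ^ p =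
    ENNReal.ofReal (Real.pi / (α + 1)) * bergmanNorm p α F ^ p := by
  have h1 : 0 < α + 1 := by linarith
  have := Real.pi_pos
  rw [bergman_pow hp hα, ← mul_assoc, ← ENNReal.ofReal_mul (by positivity)]
  have : Real.pi / (α + 1) * ((α + 1) / Real.pi) = 1 := by field_simp
  rw [this, ENNReal.ofReal_one, one_mul]

lemma bergman_dA {p α : ℝ} (hp : 1 < p) (hα : -1 < α) (F : ℂ → ℂ) :
    bergmanNorm p α F ^ p = ENNReal.ofReal (α + 1) *
      ∫⁻ z in ball (0:ℂ) 1, ENNReal.ofReal ((1 - ‖z‖ ^ 2) ^ α) * ‖F z‖ₑ ^ p ∂dA := by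
  rw [bergman_pow hp hα, dA,
    Measure.restrict_smul, lintegral_smul_measure, smul_eq_mul, ← mul_assoc, div_eq_mul_inv,
    ENNReal.ofReal_mul (by linarith), ENNReal.ofReal_inv_of_pos Real.pi_pos]

/-- The majorant on the half line attached to an analytic function. -/
noncomputable def hmaj (f : ℂ → ℂ) (v : ℝ) : ℝ≥0∞ :=
  (Ioo (0:ℝ) 1).indicator (fun v => ‖deriv f ((1 - v : ℝ) : ℂ)‖ₑ) v +
    (Ico (1:ℝ) 2).indicator (fun _ => ‖f 0‖ₑ) v

lemma hmaj_measurable (f : ℂ → ℂ) : Measurable (hmaj f) := by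
  have := measurable_deriv f
  exact (Measurable.indicator (by fun_prop) measurableSet_Ioo).add
    (Measurable.indicator (by fun_prop) measurableSet_Ico)

lemma f_le_hmaj {f : ℂ → ℂ} (hf : DifferentiableOn ℂ f (ball (0:ℂ) 1)) {u : ℝ} (hu : 0 < u)
    (hu1 : u ≤ 1) : ‖f ((1 - u : ℝ) : ℂ)‖ₑ ≤ ∫⁻ v in Ioi u, hmaj f v := by
  have hmem : ∀ v ∈ Icc u 1, ((1 - v : ℝ) : ℂ) ∈ ball (0:ℂ) 1 := by
    intro v hv
    rw [mem_ball_zero_iff, Complex.norm_real, Real.norm_of_nonneg (by linarith [hv.2])]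
    linarith [hv.1]
  have hd : DifferentiableOn ℂ (deriv f) (ball (0:ℂ) 1) := hf.deriv isOpen_ball
  have hcont : ContinuousOn (fun v : ℝ => -deriv f ((1 - v : ℝ) : ℂ)) (uIcc u 1) := by
    rw [uIcc_of_le hu1]
    exact (hd.continuousOn.comp (by fun_prop) hmem).neg
  have ftc : ∫ v in u..1, -deriv f ((1 - v : ℝ) : ℂ) = f ((1 - 1 : ℝ) : ℂ) - f ((1 - u : ℝ) : ℂ) := by
    apply intervalIntegral.integral_eq_sub_of_hasDerivAt (f := fun v : ℝ => f ((1 - v : ℝ) : ℂ))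
    · intro v hv
      rw [uIcc_of_le hu1] at hv
      have h1 : HasDerivAt f (deriv f ((1 - v : ℝ) : ℂ)) ((1 - v : ℝ) : ℂ) :=
        (hf.differentiableAt (isOpen_ball.mem_nhds (hmem v hv))).hasDerivAt
      have h2 : HasDerivAt (fun v : ℝ => ((1 - v : ℝ) : ℂ)) ((-1 : ℝ) : ℂ) v :=
        ((hasDerivAt_id v).const_sub 1).ofReal_comp
      have h3 := HasDerivAt.comp v h1 h2
      exact h3.congr_deriv (by simp)
    · exact hcont.intervalIntegrable
  have e : f ((1 - u : ℝ) : ℂ) = f 0 - ∫ v in u..1, -deriv f ((1 - v : ℝ) : ℂ) := by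
    rw [ftc]; simp
  have hm := measurable_deriv f
  calc ‖f ((1 - u : ℝ) : ℂ)‖ₑ ≤ ‖f 0‖ₑ + ‖∫ v in u..1, -deriv f ((1 - v : ℝ) : ℂ)‖ₑ := by
        rw [e]; exact enorm_sub_le
    _ ≤ ‖f 0‖ₑ + ∫⁻ v in Ioo u 1, ‖deriv f ((1 - v : ℝ) : ℂ)‖ₑ := by
        gcongr
        rw [intervalIntegral.integral_of_le hu1, integral_Ioc_eq_integral_Ioo]
        refine (enorm_integral_le_lintegral_enorm _).trans ?_
        simp only [enorm_neg]; exact le_rfl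
    _ ≤ ∫⁻ v in Ioi u, hmaj f v := by
        simp only [hmaj]
        rw [lintegral_add_left (Measurable.indicator (by fun_prop) measurableSet_Ioo), add_comm]
        rw [lintegral_indicator measurableSet_Ioo, lintegral_indicator measurableSet_Ico,
          Measure.restrict_restrict measurableSet_Ioo, Measure.restrict_restrict measurableSet_Ico]
        apply add_le_add
        · apply lintegral_mono_set
          intro v hv
          exact ⟨⟨hu.trans hv.1, hv.2⟩, hv.1⟩
        · rw [lintegral_const, Measure.restrict_apply_univ]
          have : Ioo (1:ℝ) 2 ⊆ Ico 1 2 ∩ Ioi u := fun v hv => ⟨⟨hv.1.le, hv.2⟩, hu1.trans_lt hv.1⟩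
          have h2 := measure_mono (μ := volume) this
          rw [Real.volume_Ioo] at h2
          norm_num at h2
          calc ‖f 0‖ₑ = ‖f 0‖ₑ * 1 := (mul_one _).symm
            _ ≤ _ := mul_le_mul_right h2 _

lemma hmaj_int {f : ℂ → ℂ} (hf : DifferentiableOn ℂ f (ball (0:ℂ) 1)) {p α : ℝ} (hp : 1 < p)
    (hα : -1 < α) :
    ∫⁻ v in Ioi (0:ℝ), ENNReal.ofReal (v ^ (α + 1)) * hmaj f v ^ p ≤
      ENNReal.ofReal (4 * 3 ^ |α| * (Real.pi / (α + 1)) + 2 ^ (α + 1)) * dirichletNorm p α f ^ p := by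
  have hd : DifferentiableOn ℂ (deriv f) (ball (0:ℂ) 1) := hf.deriv isOpen_ball
  have hm := measurable_deriv f
  have hp0 : 0 < p := by linarith
  have hα1 : 0 < α + 1 := by linarith
  have hpi := Real.pi_pos
  calc _ ≤ ∫⁻ v : ℝ, ((Ioo (0:ℝ) 1).indicator (fun v : ℝ => ENNReal.ofReal (v ^ (α + 1)) * ‖deriv f ((1 - v : ℝ) : ℂ)‖ₑ ^ p) v
          + (Ico (1:ℝ) 2).indicator (fun _ : ℝ => ENNReal.ofReal (2 ^ (α + 1)) * ‖f 0‖ₑ ^ p) v) := by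
        rw [← lintegral_indicator measurableSet_Ioi]
        apply lintegral_mono
        intro v
        by_cases h0 : v ∈ Ioi (0:ℝ)
        · simp only [indicator_of_mem h0, hmaj]
          rw [mem_Ioi] at h0
          by_cases h1 : v < 1
          · have a1 : v ∈ Ioo (0:ℝ) 1 := ⟨h0, h1⟩
            have a2 : v ∉ Ico (1:ℝ) 2 := fun h => absurd h.1 (not_le.2 h1)
            rw [indicator_of_mem a1, indicator_of_mem a1, indicator_of_notMem a2, indicator_of_notMem a2,
              add_zero, add_zero]
          · have a1 : v ∉ Ioo (0:ℝ) 1 := fun h => h1 h.2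
            rw [indicator_of_notMem a1, indicator_of_notMem a1, zero_add, zero_add]
            by_cases h2 : v < 2
            · have a2 : v ∈ Ico (1:ℝ) 2 := ⟨not_lt.1 h1, h2⟩
              rw [indicator_of_mem a2, indicator_of_mem a2]
              gcongr
            · have a2 : v ∉ Ico (1:ℝ) 2 := fun h => h2 h.2
              rw [indicator_of_notMem a2, indicator_of_notMem a2, ENNReal.zero_rpow_of_pos hp0, mul_zero]
        · rw [indicator_of_notMem h0]; exact zero_le
    _ = (∫⁻ v in Ioo (0:ℝ) 1, ENNReal.ofReal (v ^ (α + 1)) * ‖deriv f ((1 - v : ℝ) : ℂ)‖ₑ ^ p) +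
          ENNReal.ofReal (2 ^ (α + 1)) * ‖f 0‖ₑ ^ p := by
        rw [lintegral_add_left (Measurable.indicator (by fun_prop) measurableSet_Ioo),
          lintegral_indicator measurableSet_Ioo, lintegral_indicator measurableSet_Ico, lintegral_const,
          Measure.restrict_apply_univ, Real.volume_Ico]
        norm_num
    _ ≤ ENNReal.ofReal (4 * 3 ^ |α|) * (ENNReal.ofReal (Real.pi / (α + 1)) * bergmanNorm p α (deriv f) ^ p) +
          ENNReal.ofReal (2 ^ (α + 1)) * ‖f 0‖ₑ ^ p := by
        rw [← bergman_pow' hp hα]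
        exact add_le_add_left (line_embed hm hp hd) _
    _ ≤ ENNReal.ofReal (4 * 3 ^ |α|) * (ENNReal.ofReal (Real.pi / (α + 1)) * dirichletNorm p α f ^ p) +
          ENNReal.ofReal (2 ^ (α + 1)) * dirichletNorm p α f ^ p := by
        have b1 : bergmanNorm p α (deriv f) ≤ dirichletNorm p α f := le_add_self
        have b2 : ‖f 0‖ₑ ≤ dirichletNorm p α f := by
          rw [← ofReal_norm]; exact le_self_add
        gcongr
    _ = _ := by
        rw [← mul_assoc, ← add_mul, ← ENNReal.ofReal_mul (by positivity), ← ENNReal.ofReal_add (by positivity) (by positivity)]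

lemma kernel_mu {μ : Measure ℝ} [IsFiniteMeasure μ] (hsupp : μ (Ico (0 : ℝ) 1)ᶜ = 0) {C : ℝ}
    (hC : 0 < C) (hcar : ∀ t ∈ Ico (0 : ℝ) 1, (μ (Ico t 1)).toReal ≤ C * (1 - t))
    {f : ℂ → ℂ} (hf : DifferentiableOn ℂ f (ball (0:ℂ) 1)) {a : ℝ} (ha : 0 < a) :
    ∫⁻ t : ℝ, ‖f (t:ℂ)‖ₑ * ENNReal.ofReal ((((1 - t) + a) ^ 2)⁻¹) ∂μ ≤
      ENNReal.ofReal C * schurT (hmaj f) a := by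
  have hanti : Antitone (fun u : ℝ => ∫⁻ v in Ioi u, hmaj f v) := by
    intro u w huw
    exact lintegral_mono_set (Ioi_subset_Ioi huw)
  have hk : AntitoneOn (fun u : ℝ => (∫⁻ v in Ioi u, hmaj f v) * ENNReal.ofReal (((u + a) ^ 2)⁻¹)) (Ioi 0) := by
    intro u hu w hw huw
    rw [mem_Ioi] at hu hw
    refine mul_le_mul' (hanti huw) (ENNReal.ofReal_le_ofReal ?_)
    gcongr
  have := carleson_compare hsupp hC hcar
    (fun u : ℝ => (∫⁻ v in Ioi u, hmaj f v) * ENNReal.ofReal (((u + a) ^ 2)⁻¹))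
    (hanti.measurable.mul (by fun_prop)) hk
  rw [schurT_eq _ (hmaj_measurable f) ha] at this
  refine le_trans (lintegral_mono_ae ?_) this
  filter_upwards [ae_Ico hsupp] with t ht
  have h1 := f_le_hmaj hf (u := 1 - t) (by linarith [ht.2]) (by linarith [ht.1])
  rw [sub_sub_cancel] at h1
  exact mul_le_mul_left h1 _

lemma schurT_one {p α : ℝ} (hp : 1 < p) (hα : -1 < α) (h : ℝ → ℝ≥0∞) :
    schurT h 1 ^ p ≤ ENNReal.ofReal (α + 2) * ∫⁻ a in Ioi (0:ℝ), ENNReal.ofReal (a ^ (α + 1)) * schurT h a ^ p := by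
  have h1 : ENNReal.ofReal (1 / (α + 2)) * schurT h 1 ^ p ≤ ∫⁻ a in Ioi (0:ℝ), ENNReal.ofReal (a ^ (α + 1)) * schurT h a ^ p := by
    have e := lint_rpow_Ioo (r := α + 1) (b := 1) (by linarith) one_pos
    rw [Real.one_rpow, show α + 1 + 1 = α + 2 by ring] at e
    rw [← e, ← lintegral_mul_const _ (by fun_prop)]
    refine le_trans ?_ (lintegral_mono_set (Ioo_subset_Ioi_self : Ioo (0:ℝ) 1 ⊆ Ioi 0))
    apply setLIntegral_mono' measurableSet_Ioo
    intro a ha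
    refine mul_le_mul_right (ENNReal.rpow_le_rpow (schurT_antitone h ha.1 (mem_Ioi.2 one_pos) ha.2.le) (by linarith)) _
  calc schurT h 1 ^ p = ENNReal.ofReal (α + 2) * (ENNReal.ofReal (1 / (α + 2)) * schurT h 1 ^ p) := by
        rw [← mul_assoc, ← ENNReal.ofReal_mul (by linarith), mul_one_div_cancel (by linarith), ENNReal.ofReal_one, one_mul]
    _ ≤ _ := mul_le_mul_right h1 _


lemma root_bound {p K : ℝ} (hp : 1 < p) (hK : 0 ≤ K) {x y : ℝ≥0∞} (h : x ^ p ≤ ENNReal.ofReal K * y ^ p) :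
    x ≤ ENNReal.ofReal (K ^ (1 / p)) * y := by
  have hp0 : 0 < p := by linarith
  have h1 := ENNReal.rpow_le_rpow h (z := 1 / p) (by positivity)
  rwa [ENNReal.mul_rpow_of_nonneg _ _ (by positivity), ← ENNReal.rpow_mul, ← ENNReal.rpow_mul,
    mul_one_div_cancel hp0.ne', ENNReal.rpow_one, ENNReal.rpow_one,
    ENNReal.ofReal_rpow_of_nonneg hK (by positivity)] at h1

lemma forward_dir (p α : ℝ) (hp : 1 < p)
    (hα1 : p - 2 < α) (hα2 : α ≤ p - 1)
    (μ : Measure ℝ) [IsFiniteMeasure μ] (hsupp : μ (Ico (0 : ℝ) 1)ᶜ = 0)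
    {C : ℝ} (hC : 0 < C) (hcar : ∀ t ∈ Ico (0 : ℝ) 1, (μ (Ico t 1)).toReal ≤ C * (1 - t)) :
    (∃ C > 0, ∀ f : ℂ → ℂ, DifferentiableOn ℂ f (ball (0 : ℂ) 1) → dirichletNorm p α f < ⊤ →
      (∀ z ∈ ball (0 : ℂ) 1, Integrable (fun t : ℝ => f (t : ℂ) / (1 - (t : ℂ) * z)) μ) ∧
      DifferentiableOn ℂ (Imu μ f) (ball (0 : ℂ) 1) ∧
      dirichletNorm p α (Imu μ f) ≤ ENNReal.ofReal C * dirichletNorm p α f) := by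
  have hα : -1 < α := by linarith
  have hα' : 0 < α + 1 := by linarith
  have hαb : 0 < α + 2 := by linarith
  have hp0 : 0 < p := by linarith
  have hpi := Real.pi_pos
  obtain ⟨K1, hK1, H1⟩ := disc_compare α hα
  obtain ⟨K2, hK2, H2⟩ := schur_bound hp hα1 hα2
  set K3 : ℝ := 4 * 3 ^ |α| * (Real.pi / (α + 1)) + 2 ^ (α + 1) with hK3
  have hK3p : 0 < K3 := by positivity
  set A : ℝ := ((α + 2) * (K2 * K3)) ^ (1 / p) with hA
  set B : ℝ := ((α + 1) * (K1 * ((9 * C) ^ p * (K2 * K3)))) ^ (1 / p) with hB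
  have hAp : 0 < A := by positivity
  have hBp : 0 < B := by positivity
  refine ⟨4 * (C * A) + B, by positivity, ?_⟩
  intro f hf hfin
  set N := dirichletNorm p α f with hN
  have hS : ∫⁻ a in Ioi (0:ℝ), ENNReal.ofReal (a ^ (α + 1)) * schurT (hmaj f) a ^ p ≤ ENNReal.ofReal (K2 * K3) * N ^ p := by
    refine (H2 _ (hmaj_measurable f)).trans ?_
    rw [ENNReal.ofReal_mul hK2.le, mul_assoc]
    exact mul_le_mul_right (hmaj_int hf hp hα) _
  have h1 : schurT (hmaj f) 1 ≤ ENNReal.ofReal A * N := by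
    apply root_bound hp (by positivity)
    refine (schurT_one hp hα _).trans ?_
    rw [ENNReal.ofReal_mul hαb.le, mul_assoc]
    exact mul_le_mul_right hS _
  have hfint : ∫⁻ t : ℝ, ‖f (t:ℂ)‖ₑ ∂μ ≤ ENNReal.ofReal (4 * (C * A)) * N := by
    calc ∫⁻ t : ℝ, ‖f (t:ℂ)‖ₑ ∂μ ≤ ∫⁻ t : ℝ, ENNReal.ofReal 4 * (‖f (t:ℂ)‖ₑ * ENNReal.ofReal ((((1 - t) + 1) ^ 2)⁻¹)) ∂μ := by
          apply lintegral_mono_ae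
          filter_upwards [ae_Ico hsupp] with t ht
          have h4 : (1:ℝ) ≤ 4 * (((1 - t) + 1) ^ 2)⁻¹ := by
            have := ht.1
            have := ht.2
            rw [← div_eq_mul_inv, le_div_iff₀ (by nlinarith)]
            nlinarith
          calc ‖f (t:ℂ)‖ₑ = ‖f (t:ℂ)‖ₑ * ENNReal.ofReal 1 := by rw [ENNReal.ofReal_one, mul_one]
            _ ≤ ‖f (t:ℂ)‖ₑ * ENNReal.ofReal (4 * (((1 - t) + 1) ^ 2)⁻¹) :=
                mul_le_mul_right (ENNReal.ofReal_le_ofReal h4) _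
            _ = _ := by rw [ENNReal.ofReal_mul (by norm_num)]; ring
      _ = ENNReal.ofReal 4 * ∫⁻ t : ℝ, ‖f (t:ℂ)‖ₑ * ENNReal.ofReal ((((1 - t) + 1) ^ 2)⁻¹) ∂μ :=
          lintegral_const_mul' _ _ ENNReal.ofReal_ne_top
      _ ≤ ENNReal.ofReal 4 * (ENNReal.ofReal C * (ENNReal.ofReal A * N)) := by
          refine mul_le_mul_right ((kernel_mu hsupp hC hcar hf one_pos).trans (mul_le_mul_right h1 _)) _
      _ = _ := by
          rw [ENNReal.ofReal_mul (by norm_num), ENNReal.ofReal_mul hC.le]; ring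
  have hfi : Integrable (fun t : ℝ => f t) μ := by
    refine ⟨f_aesm hsupp hf, ?_⟩
    exact lt_of_le_of_lt hfint (ENNReal.mul_lt_top ENNReal.ofReal_lt_top hfin)
  refine ⟨fun z hz => Imu_integrable hsupp hfi hz, ?_, ?_⟩
  · intro z hz
    exact (Imu_hasDerivAt hsupp hfi hz).2.differentiableAt.differentiableWithinAt
  · have hder : ∀ z ∈ ball (0:ℂ) 1, ‖deriv (Imu μ f) z‖ₑ ≤ ENNReal.ofReal (9 * C) * schurT (hmaj f) ‖1 - z‖ := by
      intro z hz
      have hpos : 0 < ‖1 - z‖ := by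
        rw [norm_pos_iff, sub_ne_zero]
        rintro rfl
        simp at hz
      rw [(Imu_hasDerivAt hsupp hfi hz).2.deriv]
      calc _ ≤ ∫⁻ t : ℝ, ‖f (t : ℂ) * t / (1 - (t : ℂ) * z) ^ 2‖ₑ ∂μ := enorm_integral_le_lintegral_enorm _
        _ ≤ ∫⁻ t : ℝ, ENNReal.ofReal 9 * (‖f (t:ℂ)‖ₑ * ENNReal.ofReal ((((1 - t) + ‖1 - z‖) ^ 2)⁻¹)) ∂μ := by
          apply lintegral_mono_ae
          filter_upwards [ae_Ico hsupp] with t ht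
          have h5 := one_sub_lower ht hz
          have h6 : 0 < (1 - t) + ‖1 - z‖ := by linarith [ht.2]
          rw [← ofReal_norm, ← ofReal_norm, ← ENNReal.ofReal_mul (norm_nonneg _), ← ENNReal.ofReal_mul (by norm_num)]
          apply ENNReal.ofReal_le_ofReal
          rw [norm_div, norm_mul, norm_pow, Complex.norm_real, Real.norm_of_nonneg ht.1]
          calc ‖f t‖ * t / ‖1 - (t:ℂ) * z‖ ^ 2 ≤ ‖f t‖ * 1 / (((1 - t) + ‖1 - z‖) / 3) ^ 2 := by
                have := ht.2.le
                gcongr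
            _ = _ := by field_simp; ring
        _ = ENNReal.ofReal 9 * ∫⁻ t : ℝ, ‖f (t:ℂ)‖ₑ * ENNReal.ofReal ((((1 - t) + ‖1 - z‖) ^ 2)⁻¹) ∂μ :=
          lintegral_const_mul' _ _ ENNReal.ofReal_ne_top
        _ ≤ ENNReal.ofReal 9 * (ENNReal.ofReal C * schurT (hmaj f) ‖1 - z‖) :=
          mul_le_mul_right (kernel_mu hsupp hC hcar hf hpos) _
        _ = _ := by rw [ENNReal.ofReal_mul (by norm_num), mul_assoc]
    have hberg : bergmanNorm p α (deriv (Imu μ f)) ≤ ENNReal.ofReal B * N := by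
      apply root_bound hp (by positivity)
      rw [bergman_dA hp hα, ENNReal.ofReal_mul hα'.le, mul_assoc]
      refine mul_le_mul_right ?_ _
      calc _ ≤ ∫⁻ z in ball (0:ℂ) 1, ENNReal.ofReal ((1 - ‖z‖ ^ 2) ^ α) *
              (fun a => (ENNReal.ofReal (9 * C) * schurT (hmaj f) a) ^ p) ‖1 - z‖ ∂dA := by
            apply setLIntegral_mono' measurableSet_ball
            intro z hz
            exact mul_le_mul_right (ENNReal.rpow_le_rpow (hder z hz) hp0.le) _
        _ ≤ ENNReal.ofReal K1 * ∫⁻ a in Ioi (0:ℝ), ENNReal.ofReal (a^(α+1)) * (ENNReal.ofReal (9 * C) * schurT (hmaj f) a) ^ p := by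
            apply H1
            · exact ((schurT_measurable _ (hmaj_measurable f)).const_mul _).pow_const _
            · intro a ha b hb hab
              exact ENNReal.rpow_le_rpow (mul_le_mul_right (schurT_antitone _ ha hb hab) _) hp0.le
        _ = ENNReal.ofReal K1 * (ENNReal.ofReal ((9 * C) ^ p) * ∫⁻ a in Ioi (0:ℝ), ENNReal.ofReal (a^(α+1)) * schurT (hmaj f) a ^ p) := by
            congr 1
            rw [← lintegral_const_mul' _ _ ENNReal.ofReal_ne_top]
            apply lintegral_congr
            intro a
            rw [ENNReal.mul_rpow_of_nonneg _ _ hp0.le, ENNReal.ofReal_rpow_of_nonneg (by positivity) hp0.le]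
            ring
        _ ≤ ENNReal.ofReal K1 * (ENNReal.ofReal ((9 * C) ^ p) * (ENNReal.ofReal (K2 * K3) * N ^ p)) :=
            mul_le_mul_right (mul_le_mul_right hS _) _
        _ = _ := by
            rw [ENNReal.ofReal_mul hK1.le, ENNReal.ofReal_mul (show 0 ≤ (9 * C) ^ p by positivity)]; ring
    have h0 : ‖Imu μ f 0‖ₑ ≤ ENNReal.ofReal (4 * (C * A)) * N := by
      refine le_trans ?_ hfint
      rw [Imu]
      refine (enorm_integral_le_lintegral_enorm _).trans ?_
      simp
    rw [dirichletNorm, ofReal_norm, ENNReal.ofReal_add (by positivity) hBp.le, add_mul]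
    exact add_le_add h0 hberg


lemma test_hasDeriv {a : ℝ} (ha : a ∈ Ico (0:ℝ) 1) {z : ℂ} (hz : z ∈ ball (0:ℂ) 1) :
    HasDerivAt (fun z : ℂ => 1 / (1 - (a:ℂ) * z)) ((a:ℂ) / (1 - (a:ℂ) * z) ^ 2) z := by
  have hne : 1 - (a:ℂ) * z ≠ 0 := by
    rw [← norm_pos_iff]
    have := one_sub_lower ha hz
    have := norm_nonneg (1 - z)
    linarith [ha.2]
  have h2 : HasDerivAt (fun x : ℂ => 1 - (a:ℂ) * x) (-(a:ℂ)) z := by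
    simpa using ((hasDerivAt_id z).const_mul (a:ℂ)).const_sub 1
  have h3 := (hasDerivAt_const z (1:ℂ)).div h2 hne
  exact h3.congr_deriv (by ring)

lemma test_norm {p α : ℝ} (hp : 1 < p) (hα1 : p - 2 < α) (hα2 : α ≤ p - 1) :
    ∃ L : ℝ, 0 < L ∧ ∀ a ∈ Ico (0:ℝ) 1,
      dirichletNorm p α (fun z : ℂ => 1 / (1 - (a:ℂ) * z)) ≤
        ENNReal.ofReal (L * (1 - a) ^ ((α + 2) / p - 2)) := by
  have hα : -1 < α := by linarith
  have hα' : 0 < α + 1 := by linarith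
  have hαb : 0 < α + 2 := by linarith
  have hp0 : 0 < p := by linarith
  obtain ⟨K1, hK1, H1⟩ := disc_compare α hα
  have hk : 0 < 2 * p - (α + 1) - 1 := by linarith
  set k : ℝ := 1 / (α + 1 + 1) + 1 / (2 * p - (α + 1) - 1) with hkdef
  have hkp : 0 < k := by positivity
  set M : ℝ := (α + 1) * (K1 * (9 ^ p * k)) with hM
  have hMp : 0 < M := by positivity
  refine ⟨1 + M ^ (1 / p), by positivity, ?_⟩
  intro a ha
  set v := 1 - a with hv
  have hvp : 0 < v := by linarith [ha.2]
  have hv1 : v ≤ 1 := by linarith [ha.1]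
  set ρ := (α + 2) / p - 2 with hρ
  have hρp : ρ * p = α + 1 + 1 - 2 * p := by rw [hρ]; field_simp; ring
  have hρ0 : ρ ≤ 0 := by
    rw [hρ, sub_nonpos, div_le_iff₀ hp0]; linarith
  have hvρ : 0 < v ^ ρ := by positivity
  have hb : bergmanNorm p α (deriv (fun z : ℂ => 1 / (1 - (a:ℂ) * z))) ≤
      ENNReal.ofReal (M ^ (1 / p)) * ENNReal.ofReal (v ^ ρ) := by
    apply root_bound hp hMp.le
    rw [bergman_dA hp hα, hM, ENNReal.ofReal_mul hα'.le, mul_assoc]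
    refine mul_le_mul_right ?_ _
    calc _ ≤ ∫⁻ z in ball (0:ℂ) 1, ENNReal.ofReal ((1 - ‖z‖ ^ 2) ^ α) *
              (fun x : ℝ => ENNReal.ofReal (9 ^ p * (x + v) ^ (-(2 * p)))) ‖1 - z‖ ∂dA := by
          apply setLIntegral_mono' measurableSet_ball
          intro z hz
          refine mul_le_mul_right ?_ _
          rw [(test_hasDeriv ha hz).deriv, ← ofReal_norm, ENNReal.ofReal_rpow_of_nonneg (norm_nonneg _) hp0.le]
          apply ENNReal.ofReal_le_ofReal
          have h5 := one_sub_lower ha hz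
          have h6 := norm_nonneg (1 - z)
          have h7 : 0 < ‖1 - z‖ + v := by linarith
          rw [show -(2 * p) = (-2) * p by ring, Real.rpow_mul h7.le, ← Real.mul_rpow (by norm_num) (by positivity)]
          apply Real.rpow_le_rpow (norm_nonneg _) _ hp0.le
          rw [norm_div, norm_pow, Complex.norm_real, Real.norm_of_nonneg ha.1, Real.rpow_neg h7.le, Real.rpow_two]
          calc a / ‖1 - (a:ℂ) * z‖ ^ 2 ≤ 1 / ((‖1 - z‖ + v) / 3) ^ 2 := by
                have := ha.2.le
                gcongr
                rw [add_comm]; exact h5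
            _ = _ := by field_simp; ring
      _ ≤ ENNReal.ofReal K1 * ∫⁻ x in Ioi (0:ℝ), ENNReal.ofReal (x^(α+1)) * ENNReal.ofReal (9 ^ p * (x + v) ^ (-(2 * p))) := by
          apply H1
          · fun_prop
          · intro x hx y hy hxy
            rw [mem_Ioi] at hx hy
            apply ENNReal.ofReal_le_ofReal
            refine mul_le_mul_of_nonneg_left ?_ (by positivity)
            apply Real.rpow_le_rpow_of_nonpos (by linarith) (by linarith) (by linarith)
      _ = ENNReal.ofReal K1 * (ENNReal.ofReal (9 ^ p) * ∫⁻ x in Ioi (0:ℝ), ENNReal.ofReal (x^(α+1) * (x + v) ^ (-(2 * p)))) := by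
          congr 1
          rw [← lintegral_const_mul' _ _ ENNReal.ofReal_ne_top]
          apply setLIntegral_congr_fun measurableSet_Ioi
          intro x hx
          rw [mem_Ioi] at hx
          simp only
          rw [← ENNReal.ofReal_mul (by positivity), ← ENNReal.ofReal_mul (by positivity)]
          congr 1; ring
      _ ≤ ENNReal.ofReal K1 * (ENNReal.ofReal (9 ^ p) * ENNReal.ofReal (k * v ^ (α + 1 + 1 - 2 * p))) :=
          mul_le_mul_right (mul_le_mul_right (lint_kernel (by linarith) (by linarith) (by linarith) hvp) _) _
      _ = _ := by
          rw [ENNReal.ofReal_mul hK1.le, ENNReal.ofReal_mul (show (0:ℝ) ≤ 9 ^ p by positivity), ENNReal.ofReal_mul hkp.le,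
            ENNReal.ofReal_rpow_of_nonneg hvρ.le hp0.le, ← Real.rpow_mul hvp.le, hρp]
          ring
  rw [dirichletNorm, add_mul, one_mul, ENNReal.ofReal_add (by positivity) (by positivity),
    ENNReal.ofReal_mul (by positivity)]
  refine add_le_add (ENNReal.ofReal_le_ofReal ?_) hb
  simp only [mul_zero, sub_zero, div_one, norm_one]
  exact Real.one_le_rpow_of_pos_of_le_one_of_nonpos hvp hv1 hρ0

lemma backward_dir (p α : ℝ) (hp : 1 < p)
    (hα1 : p - 2 < α) (hα2 : α ≤ p - 1)
    (μ : Measure ℝ) [IsFiniteMeasure μ] (hsupp : μ (Ico (0 : ℝ) 1)ᶜ = 0)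
    {C : ℝ} (hC : 0 < C) (H : ∀ f : ℂ → ℂ, DifferentiableOn ℂ f (ball (0 : ℂ) 1) → dirichletNorm p α f < ⊤ →
      (∀ z ∈ ball (0 : ℂ) 1, Integrable (fun t : ℝ => f (t : ℂ) / (1 - (t : ℂ) * z)) μ) ∧
      DifferentiableOn ℂ (Imu μ f) (ball (0 : ℂ) 1) ∧
      dirichletNorm p α (Imu μ f) ≤ ENNReal.ofReal C * dirichletNorm p α f) :
    ∃ C > 0, ∀ t ∈ Ico (0 : ℝ) 1, (μ (Ico t 1)).toReal ≤ C * (1 - t) := by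
  have hα : -1 < α := by linarith
  have hα' : 0 < α + 1 := by linarith
  have hαb : 0 < α + 2 := by linarith
  have hp0 : 0 < p := by linarith
  have hpi := Real.pi_pos
  obtain ⟨L, hL, HL⟩ := test_norm hp hα1 hα2
  set Q : ℝ := (2 * 3 ^ |α|) * (Real.pi / (α + 1)) with hQ
  have hQp : 0 < Q := by positivity
  have hm0 : 0 ≤ (μ univ).toReal := ENNReal.toReal_nonneg
  refine ⟨16 * (Q ^ (1 / p) * (C * L)) + 2 * (μ univ).toReal, by positivity, ?_⟩
  intro a ha
  have hvp : 0 < 1 - a := by linarith [ha.2]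
  have hmle : (μ (Ico a 1)).toReal ≤ (μ univ).toReal :=
    ENNReal.toReal_mono (measure_ne_top _ _) (measure_mono (subset_univ _))
  by_cases hhalf : a < 1 / 2
  · have h0 : 0 ≤ 16 * (Q ^ (1 / p) * (C * L)) := by positivity
    nlinarith
  push Not at hhalf
  set v := 1 - a with hv
  have hv1 : v ≤ 1 := by linarith
  have hav : ((1 - v : ℝ) : ℂ) = a := by rw [hv, sub_sub_cancel]
  set f : ℂ → ℂ := fun z : ℂ => 1 / (1 - (a:ℂ) * z) with hf
  have hfd : DifferentiableOn ℂ f (ball (0:ℂ) 1) := fun z hz =>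
    (test_hasDeriv ha hz).differentiableAt.differentiableWithinAt
  have hfN := HL a ha
  obtain ⟨Hi, Hd, Hn⟩ := H f hfd (lt_of_le_of_lt hfN ENNReal.ofReal_lt_top)
  have hfi : Integrable (fun t : ℝ => f t) μ := by
    simpa using Hi 0 (by simp)
  have hab : (a:ℂ) ∈ ball (0:ℂ) 1 := by
    rw [mem_ball_zero_iff, Complex.norm_real, Real.norm_of_nonneg ha.1]; exact ha.2
  obtain ⟨hI, hD⟩ := Imu_hasDerivAt hsupp hfi hab
  set ρ := (α + 2) / p - 2 with hρ
  have hup : ‖deriv (Imu μ f) a‖ₑ ≤ ENNReal.ofReal (Q ^ (1 / p)) * ENNReal.ofReal (C * L * v ^ (-2 : ℝ)) := by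
    apply root_bound hp hQp.le
    have h1 := point_eval (α := α) (measurable_deriv (Imu μ f)) hp (Hd.deriv isOpen_ball) hvp hv1
    rw [hav] at h1
    have h2 : bergmanNorm p α (deriv (Imu μ f)) ≤ ENNReal.ofReal (C * (L * v ^ ρ)) := by
      rw [ENNReal.ofReal_mul hC.le]
      exact (le_add_self.trans Hn).trans (mul_le_mul_right hfN _)
    have h3 : ENNReal.ofReal (v ^ (α + 2)) * ‖deriv (Imu μ f) a‖ₑ ^ p ≤
        ENNReal.ofReal Q * ENNReal.ofReal (C * (L * v ^ ρ)) ^ p := by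
      have hsub : ball (a:ℂ) (v / 2) ⊆ ball 0 1 := by
        have := ball_sub_unit hvp hv1
        rwa [hav] at this
      refine h1.trans ((mul_le_mul_right (lintegral_mono_set hsub) _).trans ?_)
      rw [bergman_pow' hp hα, ← mul_assoc, ← ENNReal.ofReal_mul (by positivity)]
      exact mul_le_mul_right (ENNReal.rpow_le_rpow h2 hp0.le) _
    have e1 : ENNReal.ofReal (v ^ (-(α + 2))) * ENNReal.ofReal (v ^ (α + 2)) = 1 := by
      rw [← ENNReal.ofReal_mul (by positivity), ← Real.rpow_add hvp, neg_add_cancel, Real.rpow_zero, ENNReal.ofReal_one]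
    calc ‖deriv (Imu μ f) a‖ₑ ^ p = ENNReal.ofReal (v ^ (-(α + 2))) * (ENNReal.ofReal (v ^ (α + 2)) * ‖deriv (Imu μ f) a‖ₑ ^ p) := by
          rw [← mul_assoc, e1, one_mul]
      _ ≤ ENNReal.ofReal (v ^ (-(α + 2))) * (ENNReal.ofReal Q * ENNReal.ofReal (C * (L * v ^ ρ)) ^ p) :=
          mul_le_mul_right h3 _
      _ = _ := by
          rw [mul_left_comm]
          congr 1
          rw [ENNReal.ofReal_rpow_of_nonneg (by positivity) hp0.le, ENNReal.ofReal_rpow_of_nonneg (by positivity) hp0.le,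
            ← ENNReal.ofReal_mul (by positivity)]
          congr 1
          have e2 : v ^ (-(α + 2)) = (v ^ (-((α + 2) / p))) ^ p := by
            rw [← Real.rpow_mul hvp.le]; congr 1; field_simp
          rw [e2, ← Real.mul_rpow (by positivity) (by positivity)]
          congr 1
          have e3 : (-2 : ℝ) = -((α + 2) / p) + ρ := by rw [hρ]; ring
          rw [e3, Real.rpow_add hvp]; ring
  have hup' : ‖deriv (Imu μ f) a‖ ≤ Q ^ (1 / p) * (C * L * v ^ (-2 : ℝ)) := by
    rw [← ENNReal.ofReal_mul (by positivity), ← ofReal_norm] at hup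
    exact (ENNReal.ofReal_le_ofReal_iff (by positivity)).1 hup
  rw [Real.rpow_neg hvp.le, Real.rpow_two] at hup'
  set r : ℝ → ℝ := fun t => t / (1 - a * t) ^ 3 with hr
  have hgr : ∀ t : ℝ, f (t : ℂ) * t / (1 - (t : ℂ) * a) ^ 2 = ((r t : ℝ) : ℂ) := by
    intro t
    simp only [hf, hr]
    push_cast
    rw [mul_comm (t:ℂ) (a:ℂ)]
    generalize 1 - (a:ℂ) * t = x
    rw [one_div_mul_eq_div, div_div]
    ring
  simp only [hgr] at hI hD
  rw [hD.deriv, integral_complex_ofReal, Complex.norm_real] at hup'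
  have hrI : Integrable r μ := by simpa using hI.re
  have hr0 : 0 ≤ᵐ[μ] r := by
    filter_upwards [ae_Ico hsupp] with t ht
    have : 0 ≤ 1 - a * t := by nlinarith [ht.1, ht.2, ha.1, ha.2]
    have := ht.1
    simp only [hr, Pi.zero_apply]
    positivity
  have hlow : (1 / (16 * v ^ 3)) * (μ (Ico a 1)).toReal ≤ ∫ t, r t ∂μ := by
    refine le_trans ?_ (setIntegral_le_integral (s := Ico a 1) hrI hr0)
    have h1 : ∫ t in Ico a 1, (1 / (16 * v ^ 3)) ∂μ ≤ ∫ t in Ico a 1, r t ∂μ := by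
      apply setIntegral_mono_on (integrable_const _) hrI.integrableOn measurableSet_Ico
      intro t ht
      have h2 : 0 < 1 - a * t := by nlinarith [ht.1, ht.2, ha.1, ha.2]
      have h3 : 1 - a * t ≤ 2 * v := by nlinarith [ht.1, ht.2, ha.1, ha.2]
      have h4 : 1 / 2 ≤ t := hhalf.trans ht.1
      simp only [hr]
      calc 1 / (16 * v ^ 3) = (1 / 2) / (2 * v) ^ 3 := by field_simp; ring
        _ ≤ t / (1 - a * t) ^ 3 := by gcongr
    rw [setIntegral_const, smul_eq_mul, mul_comm] at h1
    exact h1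
  have hfin := (hlow.trans (le_abs_self _)).trans hup'
  have hX : (μ (Ico a 1)).toReal ≤ 16 * (Q ^ (1 / p) * (C * L)) * v := by
    have h5 := mul_le_mul_of_nonneg_left hfin (show 0 ≤ 16 * v ^ 3 by positivity)
    have e5 : 16 * v ^ 3 * (1 / (16 * v ^ 3) * (μ (Ico a 1)).toReal) = (μ (Ico a 1)).toReal := by field_simp
    have e6 : 16 * v ^ 3 * (Q ^ (1 / p) * (C * L * (v ^ 2)⁻¹)) = 16 * (Q ^ (1 / p) * (C * L)) * v := by field_simp
    rwa [e5, e6] at h5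
  nlinarith

/-- For `p > 1` and `p-2 < α ≤ p-1`, the measure `μ` is a Carleson
measure if and only if `I_μ` is well defined and bounded from `𝒟^p_α` into itself. -/
theorem Hmu_bounded_Dpa_iff_Carleson (p α : ℝ) (hp : 1 < p)
    (hα1 : p - 2 < α) (hα2 : α ≤ p - 1)
    (μ : Measure ℝ) [IsFiniteMeasure μ] (hsupp : μ (Ico (0 : ℝ) 1)ᶜ = 0) :
    (∃ C > 0, ∀ t ∈ Ico (0 : ℝ) 1, (μ (Ico t 1)).toReal ≤ C * (1 - t)) ↔
    (∃ C > 0, ∀ f : ℂ → ℂ, DifferentiableOn ℂ f (ball (0 : ℂ) 1) → dirichletNorm p α f < ⊤ →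
      (∀ z ∈ ball (0 : ℂ) 1, Integrable (fun t : ℝ => f (t : ℂ) / (1 - (t : ℂ) * z)) μ) ∧
      DifferentiableOn ℂ (Imu μ f) (ball (0 : ℂ) 1) ∧
      dirichletNorm p α (Imu μ f) ≤ ENNReal.ofReal C * dirichletNorm p α f) := by
  constructor
  · rintro ⟨C, hC, h⟩
    exact forward_dir p α hp hα1 hα2 μ hsupp hC h
  · rintro ⟨C, hC, h⟩
    exact backward_dir p α hp hα1 hα2 μ hsupp hC h
end

section
/- Let 1 < p < ∞ and p−2 < α ≤ p−1, and let f(z) = ∑_{n=0}^∞ a_n z^n be analytic in the unit disc 𝔻, where {a_n} is a decreasing sequence of non-negative real numbers. Then f belongs to the Dirichlet-type space 𝒟^p_α if and only if ∑_{n=0}^∞ (n+1)^{2p−α−3} a_n^p < ∞. -/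
open MeasureTheory Set Metric Filter Asymptotics
open scoped ENNReal

lemma hs_cast {R : Type*} [AddCommMonoid R] [TopologicalSpace R] {g h : ℕ → R} {s t : R}
    (H : HasSum g s) (h1 : ∀ n, h n = g n) (h2 : t = s) : HasSum h t := by
  rw [h2, funext h1]; exact H

lemma aux_summable (a : ℕ → ℝ) (f : ℂ → ℂ) (hpos : ∀ n, 0 ≤ a n)
    (hf : ∀ z ∈ ball (0 : ℂ) 1, HasSum (fun n : ℕ => (a n : ℂ) * z ^ n) (f z))
    (r : ℝ) (h0 : 0 ≤ r) (h1 : r < 1) : Summable (fun n => a n * r ^ n) := by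
  have h := (hf (r : ℂ) (by simp [abs_of_nonneg h0, h1])).summable.norm
  refine h.congr fun n => ?_
  simp [abs_of_nonneg h0, abs_of_nonneg (hpos n)]

lemma aux_hasSum_deriv (a : ℕ → ℝ) (f : ℂ → ℂ) (hpos : ∀ n, 0 ≤ a n)
    (hf : ∀ z ∈ ball (0 : ℂ) 1, HasSum (fun n : ℕ => (a n : ℂ) * z ^ n) (f z)) :
    DifferentiableOn ℂ f (ball 0 1) ∧ ∀ z ∈ ball (0 : ℂ) 1,
      HasSum (fun n : ℕ => (((n : ℝ) + 1) * a (n + 1) : ℝ) * z ^ n) (deriv f z) := by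
  have key : ∀ z ∈ ball (0 : ℂ) 1, DifferentiableAt ℂ f z ∧
      HasSum (fun n : ℕ => (((n : ℝ) + 1) * a (n + 1) : ℝ) * z ^ n) (deriv f z) := by
    intro z hz
    have hz' : ‖z‖ < 1 := by simpa using hz
    obtain ⟨ρ, h1, h2⟩ := exists_between hz'
    have hρ : 0 ≤ ρ := (norm_nonneg z).trans h1.le
    have hs := aux_summable a f hpos hf ρ hρ h2
    have hle : ∀ (i : ℕ) (w : ℂ), w ∈ ball (0 : ℂ) ρ → ‖(a i : ℂ) * w ^ i‖ ≤ a i * ρ ^ i := by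
      intro i w hw
      have hw' : ‖w‖ < ρ := by simpa using hw
      rw [norm_mul, norm_pow, Complex.norm_real, Real.norm_of_nonneg (hpos i)]
      have := hpos i
      gcongr
    have hd : ∀ i : ℕ, DifferentiableOn ℂ (fun w : ℂ => (a i : ℂ) * w ^ i) (ball 0 ρ) := by
      intro i; fun_prop
    have hzρ : z ∈ ball (0 : ℂ) ρ := by simpa using h1
    have heq : f =ᶠ[nhds z] (fun w : ℂ => ∑' i : ℕ, (a i : ℂ) * w ^ i) := by
      filter_upwards [isOpen_ball.mem_nhds hzρ] with w hw
      exact ((hf w (ball_subset_ball h2.le hw)).tsum_eq).symm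
    have H := Complex.hasSum_deriv_of_summable_norm hs hd isOpen_ball hle hzρ
    have D := (Complex.differentiableOn_tsum_of_summable_norm hs hd isOpen_ball hle).differentiableAt
      (isOpen_ball.mem_nhds hzρ)
    refine ⟨heq.differentiableAt_iff.2 D, ?_⟩
    rw [heq.deriv_eq]
    have H2 := (hasSum_nat_add_iff' 1).2 H
    simp only [Finset.range_one, Finset.sum_singleton] at H2
    refine hs_cast H2 (fun n => ?_) ?_
    · rw [deriv_const_mul _ (by fun_prop)]
      simp
      ring
    · simp
  exact ⟨fun z hz => (key z hz).1.differentiableWithinAt, fun z hz => (key z hz).2⟩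

lemma aux_pointwise (a : ℕ → ℝ) (f : ℂ → ℂ) (hpos : ∀ n, 0 ≤ a n) (hdec : ∀ n, a (n + 1) ≤ a n)
    (hf : ∀ z ∈ ball (0 : ℂ) 1, HasSum (fun n : ℕ => (a n : ℂ) * z ^ n) (f z))
    (z : ℂ) (hz : ‖z‖ < 1) :
    ‖1 - z‖ * ‖deriv f z‖ ≤ 2 * ∑' n, a n * ‖z‖ ^ n := by
  have hd := (aux_hasSum_deriv a f hpos hf).2
  have shift : ∀ w : ℂ, ‖w‖ < 1 → HasSum (fun n : ℕ =>
      (((n : ℝ) + 1) * a (n + 1) - n * a n : ℝ) * w ^ n) ((1 - w) * deriv f w) := by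
    intro w hw
    have h1 := hd w (by simpa using hw)
    have h2 : HasSum (fun n : ℕ => ((n * a n : ℝ) : ℂ) * w ^ n) (w * deriv f w) := by
      rw [← hasSum_nat_add_iff' 1]
      refine hs_cast (h1.mul_left w) (fun n => ?_) ?_
      · push_cast; ring
      · simp
    refine hs_cast (h1.sub h2) (fun n => ?_) ?_
    · push_cast; ring
    · ring
  have S := aux_summable a f hpos hf ‖z‖ (norm_nonneg z) hz
  set r := ‖z‖ with hr
  have hr0 : 0 ≤ r := norm_nonneg z
  have hrr : ‖(r : ℂ)‖ < 1 := by simpa [abs_of_nonneg hr0] using hz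
  have R : HasSum (fun n : ℕ => (((n : ℝ) + 1) * a (n + 1) - n * a n) * r ^ n)
      ((1 - r) * (deriv f r).re) := by
    have := Complex.hasSum_re (shift r hrr)
    convert this using 1
    · ext n; norm_cast
    · have : (1 - (r : ℂ)) = ((1 - r : ℝ) : ℂ) := by push_cast; rfl
      rw [this, Complex.re_ofReal_mul]
  have R2 : 0 ≤ (deriv f r).re := by
    have := Complex.hasSum_re (hd r (by simpa using hrr))
    refine this.nonneg fun n => ?_
    have h : (((((n : ℝ) + 1) * a (n + 1) : ℝ) : ℂ) * (r : ℂ) ^ n).re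
      = ((n : ℝ) + 1) * a (n + 1) * r ^ n := by norm_cast
    rw [h]
    have := hpos (n + 1)
    positivity
  have S2 : HasSum (fun n : ℕ => 2 * (a n * r ^ n) - (((n : ℝ) + 1) * a (n + 1) - n * a n) * r ^ n)
    (2 * (∑' n, a n * r ^ n) - (1 - r) * (deriv f r).re) := (S.hasSum.mul_left 2).sub R
  rw [← norm_mul]
  have B := (shift z hz).norm_le_of_bounded S2 (fun n => by
    rw [norm_mul, norm_pow, Complex.norm_real, ← hr, ← mul_assoc, ← sub_mul]
    gcongr
    have h1 := hpos (n + 1)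
    have h2 := hdec n
    have h3 : (0 : ℝ) ≤ n := n.cast_nonneg
    rw [Real.norm_eq_abs, abs_le]
    constructor <;> nlinarith)
  nlinarith [mul_nonneg (sub_nonneg.2 hz.le) R2]

lemma aux_kernel (r θ : ℝ) (h0 : 0 ≤ r) (h1 : r < 1) (hθ : |θ| ≤ Real.pi) :
    (1 - r) + |θ| ≤ (1 + Real.pi) * ‖1 - (r : ℂ) * Complex.exp (θ * Complex.I)‖ := by
  set e := Complex.exp (θ * Complex.I) with he
  have hen : ‖e‖ = 1 := Complex.norm_exp_ofReal_mul_I θ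
  have hA : 1 - r ≤ ‖1 - (r : ℂ) * e‖ := by
    have := norm_sub_norm_le (1 : ℂ) ((r : ℂ) * e)
    simpa [hen, abs_of_nonneg h0] using this
  have hB : ‖e - 1‖ ≤ 2 * ‖1 - (r : ℂ) * e‖ := by
    have h2 : ‖e - (r : ℂ) * e‖ = 1 - r := by
      have : e - (r : ℂ) * e = ((1 - r : ℝ) : ℂ) * e := by push_cast; ring
      rw [this, norm_mul, hen, Complex.norm_real, Real.norm_of_nonneg (by linarith), mul_one]
    have h3 := norm_sub_le (e - (r : ℂ) * e) (1 - (r : ℂ) * e)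
    have h4 : e - (r : ℂ) * e - (1 - (r : ℂ) * e) = e - 1 := by ring
    rw [h4] at h3
    linarith
  have hC : 2 / Real.pi * |θ| ≤ ‖e - 1‖ := by
    have h5 : ‖e - 1‖ = 2 * |Real.sin (θ / 2)| := by
      have := Complex.norm_exp_I_mul_ofReal_sub_one θ
      rw [mul_comm] at this
      rw [he, this]; simp
    rw [h5]
    have := Real.mul_abs_le_abs_sin (x := θ / 2) (by rw [abs_div]; norm_num; linarith)
    rw [abs_div] at this
    norm_num at this
    have e1 : 2 / Real.pi * |θ| = 2 * (|θ| / Real.pi) := by ring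
    rw [e1]; linarith
  have hpi := Real.pi_pos
  have : 2 / Real.pi * |θ| ≤ 2 * ‖1 - (r : ℂ) * e‖ := hC.trans hB
  have h6 : |θ| ≤ Real.pi * ‖1 - (r : ℂ) * e‖ := by
    have h7 : |θ| = Real.pi / 2 * (2 / Real.pi * |θ|) := by field_simp
    rw [h7]
    calc _ ≤ Real.pi / 2 * (2 * ‖1 - (r : ℂ) * e‖) := by gcongr
      _ = _ := by ring
  linarith

lemma aux_gamma (γ s : ℝ) (hγ : 0 < γ) (hs : 0 < s) :
    ∫⁻ t in Ioi (0 : ℝ), ENNReal.ofReal (t ^ (γ - 1) * Real.exp (-(s * t))) =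
      ENNReal.ofReal (Real.Gamma γ * s ^ (-γ)) := by
  have h := Real.integral_rpow_mul_exp_neg_mul_Ioi hγ hs
  have hΓ := Real.Gamma_pos_of_pos hγ
  have hv : (1 / s) ^ γ * Real.Gamma γ = Real.Gamma γ * s ^ (-γ) := by
    rw [one_div, Real.inv_rpow hs.le, Real.rpow_neg hs.le, mul_comm]
  rw [hv] at h
  have hi : IntegrableOn (fun t : ℝ => t ^ (γ - 1) * Real.exp (-(s * t))) (Ioi 0) := by
    by_contra hc
    rw [integral_undef hc] at h
    have : 0 < Real.Gamma γ * s ^ (-γ) := by positivity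
    linarith
  rw [← h, ofReal_integral_eq_lintegral_ofReal hi]
  filter_upwards [ae_restrict_mem measurableSet_Ioi] with t ht
  have : (0 : ℝ) < t := ht
  positivity

lemma aux_sum_le (c t : ℝ) (hc0 : 0 ≤ c) (hc1 : c < 1) (ht : 0 < t) :
    ∑' n : ℕ, ENNReal.ofReal (((n : ℝ) + 1) ^ (-c) * Real.exp (-(((n : ℝ) + 1) * t))) ≤
      ENNReal.ofReal (Real.Gamma (1 - c) * t ^ (c - 1)) := by
  have hG := aux_gamma (1 - c) t (by linarith) ht
  have e1 : 1 - c - 1 = -c := by ring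
  have e2 : -(1 - c) = c - 1 := by ring
  rw [e1, e2] at hG
  rw [← hG]
  calc _ ≤ ∑' n : ℕ, ∫⁻ x in Ioc (n : ℝ) (n + 1),
        ENNReal.ofReal (x ^ (-c) * Real.exp (-(t * x))) := by
        refine ENNReal.tsum_le_tsum fun n => ?_
        have hv : volume (Ioc (n : ℝ) (n + 1)) = 1 := by simp
        calc _ = ∫⁻ x in Ioc (n : ℝ) (n + 1),
              ENNReal.ofReal (((n : ℝ) + 1) ^ (-c) * Real.exp (-(((n : ℝ) + 1) * t))) := by
              rw [setLIntegral_const, hv, mul_one]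
          _ ≤ _ := by
              refine setLIntegral_mono' measurableSet_Ioc fun x hx => ?_
              have hx0 : 0 < x := lt_of_le_of_lt n.cast_nonneg hx.1
              apply ENNReal.ofReal_le_ofReal
              apply mul_le_mul
              · exact Real.rpow_le_rpow_of_nonpos hx0 hx.2 (by linarith)
              · apply Real.exp_le_exp.2
                have := mul_le_mul_of_nonneg_right hx.2 ht.le
                linarith
              · positivity
              · positivity
    _ = ∫⁻ x in ⋃ n : ℕ, Ioc (n : ℝ) (n + 1),
        ENNReal.ofReal (x ^ (-c) * Real.exp (-(t * x))) := by
        rw [lintegral_iUnion (fun _ => measurableSet_Ioc)]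
        have := pairwise_disjoint_Ioc_add_intCast (0 : ℝ)
        intro i j hij
        have h2 := this (i := (i : ℤ)) (j := (j : ℤ)) (by exact_mod_cast hij)
        simpa [Function.onFun] using h2
    _ ≤ _ := by
        refine lintegral_mono_set ?_
        refine iUnion_subset fun n x hx => ?_
        exact lt_of_le_of_lt n.cast_nonneg hx.1

lemma aux_holder (p e t : ℝ) (hp : 1 < p) (he0 : 0 ≤ e) (he1 : e < p - 1) (ht : 0 < t)
    (a : ℕ → ℝ) (hpos : ∀ n, 0 ≤ a n) :
    (∑' n : ℕ, ENNReal.ofReal (a n * Real.exp (-(((n : ℝ) + 1) * t)))) ^ p ≤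
      (∑' n : ℕ, ENNReal.ofReal (a n ^ p * ((n : ℝ) + 1) ^ e * Real.exp (-(((n : ℝ) + 1) * t)))) *
      ENNReal.ofReal (Real.Gamma (1 - e / (p - 1)) ^ (p - 1) * t ^ (e - (p - 1))) := by
  have hp1 : 0 < p - 1 := by linarith
  have hp0 : 0 < p := by linarith
  set q := p / (p - 1) with hq
  have hq0 : 0 < q := by positivity
  have hpq : p.HolderConjugate q := by
    rw [Real.holderConjugate_iff]; refine ⟨hp, ?_⟩
    rw [hq]; field_simp; ring
  have H := ENNReal.lintegral_mul_le_Lp_mul_Lq (μ := Measure.count) hpq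
    (f := fun n : ℕ => ENNReal.ofReal (a n * ((n : ℝ) + 1) ^ (e / p) *
      Real.exp (-(((n : ℝ) + 1) * t) / p)))
    (g := fun n : ℕ => ENNReal.ofReal (((n : ℝ) + 1) ^ (-(e / p)) *
      Real.exp (-(((n : ℝ) + 1) * t) / q))) (by measurability) (by measurability)
  simp only [lintegral_count, Pi.mul_apply] at H
  have E1 : ∀ n : ℕ, ENNReal.ofReal (a n * ((n : ℝ) + 1) ^ (e / p) *
      Real.exp (-(((n : ℝ) + 1) * t) / p)) * ENNReal.ofReal (((n : ℝ) + 1) ^ (-(e / p)) *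
      Real.exp (-(((n : ℝ) + 1) * t) / q)) =
      ENNReal.ofReal (a n * Real.exp (-(((n : ℝ) + 1) * t))) := by
    intro n
    have hn : (0 : ℝ) < (n : ℝ) + 1 := by positivity
    have := hpos n
    rw [← ENNReal.ofReal_mul (by positivity)]
    congr 1
    have x1 : ((n : ℝ) + 1) ^ (e / p) * ((n : ℝ) + 1) ^ (-(e / p)) = 1 := by
      rw [← Real.rpow_add hn]; simp
    have x2 : Real.exp (-(((n : ℝ) + 1) * t) / p) * Real.exp (-(((n : ℝ) + 1) * t) / q)
        = Real.exp (-(((n : ℝ) + 1) * t)) := by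
      rw [← Real.exp_add]; congr 1
      rw [hq]; field_simp; ring
    calc _ = a n * (((n : ℝ) + 1) ^ (e / p) * ((n : ℝ) + 1) ^ (-(e / p))) *
          (Real.exp (-(((n : ℝ) + 1) * t) / p) * Real.exp (-(((n : ℝ) + 1) * t) / q)) := by ring
      _ = _ := by rw [x1, x2, mul_one]
  have E2 : ∀ n : ℕ, ENNReal.ofReal (a n * ((n : ℝ) + 1) ^ (e / p) *
      Real.exp (-(((n : ℝ) + 1) * t) / p)) ^ p =
      ENNReal.ofReal (a n ^ p * ((n : ℝ) + 1) ^ e * Real.exp (-(((n : ℝ) + 1) * t))) := by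
    intro n
    have hn : (0 : ℝ) < (n : ℝ) + 1 := by positivity
    have := hpos n
    rw [ENNReal.ofReal_rpow_of_nonneg (by positivity) hp0.le, Real.mul_rpow (by positivity)
      (by positivity), Real.mul_rpow (by positivity) (by positivity), ← Real.rpow_mul hn.le,
      ← Real.exp_mul, div_mul_cancel₀ _ hp0.ne', div_mul_cancel₀ _ hp0.ne']
  have E3 : ∀ n : ℕ, ENNReal.ofReal (((n : ℝ) + 1) ^ (-(e / p)) *
      Real.exp (-(((n : ℝ) + 1) * t) / q)) ^ q =
      ENNReal.ofReal (((n : ℝ) + 1) ^ (-(e / (p - 1))) * Real.exp (-(((n : ℝ) + 1) * t))) := by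
    intro n
    have hn : (0 : ℝ) < (n : ℝ) + 1 := by positivity
    rw [ENNReal.ofReal_rpow_of_nonneg (by positivity) hq0.le, Real.mul_rpow (by positivity)
      (by positivity), ← Real.rpow_mul hn.le, ← Real.exp_mul, div_mul_cancel₀ _ hq0.ne']
    congr 4
    rw [hq]; field_simp
  simp only [E1, E2, E3] at H
  have hc1 : e / (p - 1) < 1 := by rw [div_lt_one hp1]; exact he1
  have hΓ : 0 < Real.Gamma (1 - e / (p - 1)) := Real.Gamma_pos_of_pos (by linarith)
  have S := aux_sum_le (e / (p - 1)) t (by positivity) hc1 ht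
  calc _ ≤ ((∑' n : ℕ, ENNReal.ofReal (a n ^ p * ((n : ℝ) + 1) ^ e *
          Real.exp (-(((n : ℝ) + 1) * t)))) ^ (1 / p) *
        (∑' n : ℕ, ENNReal.ofReal (((n : ℝ) + 1) ^ (-(e / (p - 1))) *
          Real.exp (-(((n : ℝ) + 1) * t)))) ^ (1 / q)) ^ p := by gcongr
    _ = (∑' n : ℕ, ENNReal.ofReal (a n ^ p * ((n : ℝ) + 1) ^ e *
          Real.exp (-(((n : ℝ) + 1) * t)))) *
        (∑' n : ℕ, ENNReal.ofReal (((n : ℝ) + 1) ^ (-(e / (p - 1))) *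
          Real.exp (-(((n : ℝ) + 1) * t)))) ^ (p - 1) := by
        rw [ENNReal.mul_rpow_of_nonneg _ _ hp0.le, ← ENNReal.rpow_mul, ← ENNReal.rpow_mul,
          one_div_mul_cancel hp0.ne', ENNReal.rpow_one]
        congr 2
        rw [hq]; field_simp
    _ ≤ _ := by
        gcongr
        calc _ ≤ (ENNReal.ofReal (Real.Gamma (1 - e / (p - 1)) * t ^ (e / (p - 1) - 1))) ^ (p - 1) := by
              gcongr
          _ = _ := by
              rw [ENNReal.ofReal_rpow_of_nonneg (by positivity) hp1.le, Real.mul_rpow (by positivity)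
                (by positivity), ← Real.rpow_mul ht.le]
              congr 3
              field_simp

lemma aux_series (p β : ℝ) (hp : 1 < p) (hβ : -1 < β) (a : ℕ → ℝ) (hpos : ∀ n, 0 ≤ a n) :
    ∃ C : ℝ≥0∞, C ≠ ⊤ ∧ ∫⁻ t in Ioi (0 : ℝ), ENNReal.ofReal (t ^ β) *
      (∑' n : ℕ, ENNReal.ofReal (a n * Real.exp (-(((n : ℝ) + 1) * t)))) ^ p ≤
      C * ∑' n : ℕ, ENNReal.ofReal (((n : ℝ) + 1) ^ (p - 2 - β) * a n ^ p) := by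
  obtain ⟨e, he, he1⟩ := exists_between (a₁ := max 0 (p - 2 - β)) (a₂ := p - 1)
    (max_lt (by linarith) (by linarith))
  have he0 : 0 ≤ e := (le_max_left _ _).trans he.le
  have he2 : p - 2 - β < e := (le_max_right _ _).trans_lt he
  set γ := β + e - p + 2 with hγ
  have hγ0 : 0 < γ := by linarith
  set D := Real.Gamma (1 - e / (p - 1)) ^ (p - 1) with hD
  have hc1 : e / (p - 1) < 1 := by rw [div_lt_one (by linarith)]; exact he1
  have hD0 : 0 < D := Real.rpow_pos_of_pos (Real.Gamma_pos_of_pos (by linarith)) _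
  have hΓ := Real.Gamma_pos_of_pos hγ0
  refine ⟨ENNReal.ofReal (D * Real.Gamma γ), ENNReal.ofReal_ne_top, ?_⟩
  calc _ ≤ ∫⁻ t in Ioi (0 : ℝ), ∑' n : ℕ, ENNReal.ofReal (D * a n ^ p * ((n : ℝ) + 1) ^ e) *
        ENNReal.ofReal (t ^ (γ - 1) * Real.exp (-(((n : ℝ) + 1) * t))) := by
        refine setLIntegral_mono' measurableSet_Ioi fun t ht => ?_
        have ht0 : 0 < t := ht
        calc _ ≤ ENNReal.ofReal (t ^ β) * ((∑' n : ℕ, ENNReal.ofReal (a n ^ p * ((n : ℝ) + 1) ^ e *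
              Real.exp (-(((n : ℝ) + 1) * t)))) * ENNReal.ofReal (D * t ^ (e - (p - 1)))) := by
              gcongr
              exact aux_holder p e t hp he0 he1 ht0 a hpos
          _ = _ := by
              rw [mul_comm, mul_assoc, ← ENNReal.tsum_mul_right]
              congr 1; ext n
              have := hpos n
              rw [← ENNReal.ofReal_mul (by positivity), ← ENNReal.ofReal_mul (by positivity),
                ← ENNReal.ofReal_mul (by positivity)]
              congr 1
              have : t ^ (γ - 1) = t ^ (e - (p - 1)) * t ^ β := by
                rw [← Real.rpow_add ht0]; congr 1; rw [hγ]; ring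
              rw [this]; ring
    _ = ∑' n : ℕ, ENNReal.ofReal (D * a n ^ p * ((n : ℝ) + 1) ^ e) *
        ENNReal.ofReal (Real.Gamma γ * ((n : ℝ) + 1) ^ (-γ)) := by
        rw [lintegral_tsum]
        · congr 1; ext n
          rw [lintegral_const_mul _ (by fun_prop), aux_gamma γ _ hγ0 (by positivity)]
        · intro n; fun_prop
    _ = _ := by
        rw [← ENNReal.tsum_mul_left]
        congr 1; ext n
        have := hpos n
        rw [← ENNReal.ofReal_mul (by positivity), ← ENNReal.ofReal_mul (by positivity)]
        congr 1
        have : ((n : ℝ) + 1) ^ (p - 2 - β) = ((n : ℝ) + 1) ^ e * ((n : ℝ) + 1) ^ (-γ) := by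
          rw [← Real.rpow_add (by positivity)]; congr 1; rw [hγ]; ring
        rw [this]; ring
    _ ≤ _ := le_rfl

lemma aux_theta (p : ℝ) (hp : 1 < p) : ∃ C : ℝ, 0 ≤ C ∧ ∀ δ : ℝ, 0 < δ →
    ∫⁻ θ : ℝ, ENNReal.ofReal ((δ + |θ|) ^ (-p)) = ENNReal.ofReal (C * δ ^ (1 - p)) := by
  refine ⟨∫ x : ℝ, (1 + ‖x‖) ^ (-p), integral_nonneg fun x => by positivity, fun δ hδ => ?_⟩
  have hi : Integrable (fun x : ℝ => (1 + ‖x‖) ^ (-p)) :=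
    integrable_one_add_norm (by simpa using hp)
  have hi2 : Integrable (fun x : ℝ => (1 + ‖δ⁻¹ * x‖) ^ (-p)) :=
    hi.comp_mul_left' (inv_ne_zero hδ.ne')
  have e : ∀ θ : ℝ, (δ + |θ|) ^ (-p) = δ ^ (-p) * (1 + ‖δ⁻¹ * θ‖) ^ (-p) := by
    intro θ
    rw [← Real.mul_rpow hδ.le (by positivity)]
    congr 1
    rw [norm_mul, Real.norm_of_nonneg (by positivity), Real.norm_eq_abs]
    field_simp
  simp_rw [e]
  rw [← ofReal_integral_eq_lintegral_ofReal (hi2.const_mul _)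
    (Eventually.of_forall fun x => by positivity), integral_const_mul,
    Measure.integral_comp_mul_left (fun x : ℝ => (1 + ‖x‖) ^ (-p))]
  congr 1
  rw [inv_inv, abs_of_pos hδ, smul_eq_mul, sub_eq_add_neg, Real.rpow_add hδ, Real.rpow_one]
  ring

lemma aux_suff (p α : ℝ) (hp : 1 < p)
    (hα1 : p - 2 < α)
    (f : ℂ → ℂ) (a : ℕ → ℝ) (hpos : ∀ n, 0 ≤ a n) (hdec : ∀ n, a (n + 1) ≤ a n)
    (hf : ∀ z ∈ ball (0 : ℂ) 1, HasSum (fun n : ℕ => (a n : ℂ) * z ^ n) (f z))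
    (hs : Summable (fun n : ℕ => ((n : ℝ) + 1) ^ (2 * p - α - 3) * a n ^ p)) :
    ∫⁻ z in ball (0 : ℂ) 1, ENNReal.ofReal ((1 - ‖z‖ ^ 2) ^ α * ‖deriv f z‖ ^ p) < ⊤ := by
  have hp0 : 0 < p := by linarith
  obtain ⟨C, hC0, hC⟩ := aux_theta p hp
  set K : ℝ → ℝ≥0∞ := fun t => ∑' n : ℕ, ENNReal.ofReal (a n * Real.exp (-(((n : ℝ) + 1) * t)))
    with hK
  have hKm : Measurable K := by
    rw [hK]; exact Measurable.tsum fun n => by fun_prop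
  have hKF : ∀ r : ℝ, 0 ≤ r → r < 1 → ENNReal.ofReal (∑' n, a n * r ^ n) ≤
      ENNReal.ofReal (Real.exp 1) * K (1 - r) := by
    intro r h0 h1
    rw [ENNReal.ofReal_tsum_of_nonneg (fun n => by have := hpos n; positivity)
      (aux_summable a f hpos hf r h0 h1), ← ENNReal.tsum_mul_left]
    refine ENNReal.tsum_le_tsum fun n => ?_
    rw [← ENNReal.ofReal_mul (by positivity)]
    apply ENNReal.ofReal_le_ofReal
    have h2 : r ^ n ≤ Real.exp 1 * Real.exp (-(((n : ℝ) + 1) * (1 - r))) := by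
      have h3 : r ≤ Real.exp (-(1 - r)) := by
        have := Real.add_one_le_exp (-(1 - r)); linarith
      calc r ^ n ≤ Real.exp (-(1 - r)) ^ n := by gcongr
        _ = Real.exp (n * (-(1 - r))) := by rw [← Real.exp_nat_mul]
        _ ≤ Real.exp (1 + (-(((n : ℝ) + 1) * (1 - r)))) := by
          apply Real.exp_le_exp.2
          nlinarith
        _ = _ := by rw [Real.exp_add]
    calc a n * r ^ n ≤ a n * (Real.exp 1 * Real.exp (-(((n : ℝ) + 1) * (1 - r)))) :=
          mul_le_mul_of_nonneg_left h2 (hpos n)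
      _ = _ := by ring
  -- the dominating function
  set C1 : ℝ := 2 ^ |α| * (2 * (1 + Real.pi) * Real.exp 1) ^ p with hC1
  have hC1p : 0 ≤ C1 := by have := Real.pi_pos; positivity
  set Φ : ℝ → ℝ≥0∞ := (Ioo (0 : ℝ) 1).indicator
    (fun r => ENNReal.ofReal (C1 * (1 - r) ^ α) * K (1 - r) ^ p) with hΦ
  have hΦm : Measurable Φ := by
    rw [hΦ]
    refine Measurable.indicator ?_ measurableSet_Ioo
    refine Measurable.mul (by fun_prop) ?_
    exact (hKm.comp (by fun_prop)).pow_const _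
  have hdom : ∀ q ∈ polarCoord.target, ENNReal.ofReal q.1 •
      (ball (0 : ℂ) 1).indicator
        (fun z => ENNReal.ofReal ((1 - ‖z‖ ^ 2) ^ α * ‖deriv f z‖ ^ p)) (Complex.polarCoord.symm q)
      ≤ Φ q.1 * ENNReal.ofReal ((1 - q.1 + |q.2|) ^ (-p)) := by
    rintro ⟨r, θ⟩ hq
    rw [polarCoord_target] at hq
    obtain ⟨hr, hθ⟩ := hq
    have hr0 : 0 < r := hr
    simp only [mem_Ioo] at hθ
    have hz : Complex.polarCoord.symm (r, θ) = (r : ℂ) * Complex.exp (θ * Complex.I) := by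
      rw [Complex.polarCoord_symm_apply, Complex.exp_mul_I]; simp
    rw [hz]
    set z := (r : ℂ) * Complex.exp (θ * Complex.I) with hzdef
    have hn : ‖z‖ = r := by
      rw [hzdef, norm_mul, Complex.norm_exp_ofReal_mul_I, Complex.norm_real,
        Real.norm_of_nonneg hr0.le, mul_one]
    by_cases hr1 : r < 1
    swap
    · rw [indicator_of_notMem (by simpa [hn] using hr1)]; simp
    rw [indicator_of_mem (by simpa [hn] using hr1), hΦ]
    simp only
    rw [indicator_of_mem (show r ∈ Ioo (0 : ℝ) 1 from ⟨hr0, hr1⟩), hn]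
    have hδ : 0 < 1 - r := by linarith
    have hpw := aux_pointwise a f hpos hdec hf z (by rw [hn]; exact hr1)
    rw [hn] at hpw
    have hker := aux_kernel r θ hr0.le hr1 (abs_le.2 ⟨hθ.1.le, hθ.2.le⟩)
    rw [← hzdef] at hker
    set F := ∑' n, a n * r ^ n with hF
    have hF0 : 0 ≤ F := tsum_nonneg fun n => by have := hpos n; positivity
    set κ := 1 - r + |θ| with hκ
    have hκ0 : 0 < κ := by positivity
    have hpi := Real.pi_pos
    have hfd : ‖deriv f z‖ ≤ (2 * (1 + Real.pi)) * F * κ⁻¹ := by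
      rw [← div_eq_mul_inv, le_div_iff₀ hκ0]
      calc ‖deriv f z‖ * κ ≤ ‖deriv f z‖ * ((1 + Real.pi) * ‖1 - z‖) := by gcongr
        _ = (1 + Real.pi) * (‖1 - z‖ * ‖deriv f z‖) := by ring
        _ ≤ (1 + Real.pi) * (2 * F) := by gcongr
        _ = _ := by ring
    have hw : (1 - r ^ 2) ^ α ≤ 2 ^ |α| * (1 - r) ^ α := by
      have e1 : 1 - r ^ 2 = (1 + r) * (1 - r) := by ring
      rw [e1, Real.mul_rpow (by linarith) hδ.le]
      gcongr
      calc (1 + r) ^ α ≤ (1 + r) ^ |α| :=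
            Real.rpow_le_rpow_of_exponent_le (by linarith) (le_abs_self α)
        _ ≤ _ := by gcongr; linarith
    have hbig : (1 - r ^ 2) ^ α * ‖deriv f z‖ ^ p ≤
        (2 ^ |α| * (1 - r) ^ α) * ((2 * (1 + Real.pi)) ^ p * F ^ p * κ ^ (-p)) := by
      have e2 : (2 * (1 + Real.pi)) ^ p * F ^ p * κ ^ (-p) =
          ((2 * (1 + Real.pi)) * F * κ⁻¹) ^ p := by
        rw [Real.mul_rpow (x := 2 * (1 + Real.pi) * F) (by positivity) (by positivity),
          Real.mul_rpow (x := 2 * (1 + Real.pi)) (by positivity) hF0,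
          Real.rpow_neg hκ0.le, Real.inv_rpow hκ0.le]
      rw [e2]
      gcongr
    have hFK : ENNReal.ofReal (F ^ p) ≤ ENNReal.ofReal (Real.exp 1 ^ p) * K (1 - r) ^ p := by
      rw [← ENNReal.ofReal_rpow_of_nonneg hF0 hp0.le,
        ← ENNReal.ofReal_rpow_of_nonneg (Real.exp_pos 1).le hp0.le,
        ← ENNReal.mul_rpow_of_nonneg _ _ hp0.le]
      gcongr
      exact hKF r hr0.le hr1
    calc _ ≤ (1 : ℝ≥0∞) * ENNReal.ofReal ((1 - r ^ 2) ^ α * ‖deriv f z‖ ^ p) := by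
          rw [smul_eq_mul]
          gcongr
          exact ENNReal.ofReal_le_one.2 hr1.le
      _ ≤ ENNReal.ofReal ((2 ^ |α| * (1 - r) ^ α) * ((2 * (1 + Real.pi)) ^ p * F ^ p * κ ^ (-p))) := by
          rw [one_mul]; exact ENNReal.ofReal_le_ofReal hbig
      _ = ENNReal.ofReal (2 ^ |α| * (2 * (1 + Real.pi)) ^ p * (1 - r) ^ α) * ENNReal.ofReal (F ^ p)
          * ENNReal.ofReal (κ ^ (-p)) := by
          rw [← ENNReal.ofReal_mul (by positivity), ← ENNReal.ofReal_mul (by positivity)]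
          congr 1; ring
      _ ≤ ENNReal.ofReal (2 ^ |α| * (2 * (1 + Real.pi)) ^ p * (1 - r) ^ α) *
          (ENNReal.ofReal (Real.exp 1 ^ p) * K (1 - r) ^ p) * ENNReal.ofReal (κ ^ (-p)) := by
          gcongr
      _ = _ := by
          rw [← mul_assoc, ← ENNReal.ofReal_mul (by positivity)]
          congr 3
          rw [hC1, Real.mul_rpow (by positivity) (by positivity) (y := Real.exp 1)]
          ring
  obtain ⟨C2, hC2, hser⟩ := aux_series p (α + 1 - p) hp (by linarith) a hpos
  have hsum : ∑' n : ℕ, ENNReal.ofReal (((n : ℝ) + 1) ^ (p - 2 - (α + 1 - p)) * a n ^ p) ≠ ⊤ := by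
    have e : p - 2 - (α + 1 - p) = 2 * p - α - 3 := by ring
    rw [e]
    exact hs.tsum_ofReal_ne_top
  rw [← lintegral_indicator measurableSet_ball, ← Complex.lintegral_comp_polarCoord_symm]
  have hmt : MeasurableSet polarCoord.target := polarCoord.open_target.measurableSet
  calc _ ≤ ∫⁻ q in polarCoord.target, Φ q.1 * ENNReal.ofReal ((1 - q.1 + |q.2|) ^ (-p)) :=
        setLIntegral_mono' hmt hdom
    _ ≤ ∫⁻ q : ℝ × ℝ, Φ q.1 * ENNReal.ofReal ((1 - q.1 + |q.2|) ^ (-p)) :=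
        setLIntegral_le_lintegral _ _
    _ = ∫⁻ r, ∫⁻ θ, Φ r * ENNReal.ofReal ((1 - r + |θ|) ^ (-p)) := by
        rw [Measure.volume_eq_prod, lintegral_prod]
        refine Measurable.aemeasurable ?_
        refine Measurable.mul (hΦm.comp measurable_fst) ?_
        fun_prop
    _ = ∫⁻ r, (Ioo (0 : ℝ) 1).indicator (fun t => ENNReal.ofReal (C1 * C) *
          (ENNReal.ofReal (t ^ (α + 1 - p)) * K t ^ p)) (1 - r) := by
        congr 1; ext r
        rw [lintegral_const_mul _ (by fun_prop)]
        by_cases hr : r ∈ Ioo (0 : ℝ) 1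
        · have hr' : 1 - r ∈ Ioo (0 : ℝ) 1 := ⟨by linarith [hr.2], by linarith [hr.1]⟩
          have hδ : 0 < 1 - r := hr'.1
          rw [hΦ, indicator_of_mem hr, indicator_of_mem hr', hC _ hδ]
          have e : (1 - r) ^ (α + 1 - p) = (1 - r) ^ α * (1 - r) ^ (1 - p) := by
            rw [← Real.rpow_add hδ]; congr 1; ring
          rw [e, mul_right_comm, ← ENNReal.ofReal_mul (by positivity),
            ← mul_assoc (ENNReal.ofReal (C1 * C)), ← ENNReal.ofReal_mul (by positivity)]
          congr 2; ring
        · have hr' : 1 - r ∉ Ioo (0 : ℝ) 1 := fun h => hr ⟨by linarith [h.2], by linarith [h.1]⟩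
          rw [hΦ, indicator_of_notMem hr, indicator_of_notMem hr', zero_mul]
    _ = ∫⁻ t in Ioo (0 : ℝ) 1, ENNReal.ofReal (C1 * C) *
          (ENNReal.ofReal (t ^ (α + 1 - p)) * K t ^ p) := by
        rw [lintegral_sub_left_eq_self (fun t => (Ioo (0 : ℝ) 1).indicator
          (fun t => ENNReal.ofReal (C1 * C) *
          (ENNReal.ofReal (t ^ (α + 1 - p)) * K t ^ p)) t) 1, lintegral_indicator measurableSet_Ioo]
    _ ≤ ∫⁻ t in Ioi (0 : ℝ), ENNReal.ofReal (C1 * C) *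
          (ENNReal.ofReal (t ^ (α + 1 - p)) * K t ^ p) := lintegral_mono_set Ioo_subset_Ioi_self
    _ = ENNReal.ofReal (C1 * C) * ∫⁻ t in Ioi (0 : ℝ),
          (ENNReal.ofReal (t ^ (α + 1 - p)) * K t ^ p) :=
        lintegral_const_mul' _ _ ENNReal.ofReal_ne_top
    _ ≤ ENNReal.ofReal (C1 * C) * (C2 * ∑' n : ℕ,
          ENNReal.ofReal (((n : ℝ) + 1) ^ (p - 2 - (α + 1 - p)) * a n ^ p)) := by
        gcongr
    _ < ⊤ := ENNReal.mul_lt_top ENNReal.ofReal_lt_top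
        (ENNReal.mul_lt_top hC2.lt_top hsum.lt_top)

lemma aux_circle (g : ℂ → ℂ) (c : ℂ) (ρ r : ℝ) (h0 : 0 < r) (h1 : r < ρ)
    (hg : DifferentiableOn ℂ g (ball c ρ)) :
    ENNReal.ofReal (2 * Real.pi) * ‖g c‖ₑ ≤
      ∫⁻ θ in Ioo (-Real.pi) Real.pi, ‖g (c + r * Complex.exp (θ * Complex.I))‖ₑ := by
  have hpi := Real.pi_pos
  have hd : DiffContOnCl ℂ g (ball c |r|) := by
    rw [abs_of_pos h0]
    refine DifferentiableOn.diffContOnCl ?_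
    rw [closure_ball _ h0.ne']
    exact hg.mono (closedBall_subset_ball h1)
  have h := hd.circleAverage
  rw [Real.circleAverage_eq_integral_add (-Real.pi)] at h
  have h2 : ∫ θ in (0 : ℝ)..2 * Real.pi, g (circleMap c r (θ + -Real.pi)) =
      ∫ θ in (-Real.pi)..Real.pi, g (circleMap c r θ) := by
    rw [intervalIntegral.integral_comp_add_right (fun θ => g (circleMap c r θ))]
    congr 1 <;> ring
  rw [h2] at h
  have h3 : ((2 * Real.pi : ℝ)) • g c = ∫ θ in Ioc (-Real.pi) Real.pi, g (circleMap c r θ) := by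
    rw [← intervalIntegral.integral_of_le (by linarith), ← h, smul_smul,
      mul_inv_cancel₀ (by positivity), one_smul]
  calc _ = ‖((2 * Real.pi : ℝ)) • g c‖ₑ := by
        rw [enorm_smul, Real.enorm_of_nonneg (by positivity)]
    _ ≤ ∫⁻ θ in Ioc (-Real.pi) Real.pi, ‖g (circleMap c r θ)‖ₑ := by
        rw [h3]; exact enorm_integral_le_lintegral_enorm _
    _ = _ := by
        rw [restrict_Ioo_eq_restrict_Ioc]; rfl

lemma aux_area (g : ℂ → ℂ) (c : ℂ) (ρ : ℝ) (h0 : 0 < ρ) (hm : Measurable g)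
    (hg : DifferentiableOn ℂ g (ball c ρ)) :
    ENNReal.ofReal (Real.pi * ρ ^ 2) * ‖g c‖ₑ ≤ ∫⁻ z in ball c ρ, ‖g z‖ₑ := by
  have hpi := Real.pi_pos
  have hsub : Ioo 0 ρ ×ˢ Ioo (-Real.pi) Real.pi ⊆ polarCoord.target := by
    rw [polarCoord_target]; exact prod_mono Ioo_subset_Ioi_self le_rfl
  have hi : ∫⁻ r in Ioo 0 ρ, ENNReal.ofReal r = ENNReal.ofReal (ρ ^ 2 / 2) := by
    rw [restrict_Ioo_eq_restrict_Ioc, ← ofReal_integral_eq_lintegral_ofReal,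
      ← intervalIntegral.integral_of_le h0.le, integral_id]
    · congr 1; ring
    · exact (continuous_id.integrableOn_Icc).mono_set Ioc_subset_Icc_self
    · filter_upwards [ae_restrict_mem measurableSet_Ioc] with x hx using hx.1.le
  calc _ = ∫⁻ r in Ioo 0 ρ, ENNReal.ofReal r * (ENNReal.ofReal (2 * Real.pi) * ‖g c‖ₑ) := by
        rw [lintegral_mul_const _ (by fun_prop), hi, ← mul_assoc,
          ← ENNReal.ofReal_mul (by positivity)]
        congr 2; ring
    _ ≤ ∫⁻ r in Ioo 0 ρ, ∫⁻ θ in Ioo (-Real.pi) Real.pi,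
          ENNReal.ofReal r * ‖g (c + r * Complex.exp (θ * Complex.I))‖ₑ := by
        refine setLIntegral_mono' measurableSet_Ioo fun r hr => ?_
        rw [lintegral_const_mul _ (by fun_prop)]
        gcongr
        exact aux_circle g c ρ r hr.1 hr.2 hg
    _ = ∫⁻ q in Ioo 0 ρ ×ˢ Ioo (-Real.pi) Real.pi,
          ENNReal.ofReal q.1 * ‖g (c + q.1 * Complex.exp (q.2 * Complex.I))‖ₑ := by
        rw [Measure.volume_eq_prod, ← Measure.prod_restrict, lintegral_prod]
        refine Measurable.aemeasurable ?_
        fun_prop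
    _ = ∫⁻ q in Ioo 0 ρ ×ˢ Ioo (-Real.pi) Real.pi, ENNReal.ofReal q.1 •
          (ball c ρ).indicator (fun z => ‖g z‖ₑ) (c + Complex.polarCoord.symm q) := by
        refine setLIntegral_congr_fun (measurableSet_Ioo.prod measurableSet_Ioo) ?_
        rintro ⟨r, θ⟩ ⟨hr, hθ⟩
        have hz : Complex.polarCoord.symm (r, θ) = (r : ℂ) * Complex.exp (θ * Complex.I) := by
          rw [Complex.polarCoord_symm_apply, Complex.exp_mul_I]; simp
        simp only [mem_Ioo] at hr
        simp only [hz, smul_eq_mul]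
        rw [indicator_of_mem]
        simp [Complex.norm_exp_ofReal_mul_I, abs_of_pos hr.1, hr.2]
    _ ≤ ∫⁻ q in polarCoord.target, ENNReal.ofReal q.1 •
          (ball c ρ).indicator (fun z => ‖g z‖ₑ) (c + Complex.polarCoord.symm q) :=
        lintegral_mono_set hsub
    _ = _ := by
        rw [Complex.lintegral_comp_polarCoord_symm
          (fun w => (ball c ρ).indicator (fun z => ‖g z‖ₑ) (c + w)),
          lintegral_add_left_eq_self (fun w => (ball c ρ).indicator (fun z => ‖g z‖ₑ) w),
          lintegral_indicator measurableSet_ball]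

lemma aux_area_p (p : ℝ) (hp : 1 < p) (g : ℂ → ℂ) (c : ℂ) (ρ : ℝ) (h0 : 0 < ρ) (hm : Measurable g)
    (hg : DifferentiableOn ℂ g (ball c ρ)) :
    ENNReal.ofReal (Real.pi * ρ ^ 2) * ENNReal.ofReal (‖g c‖ ^ p) ≤
      ∫⁻ z in ball c ρ, ENNReal.ofReal (‖g z‖ ^ p) := by
  have hpi := Real.pi_pos
  set y := ‖g c‖ with hy
  rcases (norm_nonneg (g c)).eq_or_lt with h | hy0
  · rw [← hy] at h
    rw [← h, Real.zero_rpow (by linarith)]; simp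
  rw [← hy] at hy0
  have young : ∀ x : ℝ, 0 ≤ x → p * y ^ (p - 1) * x ≤ x ^ p + (p - 1) * y ^ p := by
    intro x hx
    have hxy : 0 ≤ x / y := by positivity
    have := one_add_mul_self_le_rpow_one_add (s := x / y - 1) (by linarith) hp.le
    have e : 1 + (x / y - 1) = x / y := by ring
    rw [e, Real.div_rpow hx hy0.le, le_div_iff₀ (by positivity)] at this
    have e2 : y ^ p = y ^ (p - 1) * y := by
      rw [← Real.rpow_add_one hy0.ne']; congr 1; ring
    have e3 : (1 + p * (x / y - 1)) * y ^ p = p * y ^ (p - 1) * x - (p - 1) * y ^ p := by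
      rw [e2]; field_simp; ring
    linarith
  set V := ENNReal.ofReal (Real.pi * ρ ^ 2) with hV
  have hvol : volume (ball c ρ) = V := by
    rw [Complex.volume_ball, hV, mul_comm, ENNReal.ofReal_mul hpi.le, ENNReal.ofReal_pow h0.le]
    congr 1
    rw [← ENNReal.ofReal_coe_nnreal]; rfl
  have A := aux_area g c ρ h0 hm hg
  have hne : ENNReal.ofReal ((p - 1) * y ^ p) * V ≠ ⊤ :=
    ENNReal.mul_ne_top ENNReal.ofReal_ne_top ENNReal.ofReal_ne_top
  have hp1 : 0 < p - 1 := by linarith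
  refine (ENNReal.add_le_add_iff_right hne).1 ?_
  calc _ = ENNReal.ofReal (p * y ^ (p - 1)) * (V * ‖g c‖ₑ) := by
        have e2 : y ^ p = y ^ (p - 1) * y := by
          rw [← Real.rpow_add_one hy0.ne']; congr 1; ring
        have e3 : ENNReal.ofReal (p * y ^ (p - 1)) * ENNReal.ofReal y =
            ENNReal.ofReal (p * y ^ (p - 1) * y) := (ENNReal.ofReal_mul (by positivity)).symm
        rw [← ofReal_norm, ← hy, mul_comm V (ENNReal.ofReal y), mul_comm V (ENNReal.ofReal (y ^ p)),
          ← add_mul, ← ENNReal.ofReal_add (by positivity) (by positivity), ← mul_assoc, e3]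
        congr 2
        rw [e2]; ring
    _ ≤ ENNReal.ofReal (p * y ^ (p - 1)) * ∫⁻ z in ball c ρ, ‖g z‖ₑ := by gcongr
    _ = ∫⁻ z in ball c ρ, ENNReal.ofReal (p * y ^ (p - 1)) * ‖g z‖ₑ := by
        rw [lintegral_const_mul _ (by fun_prop)]
    _ ≤ ∫⁻ z in ball c ρ, (ENNReal.ofReal (‖g z‖ ^ p) + ENNReal.ofReal ((p - 1) * y ^ p)) := by
        refine lintegral_mono fun z => ?_
        rw [← ofReal_norm, ← ENNReal.ofReal_mul (by positivity),
          ← ENNReal.ofReal_add (by positivity) (by positivity)]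
        exact ENNReal.ofReal_le_ofReal (young _ (norm_nonneg _))
    _ = _ := by
        rw [lintegral_add_right _ measurable_const, setLIntegral_const, hvol]

lemma aux_rpow_lb (x q : ℝ) (h1 : 1 / 4 ≤ x) (h2 : x ≤ 4) : (4 : ℝ) ^ (-|q|) ≤ x ^ q := by
  have hx : 0 < x := by linarith
  rcases le_total 0 q with h | h
  · rw [abs_of_nonneg h, Real.rpow_neg (by norm_num), ← Real.inv_rpow (by norm_num)]
    exact Real.rpow_le_rpow (by norm_num) (by linarith) h
  · rw [abs_of_nonpos h, neg_neg]
    exact Real.rpow_le_rpow_of_nonpos hx h2 h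

lemma aux_rpow_ub (x q : ℝ) (h1 : 1 / 4 ≤ x) (h2 : x ≤ 4) : x ^ q ≤ (4 : ℝ) ^ |q| := by
  have hx : 0 < x := by linarith
  have := aux_rpow_lb x (-q) h1 h2
  rw [abs_neg, Real.rpow_neg (by norm_num), Real.rpow_neg hx.le] at this
  exact (inv_le_inv₀ (by positivity) (by positivity)).1 this

lemma aux_condense (p q : ℝ) (hp : 1 < p) (a : ℕ → ℝ) (hpos : ∀ n, 0 ≤ a n)
    (hdec : ∀ n, a (n + 1) ≤ a n)
    (hs : Summable (fun k : ℕ => ((2 : ℝ) ^ k) ^ (q + 1) * a (2 ^ k) ^ p)) :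
    Summable (fun n : ℕ => ((n : ℝ) + 1) ^ q * a n ^ p) := by
  have hanti : Antitone a := antitone_nat_of_succ_le hdec
  have hterm : ∀ n : ℕ, 0 ≤ ((n : ℝ) + 1) ^ q * a n ^ p := fun n => by
    have := hpos n; positivity
  have hblock : ∀ K : ℕ, ∑ n ∈ Finset.range (2 ^ K), ((n : ℝ) + 1) ^ q * a n ^ p ≤
      a 0 ^ p + ∑ k ∈ Finset.range K, 4 ^ |q| * (((2 : ℝ) ^ k) ^ (q + 1) * a (2 ^ k) ^ p) := by
    intro K
    induction K with
    | zero => simp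
    | succ K ih =>
      rw [Finset.sum_range_succ, ← add_assoc]
      have hle : 2 ^ K ≤ 2 ^ (K + 1) := Nat.pow_le_pow_right (by norm_num) (by omega)
      rw [← Finset.sum_range_add_sum_Ico _ hle]
      refine add_le_add ih ?_
      have hN : (0 : ℝ) < (2 : ℝ) ^ K := by positivity
      have hb : ∀ n : ℕ, n ∈ Finset.Ico (2 ^ K) (2 ^ (K + 1)) → ((n : ℝ) + 1) ^ q * a n ^ p ≤
          4 ^ |q| * ((2 : ℝ) ^ K) ^ q * a (2 ^ K) ^ p := by
        intro n hn
        rw [Finset.mem_Ico] at hn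
        have h1 : (2 : ℝ) ^ K ≤ n := by exact_mod_cast hn.1
        have h2 : (n : ℝ) + 1 ≤ 2 * 2 ^ K := by
          have : n + 1 ≤ 2 * 2 ^ K := by rw [pow_succ] at hn; omega
          exact_mod_cast this
        have h3 := hpos n
        have h4 := hpos (2 ^ K)
        have h5 : a n ≤ a (2 ^ K) := hanti hn.1
        have h6 := aux_rpow_ub (((n : ℝ) + 1) / 2 ^ K) q
          (by rw [le_div_iff₀ hN]; linarith) (by rw [div_le_iff₀ hN]; linarith)
        rw [Real.div_rpow (by positivity) hN.le, div_le_iff₀ (by positivity)] at h6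
        gcongr
      refine (Finset.sum_le_card_nsmul _ _ _ hb).trans (le_of_eq ?_)
      rw [Nat.card_Ico, nsmul_eq_mul, Real.rpow_add_one hN.ne']
      have : ((2 ^ (K + 1) - 2 ^ K : ℕ) : ℝ) = 2 ^ K := by
        rw [pow_succ, mul_two, Nat.add_sub_cancel]; norm_cast
      rw [this]; ring
  have hs2 := hs.mul_left ((4 : ℝ) ^ |q|)
  refine summable_of_sum_range_le (c := a 0 ^ p + ∑' k : ℕ,
    4 ^ |q| * (((2 : ℝ) ^ k) ^ (q + 1) * a (2 ^ k) ^ p)) hterm fun n => ?_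
  calc _ ≤ ∑ n ∈ Finset.range (2 ^ n), ((n : ℝ) + 1) ^ q * a n ^ p := by
        refine Finset.sum_le_sum_of_subset_of_nonneg ?_ fun i _ _ => hterm i
        exact Finset.range_subset_range.2 Nat.lt_two_pow_self.le
    _ ≤ _ := hblock n
    _ ≤ _ := by
        gcongr
        refine hs2.sum_le_tsum _ fun k _ => ?_
        have := hpos (2 ^ k)
        positivity

lemma aux_deriv_lb (a : ℕ → ℝ) (f : ℂ → ℂ) (hpos : ∀ n, 0 ≤ a n) (hdec : ∀ n, a (n + 1) ≤ a n)
    (hf : ∀ z ∈ ball (0 : ℂ) 1, HasSum (fun n : ℕ => (a n : ℂ) * z ^ n) (f z))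
    (N : ℕ) (hN : 0 < N) :
    (N : ℝ) ^ 2 * a N / 4 ≤ ‖deriv f ((1 - 1 / (2 * N) : ℝ) : ℂ)‖ := by
  have hanti : Antitone a := antitone_nat_of_succ_le hdec
  have hN1 : (1 : ℝ) ≤ N := by exact_mod_cast hN
  have hN0 : (0 : ℝ) < N := by linarith
  set c : ℝ := 1 - 1 / (2 * N) with hc
  have hc2 : 1 / (2 * (N : ℝ)) ≤ 1 / 2 := by
    apply one_div_le_one_div_of_le <;> linarith
  have hc3 : 0 < 1 / (2 * (N : ℝ)) := by positivity
  have hc0 : 0 ≤ c := by linarith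
  have hc1 : c < 1 := by linarith
  have H := Complex.hasSum_re ((aux_hasSum_deriv a f hpos hf).2 (c : ℂ)
    (by simpa [abs_of_nonneg hc0] using hc1))
  have H2 : HasSum (fun n : ℕ => ((n : ℝ) + 1) * a (n + 1) * c ^ n) (deriv f c).re :=
    hs_cast H (fun n => by norm_cast) rfl
  have hcN : 1 / 2 ≤ c ^ N := by
    have := one_add_mul_le_pow (a := -(1 / (2 * (N : ℝ)))) (by linarith) N
    have e : 1 + (N : ℝ) * -(1 / (2 * (N : ℝ))) = 1 / 2 := by field_simp; norm_num
    rw [e] at this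
    rw [hc, sub_eq_add_neg]; exact this
  have hsum : ∀ M : ℕ, (M : ℝ) ^ 2 / 2 ≤ ∑ n ∈ Finset.range M, ((n : ℝ) + 1) := by
    intro M
    induction M with
    | zero => simp
    | succ M ih => rw [Finset.sum_range_succ]; push_cast; nlinarith
  have haN := hpos N
  calc _ = (N : ℝ) ^ 2 / 2 * (a N * (1 / 2)) := by ring
    _ ≤ (∑ n ∈ Finset.range N, ((n : ℝ) + 1)) * (a N * (1 / 2)) := by
        gcongr; exact hsum N
    _ = ∑ n ∈ Finset.range N, ((n : ℝ) + 1) * (a N * (1 / 2)) := by rw [Finset.sum_mul]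
    _ ≤ ∑ n ∈ Finset.range N, ((n : ℝ) + 1) * a (n + 1) * c ^ n := by
        refine Finset.sum_le_sum fun n hn => ?_
        rw [Finset.mem_range] at hn
        rw [mul_assoc]
        have h1 : a N ≤ a (n + 1) := hanti hn
        have h2 : 1 / 2 ≤ c ^ n := hcN.trans (pow_le_pow_of_le_one hc0 hc1.le hn.le)
        have h3 := hpos (n + 1)
        gcongr
    _ ≤ (deriv f c).re := sum_le_hasSum _ (fun n _ => by have := hpos (n + 1); positivity) H2
    _ ≤ _ := Complex.re_le_norm _

lemma aux_nec (p α : ℝ) (hp : 1 < p)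
    (f : ℂ → ℂ) (a : ℕ → ℝ) (hpos : ∀ n, 0 ≤ a n) (hdec : ∀ n, a (n + 1) ≤ a n)
    (hf : ∀ z ∈ ball (0 : ℂ) 1, HasSum (fun n : ℕ => (a n : ℂ) * z ^ n) (f z))
    (hI : ∫⁻ z in ball (0 : ℂ) 1, ENNReal.ofReal ((1 - ‖z‖ ^ 2) ^ α * ‖deriv f z‖ ^ p) < ⊤) :
    Summable (fun n : ℕ => ((n : ℝ) + 1) ^ (2 * p - α - 3) * a n ^ p) := by
  refine aux_condense p _ hp a hpos hdec ?_
  have hpi := Real.pi_pos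
  have hp0 : 0 < p := by linarith
  have hd : DifferentiableOn ℂ (deriv f) (ball 0 1) :=
    (aux_hasSum_deriv a f hpos hf).1.deriv isOpen_ball
  have hm : Measurable (deriv f) := measurable_deriv f
  set B : ℕ → Set ℂ := fun k => ball ((1 - 1 / (2 * 2 ^ k) : ℝ) : ℂ) (1 / (8 * 2 ^ k)) with hB
  have hnorm : ∀ k, ∀ z ∈ B k, 3 / (8 * 2 ^ k) < 1 - ‖z‖ ∧ 1 - ‖z‖ < 5 / (8 * 2 ^ k) := by
    intro k z hz
    have h1 : (1 : ℝ) ≤ 2 ^ k := one_le_pow₀ (by norm_num)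
    rw [hB] at hz
    simp only [mem_ball, dist_eq_norm] at hz
    have hc : ‖((1 - 1 / (2 * 2 ^ k) : ℝ) : ℂ)‖ = 1 - 1 / (2 * 2 ^ k) := by
      rw [Complex.norm_real, Real.norm_of_nonneg]
      rw [sub_nonneg, div_le_one (by positivity)]; linarith
    have h2 := abs_lt.1 ((abs_norm_sub_norm_le _ _).trans_lt hz)
    rw [hc] at h2
    have e1 : (1 : ℝ) / (2 * 2 ^ k) = 4 * (1 / (8 * 2 ^ k)) := by field_simp; norm_num
    have e2 : (3 : ℝ) / (8 * 2 ^ k) = 3 * (1 / (8 * 2 ^ k)) := by field_simp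
    have e3 : (5 : ℝ) / (8 * 2 ^ k) = 5 * (1 / (8 * 2 ^ k)) := by field_simp
    rw [e1] at h2
    rw [e2, e3]
    constructor <;> linarith [h2.1, h2.2]
  have hsub : ∀ k, B k ⊆ ball 0 1 := by
    intro k z hz
    have := (hnorm k z hz).1
    have h3 : (0 : ℝ) < 3 / (8 * 2 ^ k) := by positivity
    rw [mem_ball_zero_iff]; linarith
  have hdisj : Pairwise (Function.onFun Disjoint B) := by
    have key : ∀ j k, j < k → Disjoint (B j) (B k) := by
      intro j k hjk
      rw [Set.disjoint_left]
      intro z hj hk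
      have h1 := (hnorm j z hj).1
      have h2 := (hnorm k z hk).2
      have h3 : (2 : ℝ) * 2 ^ j ≤ 2 ^ k := by
        rw [← pow_succ']; exact pow_le_pow_right₀ (by norm_num) hjk
      have h4 : (5 : ℝ) / (8 * 2 ^ k) ≤ 3 / (8 * 2 ^ j) := by
        rw [div_le_div_iff₀ (by positivity) (by positivity)]
        have : (0 : ℝ) < 2 ^ j := by positivity
        linarith
      linarith
    intro j k hjk
    rcases lt_or_gt_of_ne hjk with h | h
    · exact key j k h
    · exact (key k j h).symm
  set c0 : ℝ := 4 ^ (-|α|) * (1 / 4) ^ p * (Real.pi / 64) with hc0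
  have hc0p : 0 < c0 := by positivity
  have hpart : ∀ k, ENNReal.ofReal (c0 * (((2 : ℝ) ^ k) ^ (2 * p - α - 3 + 1) * a (2 ^ k) ^ p)) ≤
      ∫⁻ z in B k, ENNReal.ofReal ((1 - ‖z‖ ^ 2) ^ α * ‖deriv f z‖ ^ p) := by
    intro k
    set N : ℝ := 2 ^ k with hNdef
    have hN : 0 < N := by positivity
    have ha := hpos (2 ^ k)
    have hA := aux_area_p p hp (deriv f) ((1 - 1 / (2 * N) : ℝ) : ℂ) (1 / (8 * N)) (by positivity)
      hm (hd.mono (hsub k))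
    have hL := aux_deriv_lb a f hpos hdec hf (2 ^ k) (by positivity)
    have hcast : ((2 ^ k : ℕ) : ℝ) = N := by push_cast; rfl
    rw [hcast] at hL
    have hL' : N ^ 2 * a (2 ^ k) / 4 ≤ ‖deriv f ((1 - 1 / (2 * N) : ℝ) : ℂ)‖ := hL
    calc _ = ENNReal.ofReal (4 ^ (-|α|) * N ^ (-α)) * (ENNReal.ofReal (Real.pi * (1 / (8 * N)) ^ 2) *
          ENNReal.ofReal ((N ^ 2 * a (2 ^ k) / 4) ^ p)) := by
          rw [← ENNReal.ofReal_mul (by positivity), ← ENNReal.ofReal_mul (by positivity)]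
          congr 1
          have e1 : (N ^ 2 * a (2 ^ k) / 4) ^ p = N ^ (2 * p) * a (2 ^ k) ^ p * (1 / 4) ^ p := by
            rw [div_eq_mul_one_div, Real.mul_rpow (by positivity) (by positivity),
              Real.mul_rpow (by positivity) (by positivity), Real.rpow_mul hN.le]
            norm_num
          have e2 : N ^ (2 * p - α - 3 + 1) = N ^ (2 * p) * N ^ (-α) * (N ^ 2)⁻¹ := by
            have : (N ^ 2)⁻¹ = N ^ (-2 : ℝ) := by
              rw [Real.rpow_neg hN.le]; norm_num
            rw [this, ← Real.rpow_add hN, ← Real.rpow_add hN]; congr 1; ring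
          rw [e1, e2, hc0]
          field_simp
          ring
      _ ≤ ENNReal.ofReal (4 ^ (-|α|) * N ^ (-α)) *
          ∫⁻ z in B k, ENNReal.ofReal (‖deriv f z‖ ^ p) := by
          gcongr
          refine le_trans ?_ hA
          gcongr
      _ = ∫⁻ z in B k, ENNReal.ofReal (4 ^ (-|α|) * N ^ (-α)) * ENNReal.ofReal (‖deriv f z‖ ^ p) := by
          rw [lintegral_const_mul' _ _ ENNReal.ofReal_ne_top]
      _ ≤ _ := by
          refine setLIntegral_mono' measurableSet_ball fun z hz => ?_
          rw [← ENNReal.ofReal_mul (by positivity)]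
          apply ENNReal.ofReal_le_ofReal
          gcongr
          obtain ⟨h1, h2⟩ := hnorm k z hz
          rw [← hNdef] at h1 h2
          have hz0 := norm_nonneg z
          have hpos1 : 0 < 3 / (8 * N) := by positivity
          have hu : 1 - ‖z‖ ^ 2 = (1 - ‖z‖) * (1 + ‖z‖) := by ring
          have hu1 : 3 / (8 * N) ≤ 1 - ‖z‖ ^ 2 := by nlinarith
          have hu2 : 1 - ‖z‖ ^ 2 ≤ 2 * (5 / (8 * N)) := by nlinarith
          have h6 := aux_rpow_lb ((1 - ‖z‖ ^ 2) * N) α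
            (by
              have e : 3 / (8 * N) * N = 3 / 8 := by field_simp
              have := mul_le_mul_of_nonneg_right hu1 hN.le
              rw [e] at this; linarith)
            (by
              have e : 2 * (5 / (8 * N)) * N = 5 / 4 := by field_simp; norm_num
              have := mul_le_mul_of_nonneg_right hu2 hN.le
              rw [e] at this; linarith)
          rw [Real.mul_rpow (by linarith) hN.le] at h6
          rw [Real.rpow_neg hN.le, ← div_eq_mul_inv, div_le_iff₀ (by positivity)]
          exact h6
  have htot : ∑' k, ENNReal.ofReal (c0 * (((2 : ℝ) ^ k) ^ (2 * p - α - 3 + 1) * a (2 ^ k) ^ p)) < ⊤ :=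
    calc _ ≤ ∑' k, ∫⁻ z in B k, ENNReal.ofReal ((1 - ‖z‖ ^ 2) ^ α * ‖deriv f z‖ ^ p) :=
          ENNReal.tsum_le_tsum hpart
      _ = ∫⁻ z in ⋃ k, B k, ENNReal.ofReal ((1 - ‖z‖ ^ 2) ^ α * ‖deriv f z‖ ^ p) := by
          rw [lintegral_iUnion (fun _ => measurableSet_ball) hdisj]
      _ ≤ _ := lintegral_mono_set (iUnion_subset hsub)
      _ < ⊤ := hI
  have hS := ENNReal.summable_toReal htot.ne
  refine (summable_mul_left_iff hc0p.ne').1 (hS.congr fun k => ?_)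
  have := hpos (2 ^ k)
  rw [ENNReal.toReal_ofReal (by positivity)]
/-- For `1 < p < ∞`, `p-2 < α ≤ p-1` and `f(z) = ∑ a_n z^n` with `{a_n}`
a decreasing sequence of non-negative reals: `f ∈ 𝒟^p_α` iff
`∑_{n≥0} (n+1)^{2p-α-3} a_n^p < ∞`. -/
theorem Dpa_decreasing_coefficients (p α : ℝ) (hp : 1 < p)
    (hα1 : p - 2 < α) (hα2 : α ≤ p - 1)
    (f : ℂ → ℂ) (a : ℕ → ℝ) (hpos : ∀ n, 0 ≤ a n) (hdec : ∀ n, a (n + 1) ≤ a n)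
    (hf : ∀ z ∈ ball (0 : ℂ) 1, HasSum (fun n : ℕ => (a n : ℂ) * z ^ n) (f z)) :
    dirichletNorm p α f < ⊤ ↔
      Summable (fun n : ℕ => ((n : ℝ) + 1) ^ (2 * p - α - 3) * a n ^ p) := by
  have hp0 : 0 < p := by linarith
  have hI : dirichletNorm p α f < ⊤ ↔
      ∫⁻ z in ball (0 : ℂ) 1, ENNReal.ofReal ((1 - ‖z‖ ^ 2) ^ α * ‖deriv f z‖ ^ p) < ⊤ := by
    have hα : ENNReal.ofReal (α + 1) ≠ 0 := by
      rw [Ne, ENNReal.ofReal_eq_zero]; linarith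
    have hpi : (ENNReal.ofReal Real.pi)⁻¹ ≠ 0 := ENNReal.inv_ne_zero.2 ENNReal.ofReal_ne_top
    have hpi2 : (ENNReal.ofReal Real.pi)⁻¹ ≠ ⊤ := by
      rw [ENNReal.inv_ne_top, Ne, ENNReal.ofReal_eq_zero]; linarith [Real.pi_pos]
    unfold dirichletNorm bergmanNorm dA
    rw [ENNReal.add_lt_top, ENNReal.rpow_lt_top_iff_of_pos (by positivity),
      Measure.restrict_smul, lintegral_smul_measure, smul_eq_mul]
    constructor
    · rintro ⟨-, h⟩
      by_contra hc
      rw [not_lt, top_le_iff] at hc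
      rw [hc, ENNReal.mul_top hpi, ENNReal.mul_top hα] at h
      exact lt_irrefl _ h
    · intro h
      exact ⟨ENNReal.ofReal_lt_top, ENNReal.mul_lt_top ENNReal.ofReal_lt_top
        (ENNReal.mul_lt_top hpi2.lt_top h)⟩
  rw [hI]
  exact ⟨aux_nec p α hp f a hpos hdec hf, aux_suff p α hp hα1 f a hpos hdec hf⟩
end

section
/- Let −1 < α < 0 and let μ be a finite positive Borel measure on [0,1) which is a Carleson measure. Then there exists a constant C > 0 such that for every f in the Dirichlet-type space 𝒟^1_α, the integral I_μ f(z) = ∫_{[0,1)} f(t)/(1 − t z) dμ(t) converges absolutely for every z in the unit disc 𝔻, the resulting function I_μ f is analytic in 𝔻, belongs to 𝒟^1_α, and ‖I_μ f‖_{𝒟^1_α} ≤ C ‖f‖_{𝒟^1_α}. -/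
open MeasureTheory Set Metric Filter Asymptotics
open scoped ENNReal

lemma aux_polar (F : ℂ → ℝ≥0∞) (hF : Measurable F) (c : ℂ) (R : ℝ) :
    ∫⁻ z in ball c R, F z =
      ∫⁻ r in Ioo (0:ℝ) R, ENNReal.ofReal r *
        ∫⁻ θ in Ioo (-Real.pi) Real.pi, F (circleMap c r θ) := by
  have hG : Measurable ((ball c R).indicator F) := hF.indicator measurableSet_ball
  rw [← lintegral_indicator measurableSet_ball, ← lintegral_add_right_eq_self _ c,
    ← Complex.lintegral_comp_polarCoord_symm, polarCoord_target, Measure.volume_eq_prod,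
    setLIntegral_prod]
  · rw [show Ioo (0:ℝ) R = Iio R ∩ Ioi 0 by rw [inter_comm, Ioi_inter_Iio],
      ← setLIntegral_indicator measurableSet_Iio]
    refine setLIntegral_congr_fun measurableSet_Ioi fun r hr => ?_
    have hr' : (0:ℝ) < r := hr
    have key : ∀ θ : ℝ, Complex.polarCoord.symm (r, θ) + c = circleMap c r θ := by
      intro θ
      rw [Complex.polarCoord_symm_apply, circleMap, Complex.exp_mul_I]
      push_cast
      ring
    simp only [key, smul_eq_mul]
    have hm : Measurable fun θ : ℝ => (ball c R).indicator F (circleMap c r θ) :=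
      hG.comp (continuous_circleMap c r).measurable
    rw [lintegral_const_mul _ hm]
    by_cases h : r < R
    · rw [indicator_of_mem (by exact h)]
      congr 1
      refine lintegral_congr fun θ => ?_
      rw [indicator_of_mem]
      simp [circleMap, abs_of_pos hr', h]
    · rw [indicator_of_notMem (by exact h)]
      have : ∀ θ : ℝ, (ball c R).indicator F (circleMap c r θ) = 0 := by
        intro θ
        rw [indicator_of_notMem]
        simp [circleMap, abs_of_pos hr', h]
      simp [this]
  · apply Measurable.aemeasurable
    refine Measurable.mul (by fun_prop) (hG.comp ?_)
    simp only [Complex.polarCoord_symm_apply]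
    fun_prop

lemma aux_circle_s14 {E : Type*} [NormedAddCommGroup E] [NormedSpace ℝ E] (f : ℂ → E) (c : ℂ) (r : ℝ) :
    ∫ θ in Ioo (-Real.pi) Real.pi, f (circleMap c r θ) =
      (2 * Real.pi) • Real.circleAverage f c r := by
  rw [Real.circleAverage, smul_smul, mul_inv_cancel₀ (by positivity), one_smul,
    ← restrict_Ioo_eq_restrict_Ioc.symm, ← intervalIntegral.integral_of_le (by linarith [Real.pi_pos])]
  have t₀ : (fun θ ↦ f (circleMap c r θ)).Periodic (2 * Real.pi) :=
    fun x ↦ by simp [periodic_circleMap c r x]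
  have := t₀.intervalIntegral_add_eq (-Real.pi) 0
  rw [zero_add] at this
  rw [← this]; congr 1; ring

lemma aux_poisson (ρ : ℝ) (h0 : 0 ≤ ρ) (h1 : ρ < 1) :
    ∫⁻ θ in Ioo (-Real.pi) Real.pi, ENNReal.ofReal (1 / ‖1 - ρ * circleMap 0 1 θ‖ ^ 2) =
      ENNReal.ofReal (2 * Real.pi / (1 - ρ ^ 2)) := by
  have hρ : 0 < 1 - ρ ^ 2 := by nlinarith
  have hnorm : ∀ θ, ‖circleMap 0 1 θ‖ = 1 := by intro θ; simp [circleMap]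
  have hne : ∀ θ, ‖1 - ρ * circleMap 0 1 θ‖ ≠ 0 := by
    intro θ h
    rw [norm_eq_zero, sub_eq_zero] at h
    have := congrArg norm h
    rw [norm_mul, hnorm] at this
    simp [abs_of_nonneg h0] at this
    linarith
  have hc : Continuous fun θ : ℝ => 1 / ‖1 - ρ * circleMap 0 1 θ‖ ^ 2 := by
    refine continuous_const.div ?_ fun θ => pow_ne_zero _ (hne θ)
    have := continuous_circleMap 0 1
    fun_prop
  rw [← ofReal_integral_eq_lintegral_ofReal]
  · congr 1
    have hP := (diffContOnCl_const (c := (1:ℂ)) (s := ball (0:ℂ) 1)).circleAverage_poissonKernel_smul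
      (w := (ρ:ℂ)) (by simp [abs_of_nonneg h0, h1])
    have h2 := aux_circle_s14 (poissonKernel 0 ρ • fun _ => (1:ℂ)) 0 1
    rw [hP] at h2
    have h3 : ∀ θ : ℝ, (poissonKernel 0 ρ • fun _ => (1:ℂ)) (circleMap 0 1 θ) =
        (((1 - ρ ^ 2) * (1 / ‖1 - ρ * circleMap 0 1 θ‖ ^ 2) : ℝ) : ℂ) := by
      intro θ
      have e : ‖circleMap 0 1 θ - ρ‖ = ‖1 - ρ * circleMap 0 1 θ‖ := by
        have : 1 - ρ * circleMap 0 1 θ =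
            circleMap 0 1 θ * (starRingEnd ℂ) (circleMap 0 1 θ - ρ) := by
          have := Complex.mul_conj (circleMap 0 1 θ)
          rw [Complex.normSq_eq_norm_sq, hnorm] at this
          rw [map_sub, mul_sub, this]
          simp; ring
        rw [this, norm_mul, hnorm, Complex.norm_conj, one_mul]
      simp only [Pi.smul_apply', poissonKernel_def, sub_zero, hnorm, e]
      simp [abs_of_nonneg h0]
      ring
    simp only [h3] at h2
    rw [integral_complex_ofReal, integral_const_mul] at h2
    have h4 : (1 - ρ ^ 2) * ∫ θ in Ioo (-Real.pi) Real.pi, (1 / ‖1 - ρ * circleMap 0 1 θ‖ ^ 2)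
        = 2 * Real.pi := by
      apply Complex.ofReal_injective
      rw [h2]; simp
    rw [eq_div_iff hρ.ne', mul_comm]; exact h4
  · exact (hc.integrableOn_Icc (a := -Real.pi) (b := Real.pi)).mono_set Ioo_subset_Icc_self
  · exact Eventually.of_forall fun θ => by simp only [Pi.zero_apply]; positivity

lemma aux_submean (g : ℂ → ℂ) (c : ℂ) (R r : ℝ) (hg : DifferentiableOn ℂ g (ball c R))
    (hr : 0 < r) (hrR : r < R) :
    ENNReal.ofReal (2 * Real.pi) * ‖g c‖ₑ ≤
      ∫⁻ θ in Ioo (-Real.pi) Real.pi, ‖g (circleMap c r θ)‖ₑ := by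
  have h : DiffContOnCl ℂ g (ball c |r|) := by
    refine DifferentiableOn.diffContOnCl (hg.mono ?_)
    refine closure_ball_subset_closedBall.trans ?_
    rw [abs_of_pos hr]
    exact closedBall_subset_ball hrR
  have h2 := aux_circle_s14 g c r
  rw [h.circleAverage] at h2
  calc _ = ‖(2 * Real.pi) • g c‖ₑ := by
        rw [enorm_smul, Real.enorm_eq_ofReal (by positivity)]
    _ ≤ _ := by rw [← h2]; exact enorm_integral_le_lintegral_enorm _

lemma aux_disc (g : ℂ → ℂ) (hgm : Measurable fun z => ‖g z‖ₑ) (c : ℂ) (R : ℝ) (hR : 0 < R)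
    (hg : DifferentiableOn ℂ g (ball c R)) :
    ENNReal.ofReal (Real.pi * R ^ 2) * ‖g c‖ₑ ≤ ∫⁻ z in ball c R, ‖g z‖ₑ := by
  rw [aux_polar _ hgm]
  calc ENNReal.ofReal (Real.pi * R ^ 2) * ‖g c‖ₑ
      = ∫⁻ r in Ioo (0:ℝ) R, ENNReal.ofReal r * (ENNReal.ofReal (2 * Real.pi) * ‖g c‖ₑ) := by
        rw [lintegral_mul_const _ (by fun_prop), ← ofReal_integral_eq_lintegral_ofReal,
          ← restrict_Ioo_eq_restrict_Ioc.symm, ← intervalIntegral.integral_of_le hR.le, integral_id,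
          ← mul_assoc, ← ENNReal.ofReal_mul (by simp; positivity)]
        · congr 2; ring
        · exact (continuous_id.integrableOn_Icc (a := 0) (b := R)).mono_set Ioo_subset_Icc_self
        · filter_upwards [ae_restrict_mem measurableSet_Ioo] with r hr using hr.1.le
    _ ≤ _ := by
        refine setLIntegral_mono' measurableSet_Ioo fun r hr => ?_
        gcongr
        exact aux_submean g c R r hg hr.1 hr.2

lemma aux_pow1 (α : ℝ) (hα1 : -1 < α) (s : ℝ) (hs : s < 1) :
    ∫⁻ u in Ioo s 1, ENNReal.ofReal ((1 - u) ^ α) =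
      ENNReal.ofReal ((1 - s) ^ (α + 1) / (α + 1)) := by
  have hi : IntervalIntegrable (fun u : ℝ => (1 - u) ^ α) volume s 1 := by
    have := (intervalIntegral.intervalIntegrable_rpow' (a := 1 - s) (b := 0) hα1).comp_sub_left 1
    simpa using this
  rw [← ofReal_integral_eq_lintegral_ofReal, ← restrict_Ioo_eq_restrict_Ioc.symm,
    ← intervalIntegral.integral_of_le hs.le,
    intervalIntegral.integral_comp_sub_left (fun x => x ^ α) 1, integral_rpow (Or.inl hα1)]
  · congr 1
    rw [sub_self, Real.zero_rpow (by linarith), sub_zero]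
  · exact ((intervalIntegrable_iff_integrableOn_Ioc_of_le hs.le).1 hi).mono_set Ioo_subset_Ioc_self
  · filter_upwards [ae_restrict_mem measurableSet_Ioo] with r hr
    exact Real.rpow_nonneg (by linarith [hr.2]) _

lemma aux_pow2 (α : ℝ) (hα2 : α < 0) (s t : ℝ) (hst : s ≤ t) (ht : t < 1) :
    ∫⁻ u in Ioc s t, ENNReal.ofReal ((1 - u) ^ (α - 1)) =
      ENNReal.ofReal (((1 - t) ^ α - (1 - s) ^ α) / (-α)) := by
  have h0 : (0:ℝ) ∉ uIcc (1 - t) (1 - s) := by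
    rw [uIcc_of_le (by linarith)]
    intro h
    linarith [h.1]
  have hi : IntervalIntegrable (fun u : ℝ => (1 - u) ^ (α - 1)) volume s t := by
    have := (intervalIntegral.intervalIntegrable_rpow (μ := volume) (a := 1 - s) (b := 1 - t)
      (r := α - 1) (Or.inr (by rwa [uIcc_comm]))).comp_sub_left 1
    simpa using this
  rw [← ofReal_integral_eq_lintegral_ofReal,
    ← intervalIntegral.integral_of_le hst,
    intervalIntegral.integral_comp_sub_left (fun x => x ^ (α - 1)) 1,
    integral_rpow (Or.inr ⟨by linarith, h0⟩)]
  · congr 1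
    rw [sub_add_cancel, div_neg, ← neg_div, neg_sub]
  · exact (intervalIntegrable_iff_integrableOn_Ioc_of_le hst).1 hi
  · filter_upwards [ae_restrict_mem measurableSet_Ioc] with r hr
    exact Real.rpow_nonneg (by linarith [hr.2]) _

lemma aux_kernel_s14 (α : ℝ) (hα1 : -1 < α) (hα2 : α < 0) (t : ℝ) (h0 : 0 ≤ t) (h1 : t < 1) :
    ∫⁻ z in ball (0:ℂ) 1, ENNReal.ofReal ((1 - ‖z‖ ^ 2) ^ α) *
        ENNReal.ofReal (1 / ‖1 - t * z‖ ^ 2) ≤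
      ENNReal.ofReal (2 * Real.pi * (1 / (-α) + 1 / (α + 1))) * ENNReal.ofReal ((1 - t) ^ α) := by
  have hpi := Real.pi_pos
  rw [aux_polar _ (by fun_prop)]
  have ht : (0:ℝ) < 1 - t := by linarith
  have step : ∀ r ∈ Ioo (0:ℝ) 1, (ENNReal.ofReal r *
        ∫⁻ θ in Ioo (-Real.pi) Real.pi, ENNReal.ofReal ((1 - ‖circleMap 0 r θ‖ ^ 2) ^ α) *
        ENNReal.ofReal (1 / ‖1 - t * circleMap 0 r θ‖ ^ 2)) ≤
        ENNReal.ofReal (2 * Real.pi) * ENNReal.ofReal ((1 - r) ^ α * (1 / (1 - t * r))) := by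
    intro r hr
    have e1 : ∀ θ, ‖circleMap 0 r θ‖ = r := by intro θ; simp [circleMap, abs_of_pos hr.1]
    have e2 : ∀ θ, (t:ℂ) * circleMap 0 r θ = ((t * r : ℝ) : ℂ) * circleMap 0 1 θ := by
      intro θ; simp [circleMap]; ring
    have htr0 : 0 ≤ t * r := mul_nonneg h0 hr.1.le
    have htr : t * r < 1 := by nlinarith [hr.1, hr.2]
    simp only [e1, e2]
    rw [lintegral_const_mul _ (by
        have := (continuous_circleMap 0 1).measurable
        fun_prop), aux_poisson _ htr0 htr]
    rw [← ENNReal.ofReal_mul (Real.rpow_nonneg (by nlinarith [hr.1, hr.2]) _),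
      ← ENNReal.ofReal_mul hr.1.le, ← ENNReal.ofReal_mul (by positivity)]
    apply ENNReal.ofReal_le_ofReal
    have a1 : (1 - r ^ 2) ^ α ≤ (1 - r) ^ α :=
      Real.rpow_le_rpow_of_nonpos (by linarith [hr.2]) (by nlinarith [hr.1, hr.2]) hα2.le
    have a2 : 1 / (1 - (t * r) ^ 2) ≤ 1 / (1 - t * r) :=
      one_div_le_one_div_of_le (by linarith) (by nlinarith)
    have a0 : 0 ≤ (1 - r ^ 2) ^ α := Real.rpow_nonneg (by nlinarith [hr.1, hr.2]) _
    have a3 : 0 ≤ 1 / (1 - (t * r) ^ 2) := by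
      apply one_div_nonneg.2; nlinarith
    calc r * ((1 - r ^ 2) ^ α * (2 * Real.pi / (1 - (t * r) ^ 2)))
        = (2 * Real.pi) * (r * ((1 - r ^ 2) ^ α * (1 / (1 - (t * r) ^ 2)))) := by ring
      _ ≤ (2 * Real.pi) * (1 * ((1 - r) ^ α * (1 / (1 - t * r)))) := by
          have a4 : 0 ≤ (1 - r) ^ α := Real.rpow_nonneg (by linarith [hr.2]) _
          gcongr
          · exact hr.2.le
      _ = _ := by ring
  refine (setLIntegral_mono' measurableSet_Ioo step).trans ?_
  rw [lintegral_const_mul _ (by fun_prop), ENNReal.ofReal_mul (p := 2 * Real.pi) (by positivity), mul_assoc]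
  refine mul_le_mul_right ?_ _
  have hsub : Ioo (0:ℝ) 1 ⊆ Ioc 0 t ∪ Ioo t 1 := by
    intro x hx
    rcases le_or_gt x t with h | h
    · exact Or.inl ⟨hx.1, h⟩
    · exact Or.inr ⟨h, hx.2⟩
  refine (lintegral_mono_set hsub).trans ((lintegral_union_le _ _ _).trans ?_)
  have hα0 : 0 < -α := by linarith
  have hα3 : 0 < α + 1 := by linarith
  rw [ENNReal.ofReal_add (by positivity) (by positivity), add_mul]
  have htα : 0 ≤ (1 - t) ^ α := Real.rpow_nonneg ht.le _
  gcongr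
  · calc _ ≤ ∫⁻ u in Ioc 0 t, ENNReal.ofReal ((1 - u) ^ (α - 1)) := by
          refine setLIntegral_mono' measurableSet_Ioc fun r hr => ENNReal.ofReal_le_ofReal ?_
          have hr1 : 0 < 1 - r := by linarith [hr.2]
          rw [Real.rpow_sub_one hr1.ne', div_eq_mul_one_div ((1 - r) ^ α) (1 - r)]
          gcongr
          nlinarith [hr.1]
      _ ≤ _ := by
          rw [aux_pow2 α hα2 0 t h0 h1, ← ENNReal.ofReal_mul (by positivity)]
          apply ENNReal.ofReal_le_ofReal
          rw [div_mul_eq_mul_div, one_mul]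
          gcongr
          simp
  · calc _ ≤ ∫⁻ u in Ioo t 1, ENNReal.ofReal ((1 - u) ^ α) * ENNReal.ofReal (1 / (1 - t)) := by
          refine setLIntegral_mono' measurableSet_Ioo fun r hr => ?_
          have hr1 : 0 < 1 - r := by linarith [hr.2]
          rw [← ENNReal.ofReal_mul (by positivity)]
          apply ENNReal.ofReal_le_ofReal
          gcongr
          nlinarith [hr.1]
      _ ≤ _ := by
          rw [lintegral_mul_const _ (by fun_prop), aux_pow1 α hα1 t h1,
            ← ENNReal.ofReal_mul (by positivity), ← ENNReal.ofReal_mul (by positivity)]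
          apply ENNReal.ofReal_le_ofReal
          rw [Real.rpow_add_one ht.ne']
          apply le_of_eq
          field_simp

lemma aux_swap (μ : Measure ℝ) [IsFiniteMeasure μ] (g h : ℝ → ℝ≥0∞) (hg : Measurable g)
    (hh : Measurable h) (a : ℝ) :
    ∫⁻ t in Ico a 1, g t * (∫⁻ u in Ioc a t, h u) ∂μ ≤
      ∫⁻ u in Ioo a 1, h u * (∫⁻ t in Ico u 1, g t ∂μ) := by
  have hms : MeasurableSet {p : ℝ × ℝ | p.2 ≤ p.1} := measurableSet_le measurable_snd measurable_fst
  have e1 : ∀ t ∈ Ico a 1, g t * ∫⁻ u in Ioc a t, h u =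
      ∫⁻ u in Ioo a 1, {p : ℝ × ℝ | p.2 ≤ p.1}.indicator (fun p => g p.1 * h p.2) (t, u) := by
    intro t ht
    have : Ioc a t = Iic t ∩ Ioo a 1 := by
      ext u; constructor
      · exact fun hu => ⟨hu.2, hu.1, lt_of_le_of_lt hu.2 ht.2⟩
      · exact fun hu => ⟨hu.2.1, hu.1⟩
    rw [this, ← lintegral_const_mul _ hh, ← setLIntegral_indicator measurableSet_Iic]
    rfl
  rw [setLIntegral_congr_fun measurableSet_Ico e1, lintegral_lintegral_swap]
  · refine setLIntegral_mono' measurableSet_Ioo fun u hu => ?_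
    rw [← lintegral_const_mul _ hg]
    have : Ico u 1 = Ici u ∩ Ico a 1 := by
      ext t; constructor
      · exact fun ht => ⟨ht.1, hu.1.le.trans ht.1, ht.2⟩
      · exact fun ht => ⟨ht.1, ht.2.2⟩
    rw [this, ← setLIntegral_indicator measurableSet_Ici]
    apply le_of_eq
    refine lintegral_congr fun t => ?_
    by_cases h : u ≤ t <;> simp [indicator, h, mul_comm]
  · apply Measurable.aemeasurable
    exact Measurable.indicator (by fun_prop) hms

lemma aux_tail (α : ℝ) (hα1 : -1 < α) (hα2 : α < 0)
    (μ : Measure ℝ) [IsFiniteMeasure μ] (C : ℝ) (hC : 0 < C)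
    (hμ : ∀ t ∈ Ico (0 : ℝ) 1, (μ (Ico t 1)).toReal ≤ C * (1 - t))
    (s : ℝ) (h0 : 0 ≤ s) (h1 : s < 1) :
    ∫⁻ t in Ico s 1, ENNReal.ofReal ((1 - t) ^ α) ∂μ ≤
      ENNReal.ofReal (C / (α + 1)) * ENNReal.ofReal ((1 - s) ^ (α + 1)) := by
  have hα0 : 0 < -α := by linarith
  have hα3 : 0 < α + 1 := by linarith
  have hs : 0 < 1 - s := by linarith
  have hμ' : ∀ t ∈ Ico (0 : ℝ) 1, μ (Ico t 1) ≤ ENNReal.ofReal (C * (1 - t)) := by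
    intro t ht
    rw [← ENNReal.ofReal_toReal (measure_ne_top μ (Ico t 1))]
    exact ENNReal.ofReal_le_ofReal (hμ t ht)
  have e : ∀ t ∈ Ico s 1, ENNReal.ofReal ((1 - t) ^ α) = ENNReal.ofReal ((1 - s) ^ α) +
      ENNReal.ofReal (-α) * ∫⁻ u in Ioc s t, ENNReal.ofReal ((1 - u) ^ (α - 1)) := by
    intro t ht
    have ht1 : 0 < 1 - t := by linarith [ht.2]
    have hle : (1 - s) ^ α ≤ (1 - t) ^ α :=
      Real.rpow_le_rpow_of_nonpos ht1 (by linarith [ht.1]) hα2.le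
    rw [aux_pow2 α hα2 s t ht.1 ht.2, ← ENNReal.ofReal_mul hα0.le, ← ENNReal.ofReal_add (by positivity)
      (mul_nonneg hα0.le (div_nonneg (by linarith) hα0.le))]
    congr 1
    rw [mul_div_cancel₀ _ hα0.ne']
    ring
  rw [setLIntegral_congr_fun measurableSet_Ico e, lintegral_add_left (by fun_prop), setLIntegral_const]
  have sw := aux_swap μ (fun _ => ENNReal.ofReal (-α)) (fun u => ENNReal.ofReal ((1 - u) ^ (α - 1)))
    (by fun_prop) (by fun_prop) s
  calc _ ≤ ENNReal.ofReal ((1 - s) ^ α) * ENNReal.ofReal (C * (1 - s)) +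
        ∫⁻ u in Ioo s 1, ENNReal.ofReal (-α * C) * ENNReal.ofReal ((1 - u) ^ α) := by
        refine add_le_add (mul_le_mul_right (hμ' s ⟨h0, h1⟩) _) ?_
        · refine sw.trans ?_
          refine setLIntegral_mono' measurableSet_Ioo fun u hu => ?_
          have hu1 : 0 < 1 - u := by linarith [hu.2]
          rw [setLIntegral_const]
          calc _ ≤ ENNReal.ofReal ((1 - u) ^ (α - 1)) * (ENNReal.ofReal (-α) * ENNReal.ofReal (C * (1 - u))) := by
                gcongr
                exact hμ' u ⟨h0.trans hu.1.le, hu.2⟩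
            _ = _ := by
                rw [← ENNReal.ofReal_mul hα0.le, ← ENNReal.ofReal_mul (by positivity),
                  ← ENNReal.ofReal_mul (by positivity), Real.rpow_sub_one hu1.ne']
                congr 1
                field_simp
    _ = _ := by
        rw [lintegral_const_mul _ (by fun_prop), aux_pow1 α hα1 s h1,
          ← ENNReal.ofReal_mul (by positivity), ← ENNReal.ofReal_mul (by positivity),
          ← ENNReal.ofReal_mul (by positivity), ← ENNReal.ofReal_add (by positivity) (by positivity),
          Real.rpow_add_one hs.ne']
        congr 1
        field_simp
        ring

lemma aux_radial (α : ℝ) (hα2 : α < 0) (g : ℂ → ℂ) (hgm : Measurable g)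
    (hg : DifferentiableOn ℂ g (ball (0:ℂ) 1)) :
    ∫⁻ s in Ioo (0:ℝ) 1, ‖g s‖ₑ * ENNReal.ofReal ((1 - s) ^ (α + 1)) ≤
      ENNReal.ofReal (4 / Real.pi * (2 * (1 / 3) ^ α)) *
        ∫⁻ z in ball (0:ℂ) 1, ENNReal.ofReal ((1 - ‖z‖ ^ 2) ^ α) * ‖g z‖ₑ := by
  have hpi := Real.pi_pos
  set S : Set (ℝ × ℂ) := {p | dist p.2 (p.1 : ℂ) < (1 - p.1) / 2} with hS
  have hSm : MeasurableSet S := measurableSet_lt (by fun_prop) (by fun_prop)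
  have hgm' : Measurable fun z => ‖g z‖ₑ := hgm.enorm
  have step1 : ∀ s ∈ Ioo (0:ℝ) 1, ‖g s‖ₑ * ENNReal.ofReal ((1 - s) ^ (α + 1)) ≤
      ∫⁻ z in ball (0:ℂ) 1, S.indicator (fun p => ENNReal.ofReal (4 / Real.pi) *
        (ENNReal.ofReal ((1 - p.1) ^ (α - 1)) * ‖g p.2‖ₑ)) (s, z) := by
    intro s hs
    have hs1 : 0 < 1 - s := by linarith [hs.2]
    have hsub : ball (s:ℂ) ((1 - s) / 2) ⊆ ball (0:ℂ) 1 := by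
      apply ball_subset_ball'
      rw [dist_zero_right, Complex.norm_real, Real.norm_of_nonneg hs.1.le]
      linarith
    have hd := aux_disc g hgm' s ((1 - s) / 2) (by linarith) (hg.mono hsub)
    have e : ∫⁻ z in ball (0:ℂ) 1, S.indicator (fun p => ENNReal.ofReal (4 / Real.pi) *
        (ENNReal.ofReal ((1 - p.1) ^ (α - 1)) * ‖g p.2‖ₑ)) (s, z) =
        ENNReal.ofReal (4 / Real.pi) *
        (ENNReal.ofReal ((1 - s) ^ (α - 1)) * ∫⁻ z in ball (s:ℂ) ((1 - s) / 2), ‖g z‖ₑ) := by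
      rw [← lintegral_const_mul _ hgm', ← lintegral_const_mul _ (by fun_prop)]
      conv_rhs => rw [← inter_eq_left.2 hsub]
      rw [← setLIntegral_indicator measurableSet_ball]
      rfl
    rw [e]
    refine le_trans (le_of_eq ?_) (mul_le_mul_right (mul_le_mul_right hd _) _)
    rw [← mul_assoc, ← mul_assoc, mul_comm (‖g s‖ₑ), ← ENNReal.ofReal_mul (by positivity),
      ← ENNReal.ofReal_mul (by positivity), Real.rpow_sub_one hs1.ne', Real.rpow_add_one hs1.ne']
    congr 2
    field_simp
    norm_num
  refine (setLIntegral_mono' measurableSet_Ioo step1).trans ?_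
  rw [lintegral_lintegral_swap, ← lintegral_const_mul _ (by fun_prop)]
  · refine setLIntegral_mono' measurableSet_ball fun z hz => ?_
    rw [mem_ball_zero_iff] at hz
    set δ := 1 - ‖z‖ with hδ
    have hδ0 : 0 < δ := by linarith
    have step2 : ∀ s ∈ Ioo (0:ℝ) 1, S.indicator (fun p => ENNReal.ofReal (4 / Real.pi) *
        (ENNReal.ofReal ((1 - p.1) ^ (α - 1)) * ‖g p.2‖ₑ)) (s, z) ≤
        (Icc (1 - 2 * δ) (1 - 2 * δ / 3)).indicator (fun _ => ENNReal.ofReal (4 / Real.pi) *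
        (ENNReal.ofReal ((2 * δ / 3) ^ (α - 1)) * ‖g z‖ₑ)) s := by
      intro s hs
      by_cases h : (s, z) ∈ S
      · have h' : ‖z - s‖ < (1 - s) / 2 := by simpa [hS, dist_eq_norm] using h
        have hns : ‖(s:ℂ)‖ = s := by rw [Complex.norm_real, Real.norm_of_nonneg hs.1.le]
        have b1 : ‖z‖ ≤ ‖z - s‖ + s := by
          have := norm_add_le (z - s) (s:ℂ)
          rwa [sub_add_cancel, hns] at this
        have b2 : s ≤ ‖z - s‖ + ‖z‖ := by
          have := norm_sub_le z (z - s)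
          rw [sub_sub_cancel, hns] at this
          linarith
        have hmem : s ∈ Icc (1 - 2 * δ) (1 - 2 * δ / 3) := by constructor <;> linarith
        rw [indicator_of_mem h, indicator_of_mem hmem]
        refine mul_le_mul_right (mul_le_mul_left ?_ _) _
        apply ENNReal.ofReal_le_ofReal
        exact Real.rpow_le_rpow_of_nonpos (by positivity) (by linarith [hmem.2]) (by linarith)
      · rw [indicator_of_notMem h]; exact zero_le
    refine (setLIntegral_mono' measurableSet_Ioo step2).trans ?_
    refine (setLIntegral_le_lintegral _ _).trans ?_
    rw [lintegral_indicator measurableSet_Icc, setLIntegral_const, Real.volume_Icc]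
    have hw : 0 ≤ (1 - ‖z‖ ^ 2) := by nlinarith [norm_nonneg z]
    have hw' : 0 < (1 - ‖z‖ ^ 2) := by nlinarith [norm_nonneg z]
    calc _ = ENNReal.ofReal (4 / Real.pi * ((2 * δ / 3) ^ (α - 1) * (4 * δ / 3))) * ‖g z‖ₑ := by
          rw [ENNReal.ofReal_mul (p := 4 / Real.pi) (by positivity),
            ENNReal.ofReal_mul (p := (2 * δ / 3) ^ (α - 1)) (by positivity),
            show 1 - 2 * δ / 3 - (1 - 2 * δ) = 4 * δ / 3 by ring]
          ring
      _ ≤ ENNReal.ofReal (4 / Real.pi * (2 * (1 / 3) ^ α) * (1 - ‖z‖ ^ 2) ^ α) * ‖g z‖ₑ := by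
          refine mul_le_mul_left (ENNReal.ofReal_le_ofReal ?_) _
          rw [mul_assoc]
          refine mul_le_mul_of_nonneg_left ?_ (by positivity)
          rw [mul_assoc, ← Real.mul_rpow (by norm_num) hw, Real.rpow_sub_one (by positivity)]
          have : (2 * δ / 3) ^ α ≤ (1 / 3 * (1 - ‖z‖ ^ 2)) ^ α :=
            Real.rpow_le_rpow_of_nonpos (by positivity) (by nlinarith [norm_nonneg z]) hα2.le
          calc _ = 2 * (2 * δ / 3) ^ α := by field_simp; norm_num
            _ ≤ _ := by gcongr
      _ = _ := by
          rw [ENNReal.ofReal_mul (p := 4 / Real.pi * (2 * (1 / 3) ^ α)) (by positivity), mul_assoc]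
  · apply Measurable.aemeasurable
    exact Measurable.indicator (by fun_prop) hSm

lemma aux_ftc (f : ℂ → ℂ) (hf : DifferentiableOn ℂ f (ball (0:ℂ) 1)) (t : ℝ) (h0 : 0 ≤ t)
    (h1 : t < 1) :
    ‖f t‖ₑ ≤ ‖f 0‖ₑ + ∫⁻ s in Ioc (0:ℝ) t, ‖deriv f s‖ₑ := by
  have hm : ∀ s ∈ Icc (0:ℝ) t, (s:ℂ) ∈ ball (0:ℂ) 1 := by
    intro s hs
    rw [mem_ball_zero_iff, Complex.norm_real, Real.norm_of_nonneg hs.1]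
    linarith [hs.2]
  have hd : DifferentiableOn ℂ (deriv f) (ball (0:ℂ) 1) := hf.deriv isOpen_ball
  have hc : ContinuousOn (fun s : ℝ => deriv f s) (uIcc 0 t) := by
    rw [uIcc_of_le h0]
    exact hd.continuousOn.comp Complex.continuous_ofReal.continuousOn hm
  have h := intervalIntegral.integral_eq_sub_of_hasDerivAt (f := fun s : ℝ => f s)
    (f' := fun s : ℝ => deriv f s) (a := 0) (b := t) (by
      intro s hs
      rw [uIcc_of_le h0] at hs
      exact ((hf.differentiableAt (isOpen_ball.mem_nhds (hm s hs))).hasDerivAt).comp_ofReal)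
    hc.intervalIntegrable
  have e : f t = f 0 + ∫ s in Ioc (0:ℝ) t, deriv f s := by
    rw [← intervalIntegral.integral_of_le h0, h]; simp
  rw [e]
  refine (enorm_add_le _ _).trans ?_
  gcongr
  exact enorm_integral_le_lintegral_enorm _

lemma aux_main (α : ℝ) (hα1 : -1 < α) (hα2 : α < 0)
    (μ : Measure ℝ) [IsFiniteMeasure μ] (C : ℝ) (hC : 0 < C)
    (hμ : ∀ t ∈ Ico (0 : ℝ) 1, (μ (Ico t 1)).toReal ≤ C * (1 - t))
    (f : ℂ → ℂ) (hf : DifferentiableOn ℂ f (ball (0:ℂ) 1)) :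
    ∫⁻ t in Ico (0:ℝ) 1, ‖f t‖ₑ * ENNReal.ofReal ((1 - t) ^ α) ∂μ ≤
      ENNReal.ofReal (C / (α + 1)) * (‖f 0‖ₑ + ENNReal.ofReal (4 / Real.pi * (2 * (1 / 3) ^ α)) *
        ∫⁻ z in ball (0:ℂ) 1, ENNReal.ofReal ((1 - ‖z‖ ^ 2) ^ α) * ‖deriv f z‖ₑ) := by
  have hdm : Measurable (deriv f) := measurable_deriv f
  have hdm' : Measurable fun s : ℝ => ‖deriv f s‖ₑ := (hdm.comp Complex.measurable_ofReal).enorm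
  calc _ ≤ ∫⁻ t in Ico (0:ℝ) 1, (‖f 0‖ₑ * ENNReal.ofReal ((1 - t) ^ α) +
        ENNReal.ofReal ((1 - t) ^ α) * ∫⁻ s in Ioc (0:ℝ) t, ‖deriv f s‖ₑ) ∂μ := by
        refine setLIntegral_mono' measurableSet_Ico fun t ht => ?_
        rw [mul_comm (ENNReal.ofReal _), ← add_mul]
        gcongr
        exact aux_ftc f hf t ht.1 ht.2
    _ ≤ ‖f 0‖ₑ * ENNReal.ofReal (C / (α + 1)) + ∫⁻ u in Ioo (0:ℝ) 1, ‖deriv f u‖ₑ *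
          (ENNReal.ofReal (C / (α + 1)) * ENNReal.ofReal ((1 - u) ^ (α + 1))) := by
        rw [lintegral_add_left (by fun_prop), lintegral_const_mul _ (by fun_prop)]
        refine add_le_add (mul_le_mul_right ?_ _) ?_
        · simpa using aux_tail α hα1 hα2 μ C hC hμ 0 le_rfl one_pos
        · refine (aux_swap μ _ _ (by fun_prop) hdm' 0).trans ?_
          refine setLIntegral_mono' measurableSet_Ioo fun u hu => ?_
          exact mul_le_mul_right (aux_tail α hα1 hα2 μ C hC hμ u hu.1.le hu.2) _
    _ = ENNReal.ofReal (C / (α + 1)) * (‖f 0‖ₑ + ∫⁻ u in Ioo (0:ℝ) 1, ‖deriv f u‖ₑ *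
          ENNReal.ofReal ((1 - u) ^ (α + 1))) := by
        rw [mul_add, mul_comm, ← lintegral_const_mul _ (by fun_prop)]
        congr 1
        refine lintegral_congr fun u => ?_
        ring
    _ ≤ _ := by
        gcongr
        exact aux_radial α hα2 (deriv f) hdm (hf.deriv isOpen_ball)

lemma aux_lower (t : ℝ) (ht : t ∈ Ico (0:ℝ) 1) (z : ℂ) (ρ : ℝ) (hz : ‖z‖ < ρ) :
    1 - ρ ≤ ‖1 - t * z‖ := by
  have h1 := norm_sub_norm_le (1:ℂ) (t * z)
  rw [norm_one, norm_mul, Complex.norm_real, Real.norm_of_nonneg ht.1] at h1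
  nlinarith [norm_nonneg z, ht.1, ht.2]

lemma aux_deriv (μ : Measure ℝ) [IsFiniteMeasure μ] (hsupp : ∀ᵐ t ∂μ, t ∈ Ico (0:ℝ) 1)
    (f : ℂ → ℂ) (hf : Integrable (fun t : ℝ => f t) μ) (z : ℂ) (hz : z ∈ ball (0:ℂ) 1) :
    Integrable (fun t : ℝ => f (t : ℂ) / (1 - (t : ℂ) * z)) μ ∧
    HasDerivAt (Imu μ f) (∫ t : ℝ, f t * (t / (1 - t * z) ^ 2) ∂μ) z := by
  rw [mem_ball_zero_iff] at hz
  obtain ⟨ρ, hzρ, hρ⟩ := exists_between hz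
  have hρ' : 0 < 1 - ρ := by linarith
  have hmeas : ∀ x : ℂ, AEStronglyMeasurable (fun t : ℝ => f (t : ℂ) / (1 - (t : ℂ) * x)) μ := by
    intro x
    simp only [div_eq_mul_inv]
    refine hf.aestronglyMeasurable.mul ?_
    apply Measurable.aestronglyMeasurable
    fun_prop
  have hInt : Integrable (fun t : ℝ => f (t : ℂ) / (1 - (t : ℂ) * z)) μ := by
    refine (hf.norm.mul_const (1 / (1 - ρ))).mono' (hmeas z) ?_
    filter_upwards [hsupp] with t ht
    rw [norm_div, div_eq_mul_one_div]
    gcongr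
    exact aux_lower t ht z ρ hzρ
  refine ⟨hInt, ?_⟩
  refine (hasDerivAt_integral_of_dominated_loc_of_deriv_le (μ := μ) (s := ball (0:ℂ) ρ)
    (F := fun x t => f (t : ℂ) / (1 - (t : ℂ) * x))
    (F' := fun x t => f t * (t / (1 - t * x) ^ 2))
    (bound := fun t => ‖f t‖ * (1 / (1 - ρ) ^ 2)) (isOpen_ball.mem_nhds (by simpa using hzρ))
    (Eventually.of_forall hmeas) hInt ?_ ?_ (hf.norm.mul_const _) ?_).2
  · refine hf.aestronglyMeasurable.mul ?_
    apply Measurable.aestronglyMeasurable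
    fun_prop
  · filter_upwards [hsupp] with t ht x hx
    rw [mem_ball_zero_iff] at hx
    rw [norm_mul, norm_div, norm_pow, Complex.norm_real, Real.norm_of_nonneg ht.1]
    gcongr
    · exact ht.2.le
    · exact aux_lower t ht x ρ hx
  · filter_upwards [hsupp] with t ht x hx
    rw [mem_ball_zero_iff] at hx
    have hne : 1 - (t:ℂ) * x ≠ 0 := by
      rw [← norm_pos_iff]
      linarith [aux_lower t ht x ρ hx]
    have h1 : HasDerivAt (fun x : ℂ => 1 - (t:ℂ) * x) (-(t:ℂ)) x := by
      simpa using ((hasDerivAt_id x).const_mul (t:ℂ)).const_sub 1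
    have := (h1.inv hne).const_mul (f t)
    simpa [div_eq_mul_inv] using this

lemma aux_bergman (α : ℝ) (hα1 : -1 < α) (g : ℂ → ℂ) :
    bergmanNorm 1 α g = ENNReal.ofReal ((α + 1) / Real.pi) *
      ∫⁻ z in ball (0:ℂ) 1, ENNReal.ofReal ((1 - ‖z‖ ^ 2) ^ α) * ‖g z‖ₑ := by
  have hpi := Real.pi_pos
  rw [bergmanNorm, dA, Measure.restrict_smul, lintegral_smul_measure, div_eq_mul_inv (α + 1),
    ENNReal.ofReal_mul (by linarith), ENNReal.ofReal_inv_of_pos hpi]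
  simp only [div_one, ENNReal.rpow_one, Real.rpow_one, smul_eq_mul, mul_assoc]
  congr 2
  refine setLIntegral_congr_fun measurableSet_ball fun z hz => ?_
  rw [mem_ball_zero_iff] at hz
  rw [ENNReal.ofReal_mul (Real.rpow_nonneg (by nlinarith [norm_nonneg z]) _), ofReal_norm]

/-- For `-1 < α < 0`, if `μ` is a Carleson measure on `[0,1)` then `I_μ`
is well defined and bounded from `𝒟¹_α` into itself. -/
theorem Hmu_bounded_D1a (α : ℝ) (hα1 : -1 < α) (hα2 : α < 0)
    (μ : Measure ℝ) [IsFiniteMeasure μ] (hsupp : μ (Ico (0 : ℝ) 1)ᶜ = 0)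
    (hμ : ∃ C > 0, ∀ t ∈ Ico (0 : ℝ) 1, (μ (Ico t 1)).toReal ≤ C * (1 - t)) :
    ∃ C > 0, ∀ f : ℂ → ℂ, DifferentiableOn ℂ f (ball (0 : ℂ) 1) →
      dirichletNorm 1 α f < ⊤ →
      (∀ z ∈ ball (0 : ℂ) 1, Integrable (fun t : ℝ => f (t : ℂ) / (1 - (t : ℂ) * z)) μ) ∧
      DifferentiableOn ℂ (Imu μ f) (ball (0 : ℂ) 1) ∧
      dirichletNorm 1 α (Imu μ f) ≤ ENNReal.ofReal C * dirichletNorm 1 α f := by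
  obtain ⟨C, hC, hμ⟩ := hμ
  have hpi := Real.pi_pos
  have hα0 : 0 < -α := by linarith
  have hα3 : 0 < α + 1 := by linarith
  have hsupp' : ∀ᵐ t ∂μ, t ∈ Ico (0:ℝ) 1 := hsupp
  have hres : μ.restrict (Ico (0:ℝ) 1) = μ := Measure.restrict_eq_self_of_ae_mem hsupp'
  set c0 : ℝ := (α + 1) / Real.pi with hc0
  have hc0p : 0 < c0 := by positivity
  set k1 : ℝ := C / (α + 1) with hk1
  have hk1p : 0 < k1 := by positivity
  set k2 : ℝ := 4 / Real.pi * (2 * (1 / 3) ^ α) with hk2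
  have hk2p : 0 < k2 := by positivity
  set k3 : ℝ := 2 * Real.pi * (1 / (-α) + 1 / (α + 1)) with hk3
  have hk3p : 0 < k3 := by positivity
  refine ⟨(1 + c0 * k3) * (k1 * (1 + k2 / c0)), by positivity, fun f hf hfin => ?_⟩
  set B := ∫⁻ z in ball (0:ℂ) 1, ENNReal.ofReal ((1 - ‖z‖ ^ 2) ^ α) * ‖deriv f z‖ₑ with hB
  have hN : dirichletNorm 1 α f = ‖f 0‖ₑ + ENNReal.ofReal c0 * B := by
    rw [dirichletNorm, aux_bergman α hα1, ofReal_norm]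
  set N := dirichletNorm 1 α f with hNdef
  set M := ∫⁻ t, ‖f t‖ₑ * ENNReal.ofReal ((1 - t) ^ α) ∂μ with hM
  have hMN : M ≤ ENNReal.ofReal (k1 * (1 + k2 / c0)) * N := by
    have h := aux_main α hα1 hα2 μ C hC hμ f hf
    rw [hres] at h
    refine h.trans ?_
    rw [ENNReal.ofReal_mul hk1p.le, mul_assoc]
    refine mul_le_mul_right ?_ _
    rw [ENNReal.ofReal_add zero_le_one (by positivity), add_mul, ENNReal.ofReal_one, one_mul]
    refine add_le_add (by rw [hN]; exact le_self_add) ?_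
    calc ENNReal.ofReal k2 * B = ENNReal.ofReal (k2 / c0) * (ENNReal.ofReal c0 * B) := by
          rw [← mul_assoc, ← ENNReal.ofReal_mul (by positivity), div_mul_cancel₀ _ hc0p.ne']
      _ ≤ _ := by rw [hN]; exact mul_le_mul_right le_add_self _
  have hMfin : M < ⊤ := hMN.trans_lt (ENNReal.mul_lt_top ENNReal.ofReal_lt_top hfin)
  have hJ : ∫⁻ t : ℝ, ‖f t‖ₑ ∂μ ≤ M := by
    refine lintegral_mono_ae ?_
    filter_upwards [hsupp'] with t ht
    refine le_mul_of_one_le_right zero_le ?_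
    rw [ENNReal.one_le_ofReal]
    exact Real.one_le_rpow_of_pos_of_le_one_of_nonpos (by linarith [ht.2]) (by linarith [ht.1])
      hα2.le
  have hfm : AEStronglyMeasurable (fun t : ℝ => f t) μ := by
    rw [← hres]
    refine ContinuousOn.aestronglyMeasurable ?_ measurableSet_Ico
    refine hf.continuousOn.comp Complex.continuous_ofReal.continuousOn ?_
    intro s hs
    rw [mem_ball_zero_iff, Complex.norm_real, Real.norm_of_nonneg hs.1]
    exact hs.2
  have hfi : Integrable (fun t : ℝ => f t) μ := ⟨hfm, hJ.trans_lt hMfin⟩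
  have hD := aux_deriv μ hsupp' f hfi
  refine ⟨fun z hz => (hD z hz).1,
    fun z hz => (hD z hz).2.differentiableAt.differentiableWithinAt, ?_⟩
  have h0 : ‖Imu μ f 0‖ₑ ≤ M := by
    refine le_trans ?_ hJ
    simp only [Imu, mul_zero, sub_zero, div_one]
    exact enorm_integral_le_lintegral_enorm _
  have h1 : ∫⁻ z in ball (0:ℂ) 1, ENNReal.ofReal ((1 - ‖z‖ ^ 2) ^ α) * ‖deriv (Imu μ f) z‖ₑ ≤
      ENNReal.ofReal k3 * M := by
    calc _ ≤ ∫⁻ z in ball (0:ℂ) 1, ∫⁻ t : ℝ, ENNReal.ofReal ((1 - ‖z‖ ^ 2) ^ α) *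
          (‖f t‖ₑ * ENNReal.ofReal (1 / ‖1 - t * z‖ ^ 2)) ∂μ := by
          refine setLIntegral_mono' measurableSet_ball fun z hz => ?_
          rw [lintegral_const_mul' _ _ ENNReal.ofReal_ne_top, (hD z hz).2.deriv]
          refine mul_le_mul_right ?_ _
          refine (enorm_integral_le_lintegral_enorm _).trans ?_
          refine lintegral_mono_ae ?_
          filter_upwards [hsupp'] with t ht
          rw [enorm_mul]
          refine mul_le_mul_right ?_ _
          rw [← ofReal_norm, norm_div, norm_pow, Complex.norm_real, Real.norm_of_nonneg ht.1]
          apply ENNReal.ofReal_le_ofReal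
          gcongr
          exact ht.2.le
      _ = ∫⁻ t : ℝ, (∫⁻ z in ball (0:ℂ) 1, ENNReal.ofReal ((1 - ‖z‖ ^ 2) ^ α) *
          (‖f t‖ₑ * ENNReal.ofReal (1 / ‖1 - t * z‖ ^ 2))) ∂μ := by
          rw [lintegral_lintegral_swap]
          have m1 : Measurable fun p : ℂ × ℝ => ENNReal.ofReal ((1 - ‖p.1‖ ^ 2) ^ α) := by fun_prop
          have m2 : Measurable fun p : ℂ × ℝ => ENNReal.ofReal (1 / ‖1 - (p.2 : ℂ) * p.1‖ ^ 2) := by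
            fun_prop
          have m3 : AEMeasurable (fun p : ℂ × ℝ => ‖f p.2‖ₑ)
              ((volume.restrict (ball (0:ℂ) 1)).prod μ) := hfm.enorm.comp_snd
          exact m1.aemeasurable.mul (m3.mul m2.aemeasurable)
      _ ≤ ∫⁻ t : ℝ, ENNReal.ofReal k3 * (‖f t‖ₑ * ENNReal.ofReal ((1 - t) ^ α)) ∂μ := by
          refine lintegral_mono_ae ?_
          filter_upwards [hsupp'] with t ht
          have e : ∀ z : ℂ, ENNReal.ofReal ((1 - ‖z‖ ^ 2) ^ α) *
              (‖f t‖ₑ * ENNReal.ofReal (1 / ‖1 - t * z‖ ^ 2)) = ‖f t‖ₑ *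
              (ENNReal.ofReal ((1 - ‖z‖ ^ 2) ^ α) * ENNReal.ofReal (1 / ‖1 - t * z‖ ^ 2)) := by
            intro z; ring
          simp only [e]
          rw [lintegral_const_mul' _ _ enorm_ne_top, mul_left_comm]
          exact mul_le_mul_right (aux_kernel_s14 α hα1 hα2 t ht.1 ht.2) _
      _ = _ := by rw [lintegral_const_mul' _ _ ENNReal.ofReal_ne_top]
  rw [dirichletNorm, aux_bergman α hα1, ofReal_norm]
  calc _ ≤ M + ENNReal.ofReal c0 * (ENNReal.ofReal k3 * M) :=
        add_le_add h0 (mul_le_mul_right h1 _)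
    _ = ENNReal.ofReal (1 + c0 * k3) * M := by
        rw [ENNReal.ofReal_add zero_le_one (by positivity), ENNReal.ofReal_one,
          ENNReal.ofReal_mul hc0p.le]
        ring
    _ ≤ ENNReal.ofReal (1 + c0 * k3) * (ENNReal.ofReal (k1 * (1 + k2 / c0)) * N) :=
        mul_le_mul_right hMN _
    _ = _ := by rw [← mul_assoc, ← ENNReal.ofReal_mul (by positivity)]
end
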